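/- Let α ∈ (1,2), let f, g ∈ L^α(S, μ) be nonzero and satisfy Assumptions (A1) and (A2) with constants ε₁, ε₂, and let ξ, η be jointly SαS with spectral pair (f, g). Let b ≥ 1, β ∈ (0, α/2), and let K, L be functions satisfying Assumptions (K1) and (K2) with exponent β and threshold x₀ = b. Set K_b(x) := K(x)·1_{{|x|>b}} and L_b(x) := L(x)·1_{{|x|>b}}. Then K_b(ξ) and L_b(η) are square-integrable, and |Cov(K_b(ξ), L_b(η))| ≤ C b^{2β−α} ([f,g]₁ + [f,g]₂), where the constant C depends only on ε₁, ε₂, α, β, ‖f‖_α, ‖g‖_α and the constant in (K1). (Paper's Theorem 2.2.) -/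

import Mathlib

open MeasureTheory Real Set Filter
open scoped ENNReal Topology

noncomputable def nrm (α : ℝ) {S : Type*} [MeasurableSpace S] (μ : Measure S) (f : S → ℝ) : ℝ :=
  (∫ s, |f s| ^ α ∂μ) ^ (1 / α)

noncomputable def dep2 (α : ℝ) {S : Type*} [MeasurableSpace S] (μ : Measure S) (f g : S → ℝ) : ℝ :=
  ∫ s, |f s * g s| ^ (α / 2) ∂μ

noncomputable def dep1s (α : ℝ) {S : Type*} [MeasurableSpace S] (μ : Measure S) (f g : S → ℝ) : ℝ :=
  ∫ s, |f s| ^ (α - 1) * |g s| ∂μ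

noncomputable def dep1 (α : ℝ) {S : Type*} [MeasurableSpace S] (μ : Measure S) (f g : S → ℝ) : ℝ :=
  dep1s α μ f g + dep1s α μ g f

/-- `f ∈ L^α(S, μ)`. -/
def MemLalpha (α : ℝ) {S : Type*} [MeasurableSpace S] (μ : Measure S) (f : S → ℝ) : Prop :=
  AEStronglyMeasurable f μ ∧ Integrable (fun s => |f s| ^ α) μ

/-- Assumption (A1) with constant ε₁. -/
def A1 (α ε₁ : ℝ) {S : Type*} [MeasurableSpace S] (μ : Measure S) (f g : S → ℝ) : Prop :=
  nrm α μ f ^ (α / 2) * nrm α μ g ^ (α / 2) - dep2 α μ f g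
    ≥ ε₁ * (nrm α μ f ^ (α / 2) * nrm α μ g ^ (α / 2))

/-- Assumption (A2) with constant ε₂. -/
def A2 (α ε₂ : ℝ) {S : Type*} [MeasurableSpace S] (μ : Measure S) (f g : S → ℝ) : Prop :=
  ∀ u v : ℝ, nrm α μ (fun s => u * f s + v * g s) ^ α
    ≥ ε₂ * (|u| ^ α * nrm α μ f ^ α + |v| ^ α * nrm α μ g ^ α)

noncomputable def Ufun (α : ℝ) {S : Type*} [MeasurableSpace S] (μ : Measure S)
    (f g : S → ℝ) (u v : ℝ) : ℝ :=
  Real.exp (-(nrm α μ (fun s => u * f s + v * g s) ^ α)) -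
    Real.exp (-(nrm α μ (fun s => u * f s) ^ α) - nrm α μ (fun s => v * g s) ^ α)

/-- signed power `a^⟨p⟩ = sign(a)|a|^p`. -/
noncomputable def spow (a p : ℝ) : ℝ := Real.sign a * |a| ^ p

noncomputable def D1 (α : ℝ) {S : Type*} [MeasurableSpace S] (μ : Measure S)
    (f g : S → ℝ) (u v : ℝ) : ℝ :=
  -α * (∫ s, spow (u * f s + v * g s) (α - 1) * f s ∂μ) *
      Real.exp (-(nrm α μ (fun s => u * f s + v * g s) ^ α)) +
    α * (∫ s, spow (u * f s) (α - 1) * f s ∂μ) *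
      Real.exp (-(nrm α μ (fun s => u * f s) ^ α) - nrm α μ (fun s => v * g s) ^ α)

noncomputable def D2 (α : ℝ) {S : Type*} [MeasurableSpace S] (μ : Measure S)
    (f g : S → ℝ) (u v : ℝ) : ℝ :=
  -(α * (α - 1)) * (∫ s, (if f s = 0 ∨ g s = 0 then (0:ℝ) else
        |u * f s + v * g s| ^ (α - 2) * (f s * g s)) ∂μ) *
      Real.exp (-(nrm α μ (fun s => u * f s + v * g s) ^ α)) +
    α ^ 2 * (∫ s, spow (u * f s + v * g s) (α - 1) * f s ∂μ) *
      (∫ s, spow (u * f s + v * g s) (α - 1) * g s ∂μ) *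
      Real.exp (-(nrm α μ (fun s => u * f s + v * g s) ^ α)) -
    α ^ 2 * (∫ s, spow (u * f s) (α - 1) * f s ∂μ) *
      (∫ s, spow (v * g s) (α - 1) * g s ∂μ) *
      Real.exp (-(nrm α μ (fun s => u * f s) ^ α) - nrm α μ (fun s => v * g s) ^ α)

/-- `(ξ, η)` is jointly SαS with spectral pair `(f, g)`. -/
def JointSAS (α : ℝ) {S : Type*} [MeasurableSpace S] (μ : Measure S) (f g : S → ℝ)
    {Ω : Type*} [MeasurableSpace Ω] (P : Measure Ω) (ξ η : Ω → ℝ) : Prop :=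
  ∀ u v : ℝ, (∫ ω, Complex.exp (Complex.I * ((u * ξ ω + v * η ω : ℝ) : ℂ)) ∂P)
    = Complex.exp (-((nrm α μ (fun s => u * f s + v * g s) ^ α : ℝ) : ℂ))

/-!
Let `Ufun` be the joint characteristic function of `(ξ, η)` minus the product of the marginal ones.
The covariance of smooth cut-offs of `ξ` and `η` is a Fourier integral against `Ufun`. Two
integrations by parts move the derivatives onto `Ufun`, whose mixed derivative has one part bounded
by `dep1` times a rapidly decaying weight, and one part built on the singular kernel
`|u f + v g| ^ (α - 2)`, whose integral is bounded by `dep2`. Scaling the cut-offs to intervals of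
lengths `t` and `t'` yields a bound of order `(t t') ^ (1 - α / 2)`, which passes to the
truncations `ξ 1_{(b, t]}(ξ)` and `η 1_{(b, t']}(η)`.

By (K2), each half of `K` has the form `x h(x)` with `h` monotone, so it is an integral over `l > 0`
of truncations to the superlevel sets `{h > l}`, which are intervals `(b, t_l]` with
`t_l ≤ (c / l) ^ (1 / (1 - β))` by (K1). Integrating the bound for truncations over the levels gives
`b ^ (β - α / 2)` in each of the two variables, hence the rate `b ^ (2 β - α)`.
-/

/-! ### Signed powers -/

section SignedPower

variable {p : ℝ}

lemma spow_zero_left (p : ℝ) : spow 0 p = 0 := by simp [spow]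

lemma spow_neg_left (x p : ℝ) : spow (-x) p = -spow x p := by
  simp only [spow, Real.sign_neg, abs_neg, neg_mul]

lemma spow_of_pos {x : ℝ} (hx : 0 < x) (p : ℝ) : spow x p = x ^ p := by
  rw [spow, Real.sign_of_pos hx, abs_of_pos hx, one_mul]

lemma spow_of_nonneg {x : ℝ} (hx : 0 ≤ x) (hp : p ≠ 0) : spow x p = x ^ p := by
  rcases hx.eq_or_lt with rfl | hx
  · rw [spow_zero_left, Real.zero_rpow hp]
  · exact spow_of_pos hx p

lemma abs_spow (hp : p ≠ 0) (x : ℝ) : |spow x p| = |x| ^ p := by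
  rcases le_total 0 x with hx | hx
  · rw [spow_of_nonneg hx hp, abs_of_nonneg hx, abs_of_nonneg (Real.rpow_nonneg hx p)]
  · have hx' : 0 ≤ -x := by linarith
    rw [← abs_neg, ← spow_neg_left, spow_of_nonneg hx' hp, ← abs_neg x, abs_of_nonneg hx',
      abs_of_nonneg (Real.rpow_nonneg hx' p)]

lemma abs_rpow_sub_one_mul_self (x p : ℝ) : |x| ^ (p - 1) * x = spow x p := by
  rcases eq_or_ne x 0 with rfl | hx
  · rw [mul_zero, spow_zero_left]
  · rw [spow, Real.rpow_sub_one (abs_ne_zero.2 hx)]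
    rcases hx.lt_or_gt with h | h
    · rw [Real.sign_of_neg h, abs_of_neg h]; field_simp
    · rw [Real.sign_of_pos h, abs_of_pos h]; field_simp

lemma spow_sub_one_mul_self (hp : p ≠ 0) (x : ℝ) : spow x (p - 1) * x = |x| ^ p := by
  rcases eq_or_ne x 0 with rfl | hx
  · rw [mul_zero, abs_zero, Real.zero_rpow hp]
  · rw [← abs_rpow_sub_one_mul_self, mul_assoc, ← pow_two, ← sq_abs, ← Real.rpow_natCast,
      ← Real.rpow_add (abs_pos.2 hx)]
    congr 1
    push_cast
    ring

lemma abs_spow_sub_spow_le_of_nonneg (hp : 0 < p) (hp1 : p ≤ 1) {x y : ℝ} (hx : 0 ≤ x)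
    (hxy : x ≤ y) : |spow x p - spow y p| ≤ |x - y| ^ p := by
  have h := Real.rpow_add_le_add_rpow hx (sub_nonneg.2 hxy) hp.le hp1
  rw [add_sub_cancel] at h
  rw [spow_of_nonneg hx hp.ne', spow_of_nonneg (hx.trans hxy) hp.ne', abs_sub_comm, abs_sub_comm x,
    abs_of_nonneg (sub_nonneg.2 hxy), abs_of_nonneg (sub_nonneg.2 (by gcongr))]
  linarith

lemma abs_spow_sub_spow_le (hp : 0 < p) (hp1 : p ≤ 1) (x y : ℝ) :
    |spow x p - spow y p| ≤ 2 * |x - y| ^ p := by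
  wlog hxy : x ≤ y generalizing x y
  · rw [abs_sub_comm, abs_sub_comm x]
    exact this y x (le_of_not_ge hxy)
  have hnn : 0 ≤ |x - y| ^ p := by positivity
  rcases le_total 0 x with hx | hx
  · linarith [abs_spow_sub_spow_le_of_nonneg hp hp1 hx hxy]
  rcases le_total 0 y with hy | hy
  · calc |spow x p - spow y p| ≤ |x| ^ p + |y| ^ p := by
          rw [← abs_spow hp.ne', ← abs_spow hp.ne']; exact abs_sub _ _
      _ ≤ |x - y| ^ p + |x - y| ^ p := by
          rw [abs_of_nonpos hx, abs_of_nonneg hy, abs_of_nonpos (sub_nonpos.2 hxy)]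
          gcongr <;> linarith
      _ = 2 * |x - y| ^ p := by ring
  · have h := abs_spow_sub_spow_le_of_nonneg hp hp1 (neg_nonneg.2 hy) (neg_le_neg hxy)
    rw [spow_neg_left, spow_neg_left, neg_sub_neg, neg_sub_neg] at h
    linarith

lemma hasDerivAt_spow {x : ℝ} (hx : x ≠ 0) (p : ℝ) :
    HasDerivAt (fun y => spow y p) (p * |x| ^ (p - 1)) x := by
  have hpos : ∀ y : ℝ, 0 < y → HasDerivAt (fun y => spow y p) (p * |y| ^ (p - 1)) y := by
    intro y hy
    rw [abs_of_pos hy]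
    refine (Real.hasDerivAt_rpow_const (Or.inl hy.ne')).congr_of_eventuallyEq ?_
    filter_upwards [lt_mem_nhds hy] with z hz using spow_of_pos hz p
  rcases lt_or_gt_of_ne hx with h | h
  · have hneg := ((hpos (-x) (neg_pos.2 h)).comp x (hasDerivAt_neg x)).neg
    rw [abs_neg, mul_neg_one, neg_neg] at hneg
    exact hneg.congr_of_eventuallyEq
      (Eventually.of_forall fun y => by simp [spow_neg_left])
  · exact hpos x h

lemma continuous_spow (hp : 0 < p) : Continuous fun x => spow x p := by
  refine continuous_iff_continuousAt.2 fun x => ?_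
  rcases eq_or_ne x 0 with rfl | hx
  · have h0 : Tendsto (fun x : ℝ => |x| ^ p) (𝓝 0) (𝓝 0) := by
      simpa [Real.zero_rpow hp.ne'] using
        (continuous_abs.rpow_const fun _ => Or.inr hp.le).tendsto (0 : ℝ)
    rw [ContinuousAt, spow_zero_left]
    exact squeeze_zero_norm (fun y => (abs_spow hp.ne' y).le) h0
  · exact (hasDerivAt_spow hx p).continuousAt

lemma hasDerivAt_abs_rpow_spow (hp : 1 < p) (x : ℝ) :
    HasDerivAt (fun y => |y| ^ p) (p * spow x (p - 1)) x := by
  convert hasDerivAt_abs_rpow x hp using 1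
  rw [← abs_rpow_sub_one_mul_self, sub_sub, one_add_one_eq_two, mul_assoc]

end SignedPower

lemma integral_deriv_eq_zero_off_point {F F' : ℝ → ℂ} {x₀ : ℝ} (hF : Continuous F)
    (hderiv : ∀ x, x ≠ x₀ → HasDerivAt F (F' x) x) (hFi : Integrable F) (hF'i : Integrable F') :
    ∫ x, F' x = 0 := by
  have hright : ∀ x ∈ Ioi x₀, HasDerivAt F (F' x) x := fun x hx => hderiv x (ne_of_gt hx)
  have hleft : ∀ x ∈ Iio x₀, HasDerivAt F (F' x) x := fun x hx => hderiv x (ne_of_lt hx)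
  have htop : Tendsto F atTop (𝓝 0) :=
    tendsto_zero_of_hasDerivAt_of_integrableOn_Ioi hright hF'i.integrableOn hFi.integrableOn
  have hbot : Tendsto F atBot (𝓝 0) :=
    tendsto_zero_of_hasDerivAt_of_integrableOn_Iic (a := x₀ - 1)
      (fun x hx => hleft x (lt_of_le_of_lt hx (sub_one_lt x₀))) hF'i.integrableOn hFi.integrableOn
  rw [← intervalIntegral.integral_Iic_add_Ioi (b := x₀) hF'i.integrableOn hF'i.integrableOn,
    integral_Ioi_of_hasDerivAt_of_tendsto hF.continuousWithinAt hright hF'i.integrableOn htop,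
    integral_Iic_of_hasDerivAt_of_tendsto hF.continuousWithinAt hleft hF'i.integrableOn hbot]
  ring

lemma integral_deriv_mul_spow_affine {p : ℝ} (hp : 0 < p) {c g : ℝ} (hg : g ≠ 0) {h h' : ℝ → ℂ}
    (hd : ∀ v, HasDerivAt h (h' v) v)
    (hi1 : Integrable fun v => h' v * (spow (c + v * g) p : ℂ))
    (hi2 : Integrable fun v => h v * ((|c + v * g| ^ (p - 1) : ℝ) : ℂ))
    (hi3 : Integrable fun v => h v * (spow (c + v * g) p : ℂ)) :
    ∫ v, h' v * (spow (c + v * g) p : ℂ)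
      = -((p * g : ℝ) : ℂ) * ∫ v, h v * ((|c + v * g| ^ (p - 1) : ℝ) : ℂ) := by
  have hne : ∀ v, v ≠ -c / g → c + v * g ≠ 0 := fun v hv h0 =>
    hv (by rw [eq_div_iff hg]; linarith)
  have hcont : Continuous fun v => h v * (spow (c + v * g) p : ℂ) := by
    have hh : Continuous h := continuous_iff_continuousAt.2 fun v => (hd v).continuousAt
    have hs : Continuous fun v : ℝ => spow (c + v * g) p := (continuous_spow hp).comp (by fun_prop)
    exact hh.mul (Complex.continuous_ofReal.comp hs)
  have hderiv : ∀ v, v ≠ -c / g → HasDerivAt (fun v => h v * (spow (c + v * g) p : ℂ))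
      (h' v * (spow (c + v * g) p : ℂ)
        + ((p * g : ℝ) : ℂ) * (h v * ((|c + v * g| ^ (p - 1) : ℝ) : ℂ))) v := by
    intro v hv
    have haff : HasDerivAt (fun v : ℝ => c + v * g) g v := by
      simpa using ((hasDerivAt_id v).mul_const g).const_add c
    refine ((hd v).mul ((hasDerivAt_spow (hne v hv) p).comp v haff).ofReal_comp).congr_deriv ?_
    push_cast
    simp only [Function.comp_apply]
    ring
  have hzero := integral_deriv_eq_zero_off_point hcont hderiv hi3 (hi1.add (hi2.const_mul _))
  rw [integral_add hi1 (hi2.const_mul _), integral_const_mul] at hzero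
  linear_combination hzero

/-! ### Power kernels on the line -/

lemma min_le_rpow_mul_rpow {x y θ : ℝ} (hx : 0 < x) (hy : 0 < y) (h0 : 0 ≤ θ) (h1 : θ ≤ 1) :
    min x y ≤ x ^ (1 - θ) * y ^ θ := by
  have hm : 0 < min x y := lt_min hx hy
  calc min x y = min x y ^ (1 - θ) * min x y ^ θ := by rw [← Real.rpow_add hm]; simp
    _ ≤ x ^ (1 - θ) * y ^ θ := by
      gcongr
      · exact min_le_left x y
      · exact min_le_right x y

lemma integrable_abs_rpow_mul_one_add_abs_rpow {a b : ℝ} (ha : -1 < a) (ha0 : a ≤ 0)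
    (hab : a + b < -1) : Integrable fun x : ℝ => |x| ^ a * (1 + |x|) ^ b := by
  have hloc : LocallyIntegrable fun x : ℝ => |x| ^ a :=
    locallyIntegrable_of_norm_le_rpow (C := 1) (α := -a) (by simp) (by simp; linarith)
      (Eventually.of_forall fun x => by simp [abs_of_nonneg (Real.rpow_nonneg (abs_nonneg x) a)])
      (by fun_prop : Measurable _).aestronglyMeasurable
  have hnear : IntegrableOn (fun x : ℝ => |x| ^ a * (1 + |x|) ^ b) (Icc (-1) 1) := by
    refine (hloc.integrableOn_isCompact isCompact_Icc).mul_continuousOn ?_ isCompact_Icc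
    exact (Continuous.rpow_const (by fun_prop) fun x => Or.inl (by positivity)).continuousOn
  have hfar : IntegrableOn (fun x : ℝ => |x| ^ a * (1 + |x|) ^ b) (Icc (-1) 1)ᶜ := by
    refine Integrable.mono' (((integrable_one_add_norm (E := ℝ) (r := -(a + b))
      (by simp; linarith)).const_mul ((2⁻¹ : ℝ) ^ a)).integrableOn) (by fun_prop) ?_
    filter_upwards [ae_restrict_mem measurableSet_Icc.compl] with x hx
    have hx1 : 1 < |x| := by
      rw [mem_compl_iff, mem_Icc, ← abs_le, not_le] at hx; exact hx
    have hpow : |x| ^ a ≤ (2⁻¹ * (1 + |x|)) ^ a :=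
      Real.rpow_le_rpow_of_nonpos (by positivity) (by linarith) ha0
    rw [Real.norm_of_nonneg (by positivity), neg_neg, Real.rpow_add (by positivity), ← mul_assoc,
      ← Real.mul_rpow (by norm_num) (by positivity)]
    exact mul_le_mul_of_nonneg_right hpow (by positivity)
  exact integrableOn_univ.1 (union_compl_self (Icc (-1 : ℝ) 1) ▸ hnear.union hfar)

section ShiftKernel

variable {a b : ℝ}

lemma abs_rpow_mul_le_of_abs_le (hb : b ≤ 0) {x y : ℝ} (hxy : |x| ≤ |y|) (hsub : |x - y| = 1) :
    |x| ^ a * |y| ^ b ≤ 3⁻¹ ^ b * (|x| ^ a * (1 + |x|) ^ b) := by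
  have hy : 3⁻¹ * (1 + |x|) ≤ |y| := by
    have := abs_sub x y
    linarith
  calc |x| ^ a * |y| ^ b ≤ |x| ^ a * (3⁻¹ * (1 + |x|)) ^ b := by
        exact mul_le_mul_of_nonneg_left (Real.rpow_le_rpow_of_nonpos (by positivity) hy hb)
          (by positivity)
    _ = 3⁻¹ ^ b * (|x| ^ a * (1 + |x|) ^ b) := by
        rw [Real.mul_rpow (by norm_num) (by positivity)]; ring

lemma integrable_abs_rpow_mul_abs_one_add_rpow (ha : -1 < a) (ha0 : a ≤ 0) (hb : -1 < b)
    (hb0 : b ≤ 0) (hab : a + b < -1) : Integrable fun w : ℝ => |w| ^ a * |1 + w| ^ b := by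
  have i1 := (integrable_abs_rpow_mul_one_add_abs_rpow ha ha0 hab).const_mul ((3⁻¹ : ℝ) ^ b)
  have i2 := ((integrable_abs_rpow_mul_one_add_abs_rpow hb hb0 (add_comm a b ▸ hab)).comp_add_left
    1).const_mul ((3⁻¹ : ℝ) ^ a)
  refine (i1.add i2).mono' (by fun_prop) (Eventually.of_forall fun w => ?_)
  rw [Real.norm_of_nonneg (by positivity), Pi.add_apply]
  rcases le_total |w| |1 + w| with h | h
  · exact (abs_rpow_mul_le_of_abs_le hb0 h (by simp)).trans
      (le_add_of_nonneg_right (by positivity))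
  · rw [mul_comm]
    exact (abs_rpow_mul_le_of_abs_le ha0 h (by simp)).trans
      (le_add_of_nonneg_left (by positivity))

variable {c g : ℝ}

lemma abs_rpow_mul_abs_affine_rpow (hc : c ≠ 0) (hg : g ≠ 0) (v : ℝ) :
    |v| ^ a * |c + v * g| ^ b =
      |c| ^ (a + b) * |g| ^ (-a) * (|g / c * v| ^ a * |1 + g / c * v| ^ b) := by
  have hc' : 0 < |c| := abs_pos.2 hc
  have hg' : 0 < |g| := abs_pos.2 hg
  have hfactor : |c + v * g| = |c| * |1 + g / c * v| := by
    rw [← abs_mul]; congr 1; field_simp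
  rw [hfactor, Real.mul_rpow hc'.le (abs_nonneg _), abs_mul (g / c), abs_div,
    Real.mul_rpow (by positivity) (abs_nonneg _), Real.div_rpow hg'.le hc'.le, Real.rpow_add hc',
    Real.rpow_neg hg'.le]
  have : |c| ^ a ≠ 0 := by positivity
  have : |g| ^ a ≠ 0 := by positivity
  field_simp

lemma integrable_abs_rpow_mul_abs_affine_rpow (ha : -1 < a) (ha0 : a ≤ 0) (hb : -1 < b)
    (hb0 : b ≤ 0) (hab : a + b < -1) (hc : c ≠ 0) (hg : g ≠ 0) :
    Integrable fun v : ℝ => |v| ^ a * |c + v * g| ^ b := by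
  simp_rw [abs_rpow_mul_abs_affine_rpow hc hg]
  exact ((integrable_comp_mul_left_iff (fun w : ℝ => |w| ^ a * |1 + w| ^ b)
    (div_ne_zero hg hc)).2
    (integrable_abs_rpow_mul_abs_one_add_rpow ha ha0 hb hb0 hab)).const_mul _

lemma integral_abs_rpow_mul_abs_affine_rpow (hc : c ≠ 0) (hg : g ≠ 0) :
    ∫ v : ℝ, |v| ^ a * |c + v * g| ^ b =
      (∫ w : ℝ, |w| ^ a * |1 + w| ^ b) * (|c| ^ (a + b + 1) * |g| ^ (-a - 1)) := by
  simp_rw [abs_rpow_mul_abs_affine_rpow hc hg]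
  rw [integral_const_mul, Measure.integral_comp_mul_left (fun w : ℝ => |w| ^ a * |1 + w| ^ b),
    smul_eq_mul, inv_div, abs_div, Real.rpow_add_one (abs_ne_zero.2 hc),
    Real.rpow_sub_one (abs_ne_zero.2 hg)]
  ring

end ShiftKernel

section MinKernel

variable {a t : ℝ}

lemma min_one_two_div_le {x : ℝ} (hx : 0 ≤ x) : min 1 (2 / x) ≤ 3 * (1 + x)⁻¹ := by
  rw [← div_eq_mul_inv]
  rcases le_total x 2 with h | h
  · exact (min_le_left _ _).trans ((one_le_div (by positivity)).2 (by linarith))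
  · refine (min_le_right _ _).trans ?_
    rw [div_le_div_iff₀ (by linarith) (by linarith)]
    linarith

lemma integrable_min_one_two_div_mul_abs_rpow (ha : -1 < a) (ha0 : a < 0) :
    Integrable fun x : ℝ => min 1 (2 / |x|) * |x| ^ a := by
  refine ((integrable_abs_rpow_mul_one_add_abs_rpow (b := -1) ha ha0.le
    (by linarith)).const_mul 3).mono' (by fun_prop) (Eventually.of_forall fun x => ?_)
  have : 0 ≤ min 1 (2 / |x|) := le_min zero_le_one (by positivity)
  rw [Real.norm_of_nonneg (by positivity), Real.rpow_neg_one]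
  calc min 1 (2 / |x|) * |x| ^ a ≤ 3 * (1 + |x|)⁻¹ * |x| ^ a := by
        gcongr
        exact min_one_two_div_le (abs_nonneg x)
    _ = 3 * (|x| ^ a * (1 + |x|)⁻¹) := by ring

lemma min_two_div_mul_abs_rpow (ht : 0 < t) (u : ℝ) :
    min t (2 / |u|) * |u| ^ a = t ^ (1 - a) * (min 1 (2 / |t * u|) * |t * u| ^ a) := by
  have hmin : t * min 1 (2 / (t * |u|)) = min t (2 / |u|) := by
    rw [mul_min_of_nonneg _ _ ht.le, mul_one]
    congr 1
    field_simp
  rw [abs_mul, abs_of_pos ht, Real.mul_rpow ht.le (abs_nonneg u), ← hmin, Real.rpow_sub ht,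
    Real.rpow_one]
  field_simp

lemma integrable_min_two_div_mul_abs_rpow (ht : 0 < t) (ha : -1 < a) (ha0 : a < 0) :
    Integrable fun u : ℝ => min t (2 / |u|) * |u| ^ a := by
  simp_rw [min_two_div_mul_abs_rpow ht]
  exact ((integrable_comp_mul_left_iff (fun x : ℝ => min 1 (2 / |x|) * |x| ^ a) ht.ne').2
    (integrable_min_one_two_div_mul_abs_rpow ha ha0)).const_mul _

lemma integral_min_two_div_mul_abs_rpow (ht : 0 < t) :
    ∫ u : ℝ, min t (2 / |u|) * |u| ^ a =
      (∫ x : ℝ, min 1 (2 / |x|) * |x| ^ a) * t ^ (-a) := by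
  simp_rw [min_two_div_mul_abs_rpow ht]
  rw [integral_const_mul, Measure.integral_comp_mul_left
    (fun x : ℝ => min 1 (2 / |x|) * |x| ^ a), smul_eq_mul, abs_of_pos (by positivity),
    Real.rpow_sub ht, Real.rpow_one, Real.rpow_neg ht.le]
  field_simp

end MinKernel

/-! ### Spaces of `α`-integrable functions -/

section MemLalpha

variable {S : Type*} [MeasurableSpace S] {μ : Measure S} {α : ℝ} {f g : S → ℝ}

lemma nrm_rpow (hα : 0 < α) (μ : Measure S) (f : S → ℝ) :
    nrm α μ f ^ α = ∫ s, |f s| ^ α ∂μ := by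
  rw [nrm, ← Real.rpow_mul (integral_nonneg fun s => by positivity), one_div_mul_cancel hα.ne',
    Real.rpow_one]

lemma memLalpha_iff_memLp (hα : 0 < α) :
    MemLalpha α μ f ↔ MemLp f (ENNReal.ofReal α) μ := by
  rw [MemLalpha]
  constructor
  · rintro ⟨hf, hint⟩
    rwa [← integrable_norm_rpow_iff hf (by simpa) (by simp), ENNReal.toReal_ofReal hα.le]
  · intro h
    refine ⟨h.1, ?_⟩
    rwa [← integrable_norm_rpow_iff h.1 (by simpa) (by simp), ENNReal.toReal_ofReal hα.le] at h

lemma MemLalpha.linear_comb (hα : 0 < α) (hf : MemLalpha α μ f) (hg : MemLalpha α μ g)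
    (u v : ℝ) : MemLalpha α μ fun s => u * f s + v * g s := by
  rw [memLalpha_iff_memLp hα] at *
  exact (hf.const_mul u).add (hg.const_mul v)

lemma rpow_mul_rpow_le_add {a b x y : ℝ} (ha : 0 ≤ a) (hb : 0 ≤ b) (hab : 0 < a + b)
    (hx : 0 ≤ x) (hy : 0 ≤ y) : x ^ a * y ^ b ≤ x ^ (a + b) + y ^ (a + b) := by
  rcases le_total x y with h | h
  · calc x ^ a * y ^ b ≤ y ^ a * y ^ b := by gcongr
      _ = y ^ (a + b) := (Real.rpow_add' hy hab.ne').symm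
      _ ≤ _ := le_add_of_nonneg_left (by positivity)
  · calc x ^ a * y ^ b ≤ x ^ a * x ^ b := by gcongr
      _ = x ^ (a + b) := (Real.rpow_add' hx hab.ne').symm
      _ ≤ _ := le_add_of_nonneg_right (by positivity)

lemma MemLalpha.integrable_rpow_mul_rpow {a b : ℝ} (ha : 0 ≤ a) (hb : 0 ≤ b) (hab : 0 < a + b)
    (hf : MemLalpha (a + b) μ f) (hg : MemLalpha (a + b) μ g) :
    Integrable (fun s => |f s| ^ a * |g s| ^ b) μ := by
  refine (hf.2.add hg.2).mono' ?_ (Eventually.of_forall fun s => ?_)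
  · exact (hf.1.aemeasurable.norm.pow_const a).mul (hg.1.aemeasurable.norm.pow_const b)
      |>.aestronglyMeasurable
  · rw [Real.norm_of_nonneg (by positivity)]
    exact rpow_mul_rpow_le_add ha hb hab (abs_nonneg _) (abs_nonneg _)

lemma MemLalpha.integrable_dep1s (hα : 1 ≤ α) (hf : MemLalpha α μ f) (hg : MemLalpha α μ g) :
    Integrable (fun s => |f s| ^ (α - 1) * |g s|) μ := by
  simpa using MemLalpha.integrable_rpow_mul_rpow (a := α - 1) (b := 1) (sub_nonneg.2 hα)
    zero_le_one (by linarith) (by simpa) (by simpa)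

lemma MemLalpha.integrable_dep2 (hα : 0 < α) (hf : MemLalpha α μ f) (hg : MemLalpha α μ g) :
    Integrable (fun s => |f s * g s| ^ (α / 2)) μ := by
  simp_rw [abs_mul, Real.mul_rpow (abs_nonneg _) (abs_nonneg _)]
  exact MemLalpha.integrable_rpow_mul_rpow (by positivity) (by positivity) (by positivity)
    (by simpa) (by simpa)

lemma dep1s_nonneg (α : ℝ) (μ : Measure S) (f g : S → ℝ) : 0 ≤ dep1s α μ f g :=
  integral_nonneg fun s => by positivity

lemma dep1_nonneg (α : ℝ) (μ : Measure S) (f g : S → ℝ) : 0 ≤ dep1 α μ f g :=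
  add_nonneg (dep1s_nonneg α μ f g) (dep1s_nonneg α μ g f)

lemma dep2_nonneg (α : ℝ) (μ : Measure S) (f g : S → ℝ) : 0 ≤ dep2 α μ f g :=
  integral_nonneg fun s => by positivity

lemma dep1s_le (hα : 1 ≤ α) (hf : MemLalpha α μ f) (hg : MemLalpha α μ g) :
    dep1s α μ f g ≤ ∫ s, |f s| ^ α ∂μ + ∫ s, |g s| ^ α ∂μ := by
  rw [← integral_add hf.2 hg.2]
  refine integral_mono (hf.integrable_dep1s hα hg) (hf.2.add hg.2) fun s => ?_
  simpa using rpow_mul_rpow_le_add (sub_nonneg.2 hα) zero_le_one (by linarith)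
    (abs_nonneg (f s)) (abs_nonneg (g s))

end MemLalpha

/-! ### The exponent of the joint characteristic function -/

section CharExponent

variable {S : Type*} [MeasurableSpace S] {α : ℝ} {μ : Measure S} {f g : S → ℝ}

/-- The exponent `‖u f + v g‖_α^α` of the joint characteristic function. -/
noncomputable def charExponent (α : ℝ) (μ : Measure S) (f g : S → ℝ) (u v : ℝ) : ℝ :=
  ∫ s, |u * f s + v * g s| ^ α ∂μ

/-- The partial derivative of `charExponent α μ f g` in its first variable, divided by `α`. The
derivative in the second variable is obtained by exchanging `f, g` and `u, v`. -/
noncomputable def charExponentDeriv (α : ℝ) (μ : Measure S) (f g : S → ℝ) (u v : ℝ) : ℝ :=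
  ∫ s, spow (u * f s + v * g s) (α - 1) * f s ∂μ

lemma charExponent_comm (α : ℝ) (μ : Measure S) (f g : S → ℝ) (u v : ℝ) :
    charExponent α μ f g u v = charExponent α μ g f v u := by
  simp only [charExponent, add_comm]

lemma nrm_linear_comb_rpow (hα : 0 < α) (μ : Measure S) (f g : S → ℝ) (u v : ℝ) :
    nrm α μ (fun s => u * f s + v * g s) ^ α = charExponent α μ f g u v :=
  nrm_rpow hα μ _

lemma nrm_const_mul_left_rpow (hα : 0 < α) (μ : Measure S) (f g : S → ℝ) (u : ℝ) :
    nrm α μ (fun s => u * f s) ^ α = charExponent α μ f g u 0 := by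
  simp only [nrm_rpow hα, charExponent, zero_mul, add_zero]

lemma nrm_const_mul_right_rpow (hα : 0 < α) (μ : Measure S) (f g : S → ℝ) (v : ℝ) :
    nrm α μ (fun s => v * g s) ^ α = charExponent α μ f g 0 v := by
  simp only [nrm_rpow hα, charExponent, zero_mul, zero_add]

lemma charExponent_nonneg (α : ℝ) (μ : Measure S) (f g : S → ℝ) (u v : ℝ) :
    0 ≤ charExponent α μ f g u v :=
  integral_nonneg fun s => by positivity

lemma charExponent_zero (hα : α ≠ 0) (μ : Measure S) (f g : S → ℝ) :
    charExponent α μ f g 0 0 = 0 := by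
  simp [charExponent, Real.zero_rpow hα]

lemma charExponentDeriv_zero (α : ℝ) (μ : Measure S) (f g : S → ℝ) :
    charExponentDeriv α μ f g 0 0 = 0 := by
  simp [charExponentDeriv, spow_zero_left]

lemma MemLalpha.aestronglyMeasurable_spow (hα : 1 < α) (hf : MemLalpha α μ f)
    (hg : MemLalpha α μ g) (u v : ℝ) :
    AEStronglyMeasurable (fun s => spow (u * f s + v * g s) (α - 1) * f s) μ :=
  ((continuous_spow (sub_pos.2 hα)).comp_aestronglyMeasurable
    ((hf.1.const_mul u).add (hg.1.const_mul v))).mul hf.1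

lemma MemLalpha.integrable_spow (hα : 1 < α) (hf : MemLalpha α μ f) (hg : MemLalpha α μ g)
    (u v : ℝ) : Integrable (fun s => spow (u * f s + v * g s) (α - 1) * f s) μ := by
  refine ((hf.linear_comb (by linarith) hg u v).integrable_dep1s hα.le hf).mono'
    (hf.aestronglyMeasurable_spow hα hg u v) (Eventually.of_forall fun s => ?_)
  rw [norm_mul, Real.norm_eq_abs, Real.norm_eq_abs, abs_spow (by linarith)]

lemma abs_spow_linear_comb_sub_mul_le (hα : 1 < α) (hα2 : α ≤ 2) (x y u v u' v' : ℝ) :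
    |spow (u * x + v * y) (α - 1) * x - spow (u' * x + v' * y) (α - 1) * x| ≤
      2 * (|u - u'| ^ (α - 1) * |x| ^ α + |v - v'| ^ (α - 1) * (|y| ^ (α - 1) * |x|)) := by
  have hp : 0 < α - 1 := sub_pos.2 hα
  have hsplit : |(u * x + v * y) - (u' * x + v' * y)| ^ (α - 1) ≤
      |u - u'| ^ (α - 1) * |x| ^ (α - 1) + |v - v'| ^ (α - 1) * |y| ^ (α - 1) := by
    rw [← Real.mul_rpow (abs_nonneg _) (abs_nonneg _),
      ← Real.mul_rpow (abs_nonneg _) (abs_nonneg _), ← abs_mul, ← abs_mul]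
    refine le_trans ?_ (Real.rpow_add_le_add_rpow (abs_nonneg _) (abs_nonneg _) hp.le
      (by linarith))
    gcongr
    calc _ = |(u - u') * x + (v - v') * y| := by congr 1; ring
      _ ≤ _ := abs_add_le _ _
  have hx : |x| ^ α = |x| ^ (α - 1) * |x| := by
    rw [← Real.rpow_add_one' (abs_nonneg x) (by linarith), sub_add_cancel]
  rw [← sub_mul, abs_mul, hx]
  calc _ ≤ 2 * (|u - u'| ^ (α - 1) * |x| ^ (α - 1) + |v - v'| ^ (α - 1) * |y| ^ (α - 1)) * |x| := by
        gcongr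
        exact (abs_spow_sub_spow_le hp (by linarith) _ _).trans (by gcongr)
    _ = _ := by ring

lemma abs_charExponentDeriv_sub_le (hα : 1 < α) (hα2 : α ≤ 2) (hf : MemLalpha α μ f)
    (hg : MemLalpha α μ g) (u v u' v' : ℝ) :
    |charExponentDeriv α μ f g u v - charExponentDeriv α μ f g u' v'| ≤
      2 * (|u - u'| ^ (α - 1) * ∫ s, |f s| ^ α ∂μ + |v - v'| ^ (α - 1) * dep1s α μ g f) := by
  have hi := hf.2.const_mul (|u - u'| ^ (α - 1))
  have hi' := (hg.integrable_dep1s hα.le hf).const_mul (|v - v'| ^ (α - 1))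
  rw [charExponentDeriv, charExponentDeriv,
    ← integral_sub (hf.integrable_spow hα hg u v) (hf.integrable_spow hα hg u' v'), dep1s,
    ← integral_const_mul, ← integral_const_mul, ← integral_add hi hi', ← integral_const_mul,
    ← Real.norm_eq_abs]
  refine norm_integral_le_of_norm_le ((hi.add hi').const_mul 2)
    (Eventually.of_forall fun s => ?_)
  exact abs_spow_linear_comb_sub_mul_le hα hα2 (f s) (g s) u v u' v'

lemma continuous_charExponentDeriv (hα : 1 < α) (hα2 : α ≤ 2) (hf : MemLalpha α μ f)
    (hg : MemLalpha α μ g) :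
    Continuous fun z : ℝ × ℝ => charExponentDeriv α μ f g z.1 z.2 := by
  refine continuous_iff_continuousAt.2 fun z₀ => tendsto_iff_norm_sub_tendsto_zero.2 ?_
  have hbound : Continuous fun z : ℝ × ℝ => 2 * (|z.1 - z₀.1| ^ (α - 1) * ∫ s, |f s| ^ α ∂μ +
      |z.2 - z₀.2| ^ (α - 1) * dep1s α μ g f) := by
    have hp : 0 ≤ α - 1 := by linarith
    exact continuous_const.mul <|
      ((Continuous.rpow_const (by fun_prop) fun _ => Or.inr hp).mul continuous_const).add
      ((Continuous.rpow_const (by fun_prop) fun _ => Or.inr hp).mul continuous_const)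
  refine squeeze_zero (fun z => norm_nonneg _)
    (fun z => abs_charExponentDeriv_sub_le hα hα2 hf hg z.1 z.2 z₀.1 z₀.2) ?_
  simpa [Real.zero_rpow (sub_pos.2 hα).ne'] using hbound.tendsto z₀

-- Euler's identity for the homogeneous function `charExponent`.
lemma charExponent_eq_add (hα : 1 < α) (hf : MemLalpha α μ f) (hg : MemLalpha α μ g) (u v : ℝ) :
    charExponent α μ f g u v =
      u * charExponentDeriv α μ f g u v + v * charExponentDeriv α μ g f v u := by
  rw [charExponent, charExponentDeriv, charExponentDeriv, ← integral_const_mul,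
    ← integral_const_mul, ← integral_add ((hf.integrable_spow hα hg u v).const_mul u)
      ((hg.integrable_spow hα hf v u).const_mul v)]
  refine integral_congr_ae (Eventually.of_forall fun s => ?_)
  simp only [← spow_sub_one_mul_self (show α ≠ 0 by linarith), add_comm (v * g s)]
  ring

lemma continuous_charExponent (hα : 1 < α) (hα2 : α ≤ 2) (hf : MemLalpha α μ f)
    (hg : MemLalpha α μ g) : Continuous fun z : ℝ × ℝ => charExponent α μ f g z.1 z.2 := by
  simp_rw [charExponent_eq_add hα hf hg]
  exact (continuous_fst.mul (continuous_charExponentDeriv hα hα2 hf hg)).add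
    (continuous_snd.mul ((continuous_charExponentDeriv hα hα2 hg hf).comp continuous_swap))

lemma hasDerivAt_charExponent_left (hα : 1 < α) (hα2 : α ≤ 2) (hf : MemLalpha α μ f)
    (hg : MemLalpha α μ g) (u v : ℝ) :
    HasDerivAt (fun u => charExponent α μ f g u v) (α * charExponentDeriv α μ f g u v) u := by
  have hα0 : 0 < α := by linarith
  have hbound : ∀ s, ∀ x ∈ Metric.ball u 1,
      ‖α * (spow (x * f s + v * g s) (α - 1) * f s)‖ ≤
        α * (|spow (u * f s + v * g s) (α - 1) * f s| + 2 * |f s| ^ α) := by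
    intro s x hx
    have hxu : |x - u| ^ (α - 1) ≤ 1 :=
      Real.rpow_le_one (abs_nonneg _) (Metric.mem_ball.1 hx).le (by linarith)
    have hclose := abs_spow_linear_comb_sub_mul_le hα hα2 (f s) (g s) x v u v
    rw [sub_self v, abs_zero, Real.zero_rpow (by linarith), zero_mul, add_zero] at hclose
    rw [norm_mul, Real.norm_of_nonneg hα0.le, Real.norm_eq_abs]
    gcongr
    calc _ ≤ |spow (u * f s + v * g s) (α - 1) * f s| + 2 * (|x - u| ^ (α - 1) * |f s| ^ α) :=
          sub_le_iff_le_add'.1 ((abs_sub_abs_le_abs_sub _ _).trans hclose)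
      _ ≤ _ := by gcongr; exact mul_le_of_le_one_left (by positivity) hxu
  have hderiv : ∀ s, ∀ x ∈ Metric.ball u 1, HasDerivAt (fun x => |x * f s + v * g s| ^ α)
      (α * (spow (x * f s + v * g s) (α - 1) * f s)) x := by
    intro s x _
    have haff : HasDerivAt (fun x => x * f s + v * g s) (f s) x := by
      simpa using ((hasDerivAt_id x).mul_const (f s)).add_const (v * g s)
    exact ((hasDerivAt_abs_rpow_spow hα _).comp x haff).congr_deriv (by ring)
  have hmain := hasDerivAt_integral_of_dominated_loc_of_deriv_le (Metric.ball_mem_nhds u one_pos)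
    (Eventually.of_forall fun x => (hf.linear_comb hα0 hg x v).2.1) (hf.linear_comb hα0 hg u v).2
    ((hf.aestronglyMeasurable_spow hα hg u v).const_mul α) (Eventually.of_forall hbound)
    (((hf.integrable_spow hα hg u v).abs.add (hf.2.const_mul 2)).const_mul α)
    (Eventually.of_forall hderiv)
  exact hmain.2.congr_deriv (by rw [integral_const_mul, charExponentDeriv])

lemma hasDerivAt_charExponent_right (hα : 1 < α) (hα2 : α ≤ 2) (hf : MemLalpha α μ f)
    (hg : MemLalpha α μ g) (u v : ℝ) :
    HasDerivAt (charExponent α μ f g u) (α * charExponentDeriv α μ g f v u) v := by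
  convert hasDerivAt_charExponent_left hα hα2 hg hf v u using 1
  exact funext fun v => charExponent_comm α μ f g u v

lemma abs_charExponentDeriv_sub_axis_le (hα : 1 < α) (hα2 : α ≤ 2) (hf : MemLalpha α μ f)
    (hg : MemLalpha α μ g) (u v : ℝ) :
    |charExponentDeriv α μ f g u v - charExponentDeriv α μ f g u 0| ≤
      2 * |v| ^ (α - 1) * dep1s α μ g f := by
  have h := abs_charExponentDeriv_sub_le hα hα2 hf hg u v u 0
  rwa [sub_self, abs_zero, Real.zero_rpow (by linarith), zero_mul, zero_add, sub_zero,
    ← mul_assoc] at h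

lemma abs_charExponent_sub_axes_le (hα : 1 < α) (hα2 : α ≤ 2) (hf : MemLalpha α μ f)
    (hg : MemLalpha α μ g) (u v : ℝ) :
    |charExponent α μ f g u v - charExponent α μ f g u 0 - charExponent α μ f g 0 v| ≤
      2 * α * |u| ^ (α - 1) * |v| * dep1s α μ f g := by
  have hderiv : ∀ w ∈ univ, HasDerivWithinAt
      (fun w => charExponent α μ f g u w - charExponent α μ f g 0 w)
      (α * charExponentDeriv α μ g f w u - α * charExponentDeriv α μ g f w 0) univ w :=
    fun w _ => ((hasDerivAt_charExponent_right hα hα2 hf hg u w).sub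
      (hasDerivAt_charExponent_right hα hα2 hf hg 0 w)).hasDerivWithinAt
  have hbound : ∀ w ∈ univ, ‖α * charExponentDeriv α μ g f w u -
      α * charExponentDeriv α μ g f w 0‖ ≤ α * (2 * |u| ^ (α - 1) * dep1s α μ f g) := by
    intro w _
    rw [← mul_sub, norm_mul, Real.norm_of_nonneg (by linarith), Real.norm_eq_abs]
    gcongr
    exact abs_charExponentDeriv_sub_axis_le hα hα2 hg hf w u
  have h := convex_univ.norm_image_sub_le_of_norm_hasDerivWithin_le hderiv hbound
    (mem_univ 0) (mem_univ v)
  rw [charExponent_zero (by linarith), Real.norm_eq_abs, Real.norm_eq_abs, sub_zero, sub_zero] at h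
  rw [sub_right_comm]
  exact h.trans_eq (by ring)

end CharExponent

/-! ### Joint and product characteristic functions -/

section CharFunctions

variable {S : Type*} [MeasurableSpace S] {α : ℝ} {μ : Measure S} {f g : S → ℝ}

/-- The characteristic function of an SαS pair with spectral pair `(f, g)`. -/
noncomputable def jointChar (α : ℝ) (μ : Measure S) (f g : S → ℝ) (u v : ℝ) : ℝ :=
  rexp (-charExponent α μ f g u v)

/-- The characteristic function of an independent pair with the marginals of an SαS pair with
spectral pair `(f, g)`. -/
noncomputable def productChar (α : ℝ) (μ : Measure S) (f g : S → ℝ) (u v : ℝ) : ℝ :=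
  rexp (-charExponent α μ f g u 0 - charExponent α μ f g 0 v)

lemma Ufun_eq (hα : 0 < α) (μ : Measure S) (f g : S → ℝ) (u v : ℝ) :
    Ufun α μ f g u v = jointChar α μ f g u v - productChar α μ f g u v := by
  rw [Ufun, nrm_linear_comb_rpow hα, nrm_const_mul_left_rpow hα μ f g,
    nrm_const_mul_right_rpow hα μ f g, jointChar, productChar]

lemma D1_eq (hα : 0 < α) (μ : Measure S) (f g : S → ℝ) (u v : ℝ) :
    D1 α μ f g u v =
      α * (charExponentDeriv α μ f g u 0 * productChar α μ f g u v -
        charExponentDeriv α μ f g u v * jointChar α μ f g u v) := by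
  rw [D1, nrm_linear_comb_rpow hα, nrm_const_mul_left_rpow hα μ f g,
    nrm_const_mul_right_rpow hα μ f g, jointChar, productChar]
  simp only [charExponentDeriv, zero_mul, add_zero]
  ring

lemma jointChar_nonneg (α : ℝ) (μ : Measure S) (f g : S → ℝ) (u v : ℝ) :
    0 ≤ jointChar α μ f g u v :=
  (Real.exp_pos _).le

lemma productChar_nonneg (α : ℝ) (μ : Measure S) (f g : S → ℝ) (u v : ℝ) :
    0 ≤ productChar α μ f g u v :=
  (Real.exp_pos _).le

lemma jointChar_le_one (α : ℝ) (μ : Measure S) (f g : S → ℝ) (u v : ℝ) :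
    jointChar α μ f g u v ≤ 1 :=
  Real.exp_le_one_iff.2 (neg_nonpos.2 (charExponent_nonneg α μ f g u v))

lemma productChar_le_one (α : ℝ) (μ : Measure S) (f g : S → ℝ) (u v : ℝ) :
    productChar α μ f g u v ≤ 1 := by
  refine Real.exp_le_one_iff.2 ?_
  linarith [charExponent_nonneg α μ f g u 0, charExponent_nonneg α μ f g 0 v]

lemma continuous_jointChar (hα : 1 < α) (hα2 : α ≤ 2) (hf : MemLalpha α μ f)
    (hg : MemLalpha α μ g) : Continuous fun z : ℝ × ℝ => jointChar α μ f g z.1 z.2 :=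
  Real.continuous_exp.comp (continuous_charExponent hα hα2 hf hg).neg

lemma continuous_productChar (hα : 1 < α) (hα2 : α ≤ 2) (hf : MemLalpha α μ f)
    (hg : MemLalpha α μ g) : Continuous fun z : ℝ × ℝ => productChar α μ f g z.1 z.2 :=
  have hN := continuous_charExponent hα hα2 hf hg
  Real.continuous_exp.comp <|
    (hN.comp (continuous_fst.prodMk continuous_const)).neg.sub
      (hN.comp (continuous_const.prodMk continuous_snd))

lemma hasDerivAt_jointChar_right (hα : 1 < α) (hα2 : α ≤ 2) (hf : MemLalpha α μ f)
    (hg : MemLalpha α μ g) (u v : ℝ) :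
    HasDerivAt (jointChar α μ f g u)
      (-α * (charExponentDeriv α μ g f v u * jointChar α μ f g u v)) v :=
  (hasDerivAt_charExponent_right hα hα2 hf hg u v).fun_neg.exp.congr_deriv (by rw [jointChar]; ring)

lemma hasDerivAt_productChar_right (hα : 1 < α) (hα2 : α ≤ 2) (hf : MemLalpha α μ f)
    (hg : MemLalpha α μ g) (u v : ℝ) :
    HasDerivAt (productChar α μ f g u)
      (-α * (charExponentDeriv α μ g f v 0 * productChar α μ f g u v)) v :=
  ((hasDerivAt_charExponent_right hα hα2 hf hg 0 v).const_sub _).exp.congr_deriv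
    (by rw [productChar]; ring)

lemma hasDerivAt_Ufun_left (hα : 1 < α) (hα2 : α ≤ 2) (hf : MemLalpha α μ f)
    (hg : MemLalpha α μ g) (u v : ℝ) :
    HasDerivAt (fun u => Ufun α μ f g u v) (D1 α μ f g u v) u := by
  simp_rw [Ufun_eq (zero_lt_one.trans hα), D1_eq (zero_lt_one.trans hα)]
  refine ((hasDerivAt_charExponent_left hα hα2 hf hg u v).fun_neg.exp.sub
    ((hasDerivAt_charExponent_left hα hα2 hf hg u 0).fun_neg.sub_const
      (charExponent α μ f g 0 v)).exp).congr_deriv ?_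
  rw [jointChar, productChar]
  ring

lemma continuous_D1 (hα : 1 < α) (hα2 : α ≤ 2) (hf : MemLalpha α μ f) (hg : MemLalpha α μ g) :
    Continuous fun z : ℝ × ℝ => D1 α μ f g z.1 z.2 := by
  have hP := continuous_charExponentDeriv hα hα2 hf hg
  simp_rw [D1_eq (zero_lt_one.trans hα)]
  exact continuous_const.mul <|
    ((hP.comp (continuous_fst.prodMk continuous_const)).mul
      (continuous_productChar hα hα2 hf hg)).sub (hP.mul (continuous_jointChar hα hα2 hf hg))

lemma abs_Ufun_le_one (hα : 0 < α) (μ : Measure S) (f g : S → ℝ) (u v : ℝ) :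
    |Ufun α μ f g u v| ≤ 1 := by
  rw [Ufun_eq hα, abs_le]
  constructor <;>
    linarith [jointChar_nonneg α μ f g u v, jointChar_le_one α μ f g u v,
      productChar_nonneg α μ f g u v, productChar_le_one α μ f g u v]

/-- The part of the mixed second derivative of the joint minus the product characteristic function
that stems from the products of first derivatives of the exponent, divided by `α ^ 2`. -/
noncomputable def derivProductGap (α : ℝ) (μ : Measure S) (f g : S → ℝ) (u v : ℝ) : ℝ :=
  charExponentDeriv α μ f g u v * charExponentDeriv α μ g f v u * jointChar α μ f g u v -
    charExponentDeriv α μ f g u 0 * charExponentDeriv α μ g f v 0 * productChar α μ f g u v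

end CharFunctions

/-! ### Uniform estimates for nondegenerate spectral pairs -/

lemma rpow_le_one_add {x p : ℝ} (hx : 0 ≤ x) (hp : 0 ≤ p) (hp1 : p ≤ 1) : x ^ p ≤ 1 + x :=
  calc x ^ p ≤ (1 + x) ^ p := by gcongr; linarith
    _ ≤ (1 + x) ^ (1 : ℝ) := Real.rpow_le_rpow_of_exponent_le (by linarith) hp1
    _ = 1 + x := Real.rpow_one _

lemma abs_exp_sub_exp_le {x y E : ℝ} (hx : rexp x ≤ E) (hy : rexp y ≤ E) :
    |rexp x - rexp y| ≤ |x - y| * E := by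
  wlog hxy : x ≤ y generalizing x y
  · rw [abs_sub_comm, abs_sub_comm x]
    exact this hy hx (le_of_not_ge hxy)
  rw [abs_sub_comm, abs_of_nonneg (sub_nonneg.2 (Real.exp_le_exp.2 hxy)), abs_sub_comm x,
    abs_of_nonneg (sub_nonneg.2 hxy)]
  calc rexp y - rexp x = (1 - rexp (x - y)) * rexp y := by rw [Real.exp_sub]; field_simp
    _ ≤ (y - x) * rexp y :=
        mul_le_mul_of_nonneg_right (by linarith [Real.add_one_le_exp (x - y)]) (Real.exp_pos y).le
    _ ≤ (y - x) * E := mul_le_mul_of_nonneg_left hy (sub_nonneg.2 hxy)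

/-- The weight `(1 + |x|)² exp (-ε |x|^α)` that controls the derivatives of the characteristic
functions in each variable. -/
noncomputable def expWeight (α ε x : ℝ) : ℝ := (1 + |x|) ^ 2 * rexp (-ε * |x| ^ α)

lemma expWeight_nonneg (α ε x : ℝ) : 0 ≤ expWeight α ε x := by unfold expWeight; positivity

lemma integrable_abs_rpow_mul_expWeight {a α ε : ℝ} (ha : -1 < a) (hα : 0 < α) (hε : 0 < ε) :
    Integrable fun x : ℝ => |x| ^ a * expWeight α ε x := by
  have hhalf : IntegrableOn (fun x : ℝ => x ^ a * rexp (-ε * x ^ α) +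
      2 * (x ^ (a + 1) * rexp (-ε * x ^ α)) + x ^ (a + 2) * rexp (-ε * x ^ α)) (Ioi 0) :=
    ((integrableOn_rpow_mul_exp_neg_mul_rpow ha hα hε).add
      ((integrableOn_rpow_mul_exp_neg_mul_rpow (by linarith) hα hε).const_mul 2)).add
      (integrableOn_rpow_mul_exp_neg_mul_rpow (by linarith) hα hε)
  refine (integrable_fun_norm_addHaar volume (E := ℝ)
    (f := fun x => x ^ a * ((1 + x) ^ 2 * rexp (-ε * x ^ α)))).2 ?_
  refine hhalf.congr_fun (fun x hx => ?_) measurableSet_Ioi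
  simp only [Module.finrank_self, Nat.sub_self, pow_zero, one_smul,
    Real.rpow_add (mem_Ioi.1 hx), Real.rpow_one, Real.rpow_two]
  ring

/-- `f` and `g` are `α`-integrable with `‖f‖_α^α, ‖g‖_α^α ≤ M`, and the exponent of the joint
characteristic function is bounded below by `ε (|u|^α + |v|^α)`; this is the quantitative
nondegeneracy that (A2) provides. -/
structure IsSpectralPair (α ε M : ℝ) {S : Type*} [MeasurableSpace S] (μ : Measure S)
    (f g : S → ℝ) : Prop where
  one_lt : 1 < α
  lt_two : α < 2
  pos : 0 < ε
  memLalpha_left : MemLalpha α μ f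
  memLalpha_right : MemLalpha α μ g
  integral_left_le : ∫ s, |f s| ^ α ∂μ ≤ M
  integral_right_le : ∫ s, |g s| ^ α ∂μ ≤ M
  le_charExponent : ∀ u v, ε * (|u| ^ α + |v| ^ α) ≤ charExponent α μ f g u v

namespace IsSpectralPair

variable {S : Type*} [MeasurableSpace S] {α ε M : ℝ} {μ : Measure S} {f g : S → ℝ}

lemma swap (h : IsSpectralPair α ε M μ f g) : IsSpectralPair α ε M μ g f where
  one_lt := h.one_lt
  lt_two := h.lt_two
  pos := h.pos
  memLalpha_left := h.memLalpha_right
  memLalpha_right := h.memLalpha_left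
  integral_left_le := h.integral_right_le
  integral_right_le := h.integral_left_le
  le_charExponent u v := by
    rw [charExponent_comm, add_comm]
    exact h.le_charExponent v u

lemma bound_nonneg (h : IsSpectralPair α ε M μ f g) : 0 ≤ M :=
  (integral_nonneg fun s => by positivity).trans h.integral_left_le

lemma abs_rpow_sub_one_le (h : IsSpectralPair α ε M μ f g) (x : ℝ) :
    |x| ^ (α - 1) ≤ 1 + |x| :=
  rpow_le_one_add (abs_nonneg x) (by linarith [h.one_lt]) (by linarith [h.lt_two])

lemma abs_charExponentDeriv_le (h : IsSpectralPair α ε M μ f g) (u v : ℝ) :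
    |charExponentDeriv α μ f g u v| ≤ 6 * M * (1 + |u|) * (1 + |v|) := by
  have hM := h.bound_nonneg
  have hdep : dep1s α μ g f ≤ M + M :=
    (dep1s_le h.one_lt.le h.memLalpha_right h.memLalpha_left).trans
      (add_le_add h.integral_right_le h.integral_left_le)
  have hholder := abs_charExponentDeriv_sub_le h.one_lt h.lt_two.le h.memLalpha_left
    h.memLalpha_right u v 0 0
  rw [charExponentDeriv_zero, sub_zero, sub_zero, sub_zero] at hholder
  have := dep1s_nonneg α μ g f
  calc |charExponentDeriv α μ f g u v|
      ≤ 2 * ((1 + |u|) * M + (1 + |v|) * (M + M)) := by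
        refine hholder.trans ?_
        gcongr
        exacts [h.abs_rpow_sub_one_le u, h.integral_left_le, h.abs_rpow_sub_one_le v]
    _ ≤ 2 * ((1 + |u|) * M * (1 + |v|) + (1 + |v|) * (M + M) * (1 + |u|)) := by
        refine mul_le_mul_of_nonneg_left (add_le_add ?_ ?_) zero_le_two <;>
          exact le_mul_of_one_le_right (by positivity) (by simp)
    _ = 6 * M * (1 + |u|) * (1 + |v|) := by ring

lemma abs_charExponentDeriv_axis_le (h : IsSpectralPair α ε M μ f g) (u : ℝ) :
    |charExponentDeriv α μ f g u 0| ≤ 6 * M * (1 + |u|) := by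
  simpa using h.abs_charExponentDeriv_le u 0

lemma jointChar_le (h : IsSpectralPair α ε M μ f g) (u v : ℝ) :
    jointChar α μ f g u v ≤ rexp (-ε * |u| ^ α) * rexp (-ε * |v| ^ α) := by
  rw [jointChar, ← Real.exp_add]
  exact Real.exp_le_exp.2 (by linarith [h.le_charExponent u v])

lemma productChar_le (h : IsSpectralPair α ε M μ f g) (u v : ℝ) :
    productChar α μ f g u v ≤ rexp (-ε * |u| ^ α) * rexp (-ε * |v| ^ α) := by
  have h0 : |(0 : ℝ)| ^ α = 0 := by
    rw [abs_zero, Real.zero_rpow (by linarith [h.one_lt])]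
  have hu := h.le_charExponent u 0
  have hv := h.le_charExponent 0 v
  rw [h0] at hu hv
  rw [productChar, ← Real.exp_add]
  exact Real.exp_le_exp.2 (by linarith)

lemma abs_jointChar_sub_productChar_le (h : IsSpectralPair α ε M μ f g) (u v : ℝ) :
    |jointChar α μ f g u v - productChar α μ f g u v| ≤
      4 * (1 + |u|) * (1 + |v|) * dep1s α μ f g *
        (rexp (-ε * |u| ^ α) * rexp (-ε * |v| ^ α)) := by
  have hα := h.one_lt
  have hN := abs_charExponent_sub_axes_le hα h.lt_two.le h.memLalpha_left h.memLalpha_right u v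
  have hdep := dep1s_nonneg α μ f g
  refine (abs_exp_sub_exp_le (h.jointChar_le u v) (h.productChar_le u v)).trans ?_
  gcongr
  calc _ = |charExponent α μ f g u v - charExponent α μ f g u 0 - charExponent α μ f g 0 v| := by
        rw [← abs_neg]; congr 1; ring
    _ ≤ 2 * α * |u| ^ (α - 1) * |v| * dep1s α μ f g := hN
    _ ≤ 2 * 2 * (1 + |u|) * (1 + |v|) * dep1s α μ f g := by
        gcongr
        exacts [h.lt_two.le, h.abs_rpow_sub_one_le u, by simp]
    _ = _ := by ring

lemma abs_charExponentDeriv_sub_axis_le (h : IsSpectralPair α ε M μ f g) (u v : ℝ) :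
    |charExponentDeriv α μ f g u v - charExponentDeriv α μ f g u 0| ≤
      2 * (1 + |v|) * dep1s α μ g f := by
  have hd := dep1s_nonneg α μ g f
  refine (_root_.abs_charExponentDeriv_sub_axis_le h.one_lt h.lt_two.le h.memLalpha_left
    h.memLalpha_right u v).trans ?_
  gcongr
  exact h.abs_rpow_sub_one_le v

lemma abs_derivProductGap_le (h : IsSpectralPair α ε M μ f g) (u v : ℝ) :
    |derivProductGap α μ f g u v| ≤
      (12 * M + 144 * M ^ 2) * dep1 α μ f g * (expWeight α ε u * expWeight α ε v) := by
  have hM := h.bound_nonneg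
  have hd := dep1s_nonneg α μ f g
  have hd' := dep1s_nonneg α μ g f
  set X := 1 + |u| with hX
  set Y := 1 + |v| with hY
  set E := rexp (-ε * |u| ^ α) * rexp (-ε * |v| ^ α) with hE
  set P := charExponentDeriv α μ f g u v
  set P₀ := charExponentDeriv α μ f g u 0
  set Q := charExponentDeriv α μ g f v u
  set Q₀ := charExponentDeriv α μ g f v 0
  have hX1 : 1 ≤ X := by simp [hX]
  have hY1 : 1 ≤ Y := by simp [hY]
  have hP : |P - P₀| ≤ 2 * Y * dep1s α μ g f := h.abs_charExponentDeriv_sub_axis_le u v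
  have hQ : |Q - Q₀| ≤ 2 * X * dep1s α μ f g := h.swap.abs_charExponentDeriv_sub_axis_le v u
  have he : |jointChar α μ f g u v| ≤ E :=
    (abs_of_nonneg (jointChar_nonneg α μ f g u v)).trans_le (h.jointChar_le u v)
  have hsplit : derivProductGap α μ f g u v =
      (P - P₀) * Q * jointChar α μ f g u v + P₀ * (Q - Q₀) * jointChar α μ f g u v +
        P₀ * Q₀ * (jointChar α μ f g u v - productChar α μ f g u v) := by
    rw [derivProductGap]; ring
  calc |derivProductGap α μ f g u v|
      ≤ 2 * Y * dep1s α μ g f * (6 * M * Y * X) * E + 6 * M * X * (2 * X * dep1s α μ f g) * E +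
          6 * M * X * (6 * M * Y) * (4 * X * Y * dep1s α μ f g * E) := by
        rw [hsplit]
        refine (abs_add_three _ _ _).trans ?_
        simp only [abs_mul]
        gcongr
        exacts [h.swap.abs_charExponentDeriv_le v u, h.abs_charExponentDeriv_axis_le u,
          h.abs_charExponentDeriv_axis_le u, h.swap.abs_charExponentDeriv_axis_le v,
          h.abs_jointChar_sub_productChar_le u v]
    _ = (12 * M * dep1s α μ g f * (X * Y ^ 2) + 12 * M * dep1s α μ f g * X ^ 2 +
          144 * M ^ 2 * dep1s α μ f g * (X ^ 2 * Y ^ 2)) * E := by ring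
    _ ≤ (12 * M * dep1s α μ g f * (X ^ 2 * Y ^ 2) + 12 * M * dep1s α μ f g * (X ^ 2 * Y ^ 2) +
          144 * M ^ 2 * (dep1s α μ f g + dep1s α μ g f) * (X ^ 2 * Y ^ 2)) * E := by
        gcongr
        · exact le_self_pow₀ hX1 two_ne_zero
        · exact le_mul_of_one_le_right (by positivity) (one_le_pow₀ hY1)
        · linarith
    _ = _ := by rw [dep1, expWeight, expWeight, hE]; ring

lemma abs_D1_le (h : IsSpectralPair α ε M μ f g) (u v : ℝ) :
    |D1 α μ f g u v| ≤ 24 * M * (1 + |u|) * (1 + |v|) := by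
  have hα := h.one_lt
  have hM := h.bound_nonneg
  have hterm : ∀ a b : ℝ, |a| ≤ 6 * M * (1 + |u|) * (1 + |v|) → 0 ≤ b → b ≤ 1 →
      |a * b| ≤ 6 * M * (1 + |u|) * (1 + |v|) := fun a b ha hb0 hb1 => by
    rw [abs_mul, abs_of_nonneg hb0]
    exact (mul_le_of_le_one_right (abs_nonneg a) hb1).trans ha
  have hjoint := hterm _ _ (h.abs_charExponentDeriv_le u v) (jointChar_nonneg α μ f g u v)
    (jointChar_le_one α μ f g u v)
  have hprod := hterm (charExponentDeriv α μ f g u 0) _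
    ((h.abs_charExponentDeriv_axis_le u).trans
      (le_mul_of_one_le_right (by positivity) (by simp)))
    (productChar_nonneg α μ f g u v) (productChar_le_one α μ f g u v)
  rw [D1_eq (by linarith), abs_mul, abs_of_nonneg (by linarith)]
  calc _ ≤ 2 * (6 * M * (1 + |u|) * (1 + |v|) + 6 * M * (1 + |u|) * (1 + |v|)) := by
        gcongr
        exacts [h.lt_two.le, (abs_sub _ _).trans (add_le_add hprod hjoint)]
    _ = _ := by ring

end IsSpectralPair

lemma A2.isSpectralPair {S : Type*} [MeasurableSpace S] {α ε : ℝ} {μ : Measure S} {f g : S → ℝ}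
    (hA2 : A2 α ε μ f g) (hα1 : 1 < α) (hα2 : α < 2) (hε : 0 < ε) (hf : MemLalpha α μ f)
    (hg : MemLalpha α μ g) (hf0 : 0 < nrm α μ f) (hg0 : 0 < nrm α μ g) :
    IsSpectralPair α (ε * min (nrm α μ f ^ α) (nrm α μ g ^ α)) (max (nrm α μ f ^ α) (nrm α μ g ^ α))
      μ f g where
  one_lt := hα1
  lt_two := hα2
  pos := mul_pos hε (lt_min (rpow_pos_of_pos hf0 α) (rpow_pos_of_pos hg0 α))
  memLalpha_left := hf
  memLalpha_right := hg
  integral_left_le := (nrm_rpow (one_pos.trans hα1) μ f).symm.trans_le (le_max_left _ _)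
  integral_right_le := (nrm_rpow (one_pos.trans hα1) μ g).symm.trans_le (le_max_right _ _)
  le_charExponent u v := by
    rw [← nrm_linear_comb_rpow (one_pos.trans hα1), mul_assoc, mul_add, mul_comm (min _ _),
      mul_comm (min _ _)]
    exact (mul_le_mul_of_nonneg_left (add_le_add
      (mul_le_mul_of_nonneg_left (min_le_left _ _) (by positivity))
      (mul_le_mul_of_nonneg_left (min_le_right _ _) (by positivity))) hε.le).trans (hA2 u v)

/-! ### Integration by parts against test functions -/

lemma integrable_mul_of_abs_le_one_add_pow {n : ℕ} {F : ℝ → ℂ} {r : ℝ → ℝ} {C : ℝ}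
    (hF : Integrable fun v => F v * ((1 + |v| : ℝ) : ℂ) ^ n) (hr : Continuous r)
    (hrC : ∀ v, |r v| ≤ C * (1 + |v|) ^ n) : Integrable fun v => F v * (r v : ℂ) := by
  have hpos : ∀ v : ℝ, 0 < (1 + |v|) ^ n := fun v => by positivity
  have hcont : Continuous fun v : ℝ => (((1 + |v|) ^ n)⁻¹ * r v : ℝ) :=
    (Continuous.inv₀ (by fun_prop) fun v => (hpos v).ne').mul hr
  refine (hF.mul_bdd (c := C) (Complex.continuous_ofReal.comp hcont).aestronglyMeasurable
    (Eventually.of_forall fun v => ?_)).congr (Eventually.of_forall fun v => ?_)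
  · rw [Function.comp_apply, Complex.norm_real, Real.norm_eq_abs, abs_mul,
      abs_of_pos (inv_pos.2 (hpos v)), inv_mul_le_iff₀ (hpos v), mul_comm]
    exact hrC v
  · have : ((1 + |v| : ℝ) : ℂ) ^ n ≠ 0 := by exact_mod_cast (hpos v).ne'
    simp only [Function.comp_apply]
    push_cast at this ⊢
    field_simp

/-- The mass of the kernel that arises from integrating `|v| ^ (-α / 2)` against the second
derivative of the exponent. -/
noncomputable def affineKernelMass (α : ℝ) : ℝ := ∫ w : ℝ, |w| ^ (-(α / 2)) * |1 + w| ^ (α - 2)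

lemma affineKernelMass_nonneg (α : ℝ) : 0 ≤ affineKernelMass α :=
  integral_nonneg fun w => by positivity

section Fibre

variable {α K : ℝ} {H H' : ℝ → ℂ}

lemma norm_integral_deriv_mul_spow_affine_le (hα : 1 < α) (hα2 : α < 2) {c g : ℝ} (hc : c ≠ 0)
    (hg : g ≠ 0) (hd : ∀ v, HasDerivAt H (H' v) v)
    (hH : Integrable fun v => H v * ((1 + |v| : ℝ) : ℂ) ^ 1)
    (hH' : Integrable fun v => H' v * ((1 + |v| : ℝ) : ℂ) ^ 1)
    (hK : ∀ v, v ≠ 0 → ‖H v‖ ≤ K * |v| ^ (-(α / 2))) :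
    ‖∫ v, H' v * (spow (c + v * g) (α - 1) : ℂ)‖ ≤
      (α - 1) * |g| * (K * (affineKernelMass α * (|c| ^ (α / 2 - 1) * |g| ^ (α / 2 - 1)))) := by
  have hgrowth : ∀ v, |spow (c + v * g) (α - 1)| ≤ (1 + |c| + |g|) * (1 + |v|) ^ 1 := fun v => by
    rw [abs_spow (by linarith)]
    have hle := rpow_le_one_add (abs_nonneg (c + v * g)) (by linarith : 0 ≤ α - 1) (by linarith)
    have htri := abs_add_le c (v * g)
    rw [abs_mul] at htri
    nlinarith [mul_nonneg (abs_nonneg c) (abs_nonneg v), abs_nonneg v, abs_nonneg g]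
  have hspow : Continuous fun v => spow (c + v * g) (α - 1) :=
    (continuous_spow (by linarith)).comp (by fun_prop)
  have hker := (integrable_abs_rpow_mul_abs_affine_rpow (a := -(α / 2)) (b := α - 2)
    (by linarith) (by linarith) (by linarith) (by linarith) (by linarith) hc hg).const_mul K
  have hle : ∀ᵐ v : ℝ, ‖H v * ((|c + v * g| ^ (α - 1 - 1) : ℝ) : ℂ)‖ ≤
      K * (|v| ^ (-(α / 2)) * |c + v * g| ^ (α - 2)) := by
    filter_upwards [Measure.ae_ne volume 0] with v hv
    rw [norm_mul, Complex.norm_real, Real.norm_of_nonneg (by positivity), ← mul_assoc, sub_sub,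
      one_add_one_eq_two]
    exact mul_le_mul_of_nonneg_right (hK v hv) (by positivity)
  have hcont : Continuous H := continuous_iff_continuousAt.2 fun v => (hd v).continuousAt
  have hi : Integrable fun v => H v * ((|c + v * g| ^ (α - 1 - 1) : ℝ) : ℂ) :=
    hker.mono' (hcont.aestronglyMeasurable.mul
      (by fun_prop : Measurable _).aestronglyMeasurable) hle
  rw [integral_deriv_mul_spow_affine (by linarith) hg hd
    (integrable_mul_of_abs_le_one_add_pow hH' hspow hgrowth) hi
    (integrable_mul_of_abs_le_one_add_pow hH hspow hgrowth), norm_mul, norm_neg, Complex.norm_real,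
    Real.norm_eq_abs, abs_mul, abs_of_pos (by linarith : 0 < α - 1)]
  gcongr
  refine (norm_integral_le_of_norm_le hker hle).trans_eq ?_
  rw [integral_const_mul, integral_abs_rpow_mul_abs_affine_rpow hc hg, affineKernelMass,
    show -(α / 2) + (α - 2) + 1 = α / 2 - 1 by ring, neg_neg]

lemma norm_integral_deriv_mul_spow_linear_comb_le (hα : 1 < α) (hα2 : α < 2) {u : ℝ} (hu : u ≠ 0)
    (x y : ℝ) (hd : ∀ v, HasDerivAt H (H' v) v)
    (hH : Integrable fun v => H v * ((1 + |v| : ℝ) : ℂ) ^ 1)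
    (hH' : Integrable fun v => H' v * ((1 + |v| : ℝ) : ℂ) ^ 1)
    (hK : ∀ v, v ≠ 0 → ‖H v‖ ≤ K * |v| ^ (-(α / 2))) :
    ‖∫ v, H' v * ((spow (u * x + v * y) (α - 1) * x : ℝ) : ℂ)‖ ≤
      (α - 1) * K * affineKernelMass α * |u| ^ (α / 2 - 1) * |x * y| ^ (α / 2) := by
  have hpow : |(0 : ℝ)| ^ (α / 2) = 0 := by rw [abs_zero, Real.zero_rpow (by linarith)]
  have hint : ∀ F : ℝ → ℂ, Integrable (fun v => F v * ((1 + |v| : ℝ) : ℂ) ^ 1) → Integrable F :=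
    fun F hF => by
      simpa using integrable_mul_of_abs_le_one_add_pow (r := fun _ => 1) (C := 1) hF
        continuous_const (by simp)
  simp only [Complex.ofReal_mul, ← mul_assoc, integral_mul_const]
  rcases eq_or_ne x 0 with rfl | hx
  · rw [zero_mul, hpow]
    simp
  rcases eq_or_ne y 0 with rfl | hy
  · rw [mul_zero, hpow]
    simp only [mul_zero, add_zero, integral_mul_const]
    simp [integral_eq_zero_of_hasDerivAt_of_integrable hd (hint _ hH') (hint _ hH)]
  · rw [norm_mul, Complex.norm_real, Real.norm_eq_abs]
    refine (mul_le_mul_of_nonneg_right (norm_integral_deriv_mul_spow_affine_le hα hα2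
      (mul_ne_zero hu hx) hy hd hH hH' hK) (abs_nonneg x)).trans_eq ?_
    rw [abs_mul, abs_mul, Real.mul_rpow (abs_nonneg u) (abs_nonneg x),
      Real.mul_rpow (abs_nonneg x) (abs_nonneg y), Real.rpow_sub_one (abs_ne_zero.2 hx),
      Real.rpow_sub_one (abs_ne_zero.2 hy)]
    field_simp

variable {S : Type*} [MeasurableSpace S] {μ : Measure S} {f g : S → ℝ}

lemma integrable_prod_mul_spow_linear_comb (hα : 1 < α) (hα2 : α ≤ 2) (hf : MemLalpha α μ f)
    (hg : MemLalpha α μ g) (u : ℝ)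
    (hH' : Integrable fun v => H' v * ((1 + |v| : ℝ) : ℂ) ^ 1) :
    Integrable (fun z : ℝ × S =>
      H' z.1 * ((spow (u * f z.2 + z.1 * g z.2) (α - 1) * f z.2 : ℝ) : ℂ)) (volume.prod μ) := by
  have hi : Integrable H' := by
    simpa using integrable_mul_of_abs_le_one_add_pow (r := fun _ => 1) (C := 1) hH'
      continuous_const (by simp)
  have hi' : Integrable fun v => H' v * ((|v| ^ (α - 1) : ℝ) : ℂ) :=
    integrable_mul_of_abs_le_one_add_pow (C := 1) hH'
      (continuous_abs.rpow_const fun _ => Or.inr (by linarith)) fun v => by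
        rw [abs_of_nonneg (by positivity), pow_one, one_mul]
        exact rpow_le_one_add (abs_nonneg v) (by linarith) (by linarith)
  have hdom := ((hi.norm.mul_const (2 * |u| ^ (α - 1))).mul_prod hf.2).add
    ((hi'.norm.const_mul 2).mul_prod (hg.integrable_dep1s hα.le hf))
  refine hdom.mono' ?_ (Eventually.of_forall fun z => ?_)
  · have hspow : AEStronglyMeasurable (fun z : ℝ × S => spow (u * f z.2 + z.1 * g z.2) (α - 1))
        (volume.prod μ) :=
      (continuous_spow (sub_pos.2 hα)).comp_aestronglyMeasurable
        ((hf.1.comp_snd.const_mul u).add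
          (measurable_fst.aestronglyMeasurable.mul hg.1.comp_snd))
    exact hi.1.comp_fst.mul
      (Complex.continuous_ofReal.comp_aestronglyMeasurable (hspow.mul hf.1.comp_snd))
  · have h := abs_spow_linear_comb_sub_mul_le hα hα2 (f z.2) (g z.2) u z.1 0 0
    simp only [zero_mul, add_zero, spow_zero_left, sub_zero] at h
    rw [norm_mul, Complex.norm_real, Real.norm_eq_abs]
    refine (mul_le_mul_of_nonneg_left h (norm_nonneg _)).trans_eq ?_
    rw [Pi.add_apply, norm_mul, Complex.norm_real, Real.norm_of_nonneg (by positivity)]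
    ring

lemma norm_integral_deriv_mul_charExponentDeriv_le [SFinite μ] (hα : 1 < α) (hα2 : α < 2)
    (hf : MemLalpha α μ f) (hg : MemLalpha α μ g) {u : ℝ} (hu : u ≠ 0)
    (hd : ∀ v, HasDerivAt H (H' v) v)
    (hH : Integrable fun v => H v * ((1 + |v| : ℝ) : ℂ) ^ 1)
    (hH' : Integrable fun v => H' v * ((1 + |v| : ℝ) : ℂ) ^ 1)
    (hK : ∀ v, v ≠ 0 → ‖H v‖ ≤ K * |v| ^ (-(α / 2))) :
    ‖∫ v, H' v * (charExponentDeriv α μ f g u v : ℂ)‖ ≤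
      (α - 1) * K * affineKernelMass α * |u| ^ (α / 2 - 1) * dep2 α μ f g := by
  have hfubini : ∫ v, H' v * (charExponentDeriv α μ f g u v : ℂ) =
      ∫ s, (∫ v, H' v * ((spow (u * f s + v * g s) (α - 1) * f s : ℝ) : ℂ)) ∂μ := by
    rw [← integral_integral_swap (integrable_prod_mul_spow_linear_comb hα hα2.le hf hg u hH')]
    congr with v
    rw [integral_const_mul, integral_complex_ofReal, charExponentDeriv]
  rw [hfubini, dep2, ← integral_const_mul]
  exact norm_integral_le_of_norm_le ((hf.integrable_dep2 (by linarith) hg).const_mul _)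
    (Eventually.of_forall fun s => norm_integral_deriv_mul_spow_linear_comb_le hα hα2 hu (f s)
      (g s) hd hH hH' hK)

end Fibre

/-- The properties of the mollified Fourier transform `A` of an interval of length `t` that enter
the covariance estimate: it decays rapidly together with its derivative, and the two sides of the
bound `min t (2 / |u|)` are the trivial and the oscillatory bound. -/
structure IsCutoffTransform (t : ℝ) (A : ℝ → ℂ) : Prop where
  pos : 0 < t
  differentiable : Differentiable ℝ A
  integrable_mul : Integrable fun u => A u * ((1 + |u| : ℝ) : ℂ) ^ 2
  integrable_deriv_mul : Integrable fun u => deriv A u * ((1 + |u| : ℝ) : ℂ) ^ 2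
  norm_le : ∀ u, u ≠ 0 → ‖A u‖ ≤ min t (2 / |u|)

namespace IsCutoffTransform

variable {t : ℝ} {A : ℝ → ℂ}

lemma norm_le_rpow (hA : IsCutoffTransform t A) {θ : ℝ} (h0 : 0 ≤ θ) (h1 : θ ≤ 1) {u : ℝ}
    (hu : u ≠ 0) : ‖A u‖ ≤ 2 * t ^ (1 - θ) * |u| ^ (-θ) := by
  have ht := hA.pos
  have hu' : 0 < |u| := abs_pos.2 hu
  calc ‖A u‖ ≤ t ^ (1 - θ) * (2 / |u|) ^ θ :=
        (hA.norm_le u hu).trans (min_le_rpow_mul_rpow ht (by positivity) h0 h1)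
    _ = t ^ (1 - θ) * (2 ^ θ * |u| ^ (-θ)) := by
        rw [Real.div_rpow zero_le_two hu'.le, Real.rpow_neg hu'.le, div_eq_mul_inv]
    _ ≤ t ^ (1 - θ) * (2 ^ (1 : ℝ) * |u| ^ (-θ)) := by
        gcongr
        exact one_le_two
    _ = 2 * t ^ (1 - θ) * |u| ^ (-θ) := by rw [Real.rpow_one]; ring

lemma integrable_mul_of_abs_le (hA : IsCutoffTransform t A) {r : ℝ → ℝ} (hr : Continuous r) {C : ℝ}
    (hC : ∀ v, |r v| ≤ C * (1 + |v|) ^ 2) : Integrable fun v => A v * (r v : ℂ) :=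
  integrable_mul_of_abs_le_one_add_pow hA.integrable_mul hr hC

lemma integrable_deriv_mul_of_abs_le (hA : IsCutoffTransform t A) {r : ℝ → ℝ} (hr : Continuous r)
    {C : ℝ} (hC : ∀ v, |r v| ≤ C * (1 + |v|) ^ 2) :
    Integrable fun v => deriv A v * (r v : ℂ) :=
  integrable_mul_of_abs_le_one_add_pow hA.integrable_deriv_mul hr hC

lemma integrable (hA : IsCutoffTransform t A) : Integrable A := by
  simpa using hA.integrable_mul_of_abs_le (r := fun _ => 1) (C := 1) continuous_const
    fun v => by simpa only [abs_one, one_mul] using one_le_pow₀ (by simp : 1 ≤ 1 + |v|)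

lemma integrable_deriv (hA : IsCutoffTransform t A) : Integrable (deriv A) := by
  simpa using hA.integrable_deriv_mul_of_abs_le (r := fun _ => 1) (C := 1) continuous_const
    fun v => by simpa only [abs_one, one_mul] using one_le_pow₀ (by simp : 1 ≤ 1 + |v|)

lemma integrable_norm_mul_rpow (hA : IsCutoffTransform t A) {a : ℝ} (ha : -1 < a) (ha0 : a < 0) :
    Integrable fun u => ‖A u‖ * |u| ^ a := by
  refine (integrable_min_two_div_mul_abs_rpow hA.pos ha ha0).mono'
    (hA.differentiable.continuous.norm.aestronglyMeasurable.mul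
      (by fun_prop : Measurable _).aestronglyMeasurable) ?_
  filter_upwards [Measure.ae_ne volume 0] with u hu
  rw [Real.norm_of_nonneg (by positivity)]
  exact mul_le_mul_of_nonneg_right (hA.norm_le u hu) (by positivity)

lemma integral_norm_mul_rpow_le (hA : IsCutoffTransform t A) {a : ℝ} (ha : -1 < a) (ha0 : a < 0) :
    ∫ u, ‖A u‖ * |u| ^ a ≤ (∫ x : ℝ, min 1 (2 / |x|) * |x| ^ a) * t ^ (-a) := by
  rw [← integral_min_two_div_mul_abs_rpow hA.pos]
  refine integral_mono_ae (hA.integrable_norm_mul_rpow ha ha0)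
    (integrable_min_two_div_mul_abs_rpow hA.pos ha ha0) ?_
  filter_upwards [Measure.ae_ne volume 0] with u hu
  exact mul_le_mul_of_nonneg_right (hA.norm_le u hu) (by positivity)

variable {e e' : ℝ → ℝ} {C : ℝ}

lemma hasDerivAt_mul (hA : IsCutoffTransform t A) (he : ∀ v, HasDerivAt e (e' v) v) (v : ℝ) :
    HasDerivAt (fun w => A w * (e w : ℂ)) (deriv A v * (e v : ℂ) + A v * (e' v : ℂ)) v :=
  (hA.differentiable v).hasDerivAt.mul (he v).ofReal_comp

lemma integral_deriv_mul_eq_neg (hA : IsCutoffTransform t A) (he : ∀ v, HasDerivAt e (e' v) v)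
    (he' : Continuous e') (he1 : ∀ v, |e v| ≤ 1) (hC : ∀ v, |e' v| ≤ C * (1 + |v|)) :
    ∫ v, deriv A v * (e v : ℂ) = -∫ v, A v * (e' v : ℂ) := by
  have hcont : Continuous e := continuous_iff_continuousAt.2 fun v => (he v).continuousAt
  have hsq : ∀ v : ℝ, 1 ≤ 1 + |v| := fun v => by simp
  have hC0 : 0 ≤ C := by simpa using (abs_nonneg (e' 0)).trans (hC 0)
  have he1' : ∀ v, |e v| ≤ 1 * (1 + |v|) ^ 2 := fun v => by
    rw [one_mul]
    exact (he1 v).trans (one_le_pow₀ (hsq v))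
  have hC' : ∀ v, |e' v| ≤ C * (1 + |v|) ^ 2 := fun v =>
    (hC v).trans (mul_le_mul_of_nonneg_left (le_self_pow₀ (hsq v) two_ne_zero) hC0)
  rw [eq_neg_iff_add_eq_zero, ← integral_add (hA.integrable_deriv_mul_of_abs_le hcont he1')
    (hA.integrable_mul_of_abs_le he' hC')]
  exact integral_eq_zero_of_hasDerivAt_of_integrable (hA.hasDerivAt_mul he)
    ((hA.integrable_deriv_mul_of_abs_le hcont he1').add (hA.integrable_mul_of_abs_le he' hC'))
    (hA.integrable_mul_of_abs_le hcont he1')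

lemma integrable_deriv_mul_mul (hA : IsCutoffTransform t A) (he : ∀ v, HasDerivAt e (e' v) v)
    (he' : Continuous e') (he1 : ∀ v, |e v| ≤ 1) (hC : ∀ v, |e' v| ≤ C * (1 + |v|)) :
    Integrable fun v => deriv (fun w => A w * (e w : ℂ)) v * ((1 + |v| : ℝ) : ℂ) ^ 1 := by
  have hcont : Continuous e := continuous_iff_continuousAt.2 fun v => (he v).continuousAt
  have habs : ∀ v : ℝ, 0 ≤ 1 + |v| := fun v => by positivity
  have h1 := hA.integrable_deriv_mul_of_abs_le (r := fun v => e v * (1 + |v|)) (C := 1)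
    (by fun_prop) fun v => by
      rw [abs_mul, abs_of_nonneg (habs v)]
      gcongr
      · exact he1 v
      · exact le_self_pow₀ (by simp) two_ne_zero
  have h2 := hA.integrable_mul_of_abs_le (r := fun v => e' v * (1 + |v|)) (C := C)
    (by fun_prop) fun v => by
      rw [abs_mul, abs_of_nonneg (habs v), pow_two, ← mul_assoc]
      exact mul_le_mul_of_nonneg_right (hC v) (habs v)
  refine (h1.add h2).congr (Eventually.of_forall fun v => ?_)
  simp only [Pi.add_apply, (hA.hasDerivAt_mul he v).deriv]
  push_cast
  ring

end IsCutoffTransform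

/-! ### The covariance estimate for test functions -/

lemma continuous_derivProductGap {S : Type*} [MeasurableSpace S] {α : ℝ} {μ : Measure S}
    {f g : S → ℝ} (hα : 1 < α) (hα2 : α ≤ 2) (hf : MemLalpha α μ f) (hg : MemLalpha α μ g) :
    Continuous fun z : ℝ × ℝ => derivProductGap α μ f g z.1 z.2 := by
  have hP := continuous_charExponentDeriv hα hα2 hf hg
  have hQ := continuous_charExponentDeriv hα hα2 hg hf
  exact ((hP.mul (hQ.comp continuous_swap)).mul (continuous_jointChar hα hα2 hf hg)).sub
    (((hP.comp (continuous_fst.prodMk continuous_const)).mul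
      (hQ.comp (continuous_snd.prodMk continuous_const))).mul
        (continuous_productChar hα hα2 hf hg))

lemma expWeight_le_one_add_sq {ε : ℝ} (hε : 0 ≤ ε) (α x : ℝ) : expWeight α ε x ≤ (1 + |x|) ^ 2 :=
  mul_le_of_le_one_right (by positivity) <|
    Real.exp_le_one_iff.2 (mul_nonpos_of_nonpos_of_nonneg (by linarith) (by positivity))

lemma continuous_expWeight {α : ℝ} (hα : 0 ≤ α) (ε : ℝ) : Continuous (expWeight α ε) := by
  have : Continuous fun x : ℝ => |x| ^ α := continuous_abs.rpow_const fun _ => Or.inr hα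
  unfold expWeight
  fun_prop

/-- The mass of `expWeight` against the kernel `|x| ^ (-α / 2)`. -/
noncomputable def expWeightMass (α ε : ℝ) : ℝ := ∫ x : ℝ, |x| ^ (-(α / 2)) * expWeight α ε x

lemma expWeightMass_nonneg (α ε : ℝ) : 0 ≤ expWeightMass α ε :=
  integral_nonneg fun x => mul_nonneg (by positivity) (expWeight_nonneg α ε x)

namespace IsCutoffTransform

variable {t α ε : ℝ} {A : ℝ → ℂ}

lemma integrable_norm_mul_expWeight (hA : IsCutoffTransform t A) (hα : 0 ≤ α) (hε : 0 ≤ ε) :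
    Integrable fun u => ‖A u‖ * expWeight α ε u := by
  refine (hA.integrable_mul_of_abs_le (C := 1) (continuous_expWeight hα ε) fun v => ?_).norm.congr
    (Eventually.of_forall fun u => ?_)
  · rw [abs_of_nonneg (expWeight_nonneg α ε v), one_mul]
    exact expWeight_le_one_add_sq hε α v
  · simp only [norm_mul, Complex.norm_real, Real.norm_of_nonneg (expWeight_nonneg α ε u)]

lemma integral_norm_mul_expWeight_le (hA : IsCutoffTransform t A) (hα : 0 < α) (hα2 : α < 2)
    (hε : 0 < ε) :
    ∫ u, ‖A u‖ * expWeight α ε u ≤ 2 * t ^ (1 - α / 2) * expWeightMass α ε := by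
  rw [expWeightMass, ← integral_const_mul]
  refine integral_mono_ae (hA.integrable_norm_mul_expWeight hα.le hε.le)
    ((integrable_abs_rpow_mul_expWeight (by linarith) hα hε).const_mul _) ?_
  filter_upwards [Measure.ae_ne volume 0] with u hu
  rw [← mul_assoc]
  exact mul_le_mul_of_nonneg_right (hA.norm_le_rpow (by linarith) (by linarith) hu)
    (expWeight_nonneg α ε u)

end IsCutoffTransform

namespace IsSpectralPair

variable {α ε M t t' : ℝ} {S : Type*} [MeasurableSpace S] {μ : Measure S} {f g : S → ℝ}
  {A B : ℝ → ℂ}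

lemma abs_mul_jointChar_le (h : IsSpectralPair α ε M μ f g) (u v : ℝ) :
    |-α * (charExponentDeriv α μ g f v u * jointChar α μ f g u v)| ≤
      2 * (6 * M * (1 + |u|)) * (1 + |v|) := by
  have hα := h.one_lt
  have hM := h.bound_nonneg
  have hJ := jointChar_nonneg α μ f g u v
  rw [abs_mul, abs_mul, abs_neg, abs_of_pos (by linarith : 0 < α), abs_of_nonneg hJ]
  calc _ ≤ 2 * (6 * M * (1 + |v|) * (1 + |u|) * 1) := by
        gcongr
        exacts [h.lt_two.le, h.swap.abs_charExponentDeriv_le v u, jointChar_le_one α μ f g u v]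
    _ = _ := by ring

lemma abs_mul_productChar_le (h : IsSpectralPair α ε M μ f g) (u v : ℝ) :
    |-α * (charExponentDeriv α μ g f v 0 * productChar α μ f g u v)| ≤
      2 * (6 * M) * (1 + |v|) := by
  have hα := h.one_lt
  have hM := h.bound_nonneg
  have hP := productChar_nonneg α μ f g u v
  rw [abs_mul, abs_mul, abs_neg, abs_of_pos (by linarith : 0 < α), abs_of_nonneg hP]
  calc _ ≤ 2 * (6 * M * (1 + |v|) * 1) := by
        gcongr
        exacts [h.lt_two.le, h.swap.abs_charExponentDeriv_axis_le v, productChar_le_one α μ f g u v]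
    _ = _ := by ring

lemma integrable_deriv_mul_jointChar (h : IsSpectralPair α ε M μ f g)
    (hB : IsCutoffTransform t B) (u : ℝ) :
    Integrable fun v =>
      deriv (fun w => B w * (jointChar α μ f g u w : ℂ)) v * ((1 + |v| : ℝ) : ℂ) ^ 1 := by
  have hQ := continuous_charExponentDeriv h.one_lt h.lt_two.le h.memLalpha_right h.memLalpha_left
  have he := continuous_jointChar h.one_lt h.lt_two.le h.memLalpha_left h.memLalpha_right
  refine hB.integrable_deriv_mul_mul
    (hasDerivAt_jointChar_right h.one_lt h.lt_two.le h.memLalpha_left h.memLalpha_right u)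
    (continuous_const.mul <| (hQ.comp (continuous_id.prodMk continuous_const)).mul
      (he.comp (continuous_const.prodMk continuous_id))) (fun v => ?_) (h.abs_mul_jointChar_le u)
  rw [abs_of_nonneg (jointChar_nonneg α μ f g u v)]
  exact jointChar_le_one α μ f g u v

lemma integrable_deriv_mul_productChar (h : IsSpectralPair α ε M μ f g)
    (hB : IsCutoffTransform t B) (u : ℝ) :
    Integrable (deriv fun w => B w * (productChar α μ f g u w : ℂ)) := by
  have hQ := continuous_charExponentDeriv h.one_lt h.lt_two.le h.memLalpha_right h.memLalpha_left
  have he := continuous_productChar h.one_lt h.lt_two.le h.memLalpha_left h.memLalpha_right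
  have hweighted := hB.integrable_deriv_mul_mul
    (hasDerivAt_productChar_right h.one_lt h.lt_two.le h.memLalpha_left h.memLalpha_right u)
    (continuous_const.mul <| (hQ.comp (continuous_id.prodMk continuous_const)).mul
      (he.comp (continuous_const.prodMk continuous_id)))
    (fun v => (abs_of_nonneg (productChar_nonneg α μ f g u v)).trans_le
      (productChar_le_one α μ f g u v)) (h.abs_mul_productChar_le u)
  simpa using integrable_mul_of_abs_le_one_add_pow (r := fun _ => 1) (C := 1) hweighted
    continuous_const (by simp)

lemma integral_deriv_mul_productChar (h : IsSpectralPair α ε M μ f g)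
    (hB : IsCutoffTransform t B) (u : ℝ) :
    ∫ v, deriv (fun w => B w * (productChar α μ f g u w : ℂ)) v = 0 := by
  have hd := hB.hasDerivAt_mul
    (hasDerivAt_productChar_right h.one_lt h.lt_two.le h.memLalpha_left h.memLalpha_right u)
  have he := continuous_productChar h.one_lt h.lt_two.le h.memLalpha_left h.memLalpha_right
  refine integral_eq_zero_of_hasDerivAt_of_integrable
    (fun v => (hd v).differentiableAt.hasDerivAt) (h.integrable_deriv_mul_productChar hB u)
    (hB.integrable_mul_of_abs_le (C := 1) (he.comp (continuous_const.prodMk continuous_id))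
      fun v => ?_)
  rw [abs_of_nonneg (productChar_nonneg α μ f g u v), one_mul]
  exact (productChar_le_one α μ f g u v).trans (one_le_pow₀ (by simp))

lemma abs_derivProductGap_le_sq (h : IsSpectralPair α ε M μ f g) (u v : ℝ) :
    |derivProductGap α μ f g u v| ≤
      (12 * M + 144 * M ^ 2) * dep1 α μ f g * expWeight α ε u * (1 + |v|) ^ 2 := by
  have hM := h.bound_nonneg
  have hd := dep1_nonneg α μ f g
  have hw := expWeight_nonneg α ε u
  refine (h.abs_derivProductGap_le u v).trans ?_
  rw [← mul_assoc]
  gcongr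
  exact expWeight_le_one_add_sq h.pos.le α v

lemma integrable_mul_derivProductGap (h : IsSpectralPair α ε M μ f g)
    (hB : IsCutoffTransform t B) (u : ℝ) :
    Integrable fun v => B v * (derivProductGap α μ f g u v : ℂ) :=
  hB.integrable_mul_of_abs_le
    ((continuous_derivProductGap h.one_lt h.lt_two.le h.memLalpha_left h.memLalpha_right).comp
      (continuous_const.prodMk continuous_id)) (h.abs_derivProductGap_le_sq u)

-- The integrand on the left differs from the one on the right by a multiple of the derivative of
-- `B` times the product characteristic function, which integrates to zero.
lemma integral_deriv_mul_D1 (h : IsSpectralPair α ε M μ f g) (hB : IsCutoffTransform t B) (u : ℝ) :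
    ∫ v, deriv B v * (D1 α μ f g u v : ℂ) =
      -(α : ℂ) * (∫ v, deriv (fun w => B w * (jointChar α μ f g u w : ℂ)) v *
          (charExponentDeriv α μ f g u v : ℂ)) -
        (α : ℂ) ^ 2 * ∫ v, B v * (derivProductGap α μ f g u v : ℂ) := by
  have hα := h.one_lt
  have hP : Continuous fun v => charExponentDeriv α μ f g u v :=
    (continuous_charExponentDeriv hα h.lt_two.le h.memLalpha_left h.memLalpha_right).comp
      (continuous_const.prodMk continuous_id)
  have hjoint := integrable_mul_of_abs_le_one_add_pow (h.integrable_deriv_mul_jointChar hB u) hP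
    fun v => by rw [pow_one]; exact h.abs_charExponentDeriv_le u v
  have hgap := h.integrable_mul_derivProductGap hB u
  have hprod := h.integrable_deriv_mul_productChar hB u
  have hpoint : ∀ v, deriv B v * (D1 α μ f g u v : ℂ) =
      -(α : ℂ) * (deriv (fun w => B w * (jointChar α μ f g u w : ℂ)) v *
          (charExponentDeriv α μ f g u v : ℂ)) -
        (α : ℂ) ^ 2 * (B v * (derivProductGap α μ f g u v : ℂ)) +
        (α * charExponentDeriv α μ f g u 0 : ℂ) *
          deriv (fun w => B w * (productChar α μ f g u w : ℂ)) v := fun v => by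
    rw [(hB.hasDerivAt_mul (hasDerivAt_jointChar_right hα h.lt_two.le h.memLalpha_left
        h.memLalpha_right u) v).deriv,
      (hB.hasDerivAt_mul (hasDerivAt_productChar_right hα h.lt_two.le h.memLalpha_left
        h.memLalpha_right u) v).deriv, D1_eq (by linarith), derivProductGap]
    push_cast
    ring
  have hsub := (hjoint.const_mul (-(α : ℂ))).sub (hgap.const_mul ((α : ℂ) ^ 2))
  rw [integral_congr_ae (Eventually.of_forall hpoint)]
  refine (integral_add hsub (hprod.const_mul _)).trans ?_
  rw [integral_const_mul, h.integral_deriv_mul_productChar hB u, mul_zero, add_zero]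
  refine (integral_sub (hjoint.const_mul _) (hgap.const_mul _)).trans ?_
  rw [integral_const_mul, integral_const_mul]

lemma norm_integral_mul_derivProductGap_le (h : IsSpectralPair α ε M μ f g)
    (hB : IsCutoffTransform t B) (u : ℝ) :
    ‖∫ v, B v * (derivProductGap α μ f g u v : ℂ)‖ ≤
      (12 * M + 144 * M ^ 2) * dep1 α μ f g * expWeight α ε u *
        (2 * t ^ (1 - α / 2) * expWeightMass α ε) := by
  have hα := h.one_lt
  have hM := h.bound_nonneg
  have hd := dep1_nonneg α μ f g
  have hw := expWeight_nonneg α ε u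
  refine (norm_integral_le_of_norm_le ((hB.integrable_norm_mul_expWeight (α := α)
    (by linarith) h.pos.le).const_mul ((12 * M + 144 * M ^ 2) * dep1 α μ f g * expWeight α ε u))
    (Eventually.of_forall fun v => ?_)).trans ?_
  · rw [norm_mul, Complex.norm_real, Real.norm_eq_abs]
    refine (mul_le_mul_of_nonneg_left (h.abs_derivProductGap_le u v) (norm_nonneg _)).trans_eq ?_
    ring
  · rw [integral_const_mul]
    exact mul_le_mul_of_nonneg_left
      (hB.integral_norm_mul_expWeight_le (by linarith) h.lt_two h.pos) (by positivity)

lemma norm_integral_deriv_mul_D1_le [SFinite μ] (h : IsSpectralPair α ε M μ f g)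
    (hB : IsCutoffTransform t B) {u : ℝ} (hu : u ≠ 0) :
    ‖∫ v, deriv B v * (D1 α μ f g u v : ℂ)‖ ≤
      2 * t ^ (1 - α / 2) * (α * (α - 1) * affineKernelMass α * dep2 α μ f g) *
          |u| ^ (α / 2 - 1) +
        2 * t ^ (1 - α / 2) * (α ^ 2 * (12 * M + 144 * M ^ 2) * dep1 α μ f g *
          expWeightMass α ε) * expWeight α ε u := by
  have hα := h.one_lt
  have hd := hB.hasDerivAt_mul
    (hasDerivAt_jointChar_right hα h.lt_two.le h.memLalpha_left h.memLalpha_right u)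
  have hcont : Continuous fun v => jointChar α μ f g u v :=
    (continuous_jointChar hα h.lt_two.le h.memLalpha_left h.memLalpha_right).comp
      (continuous_const.prodMk continuous_id)
  have hH : Integrable fun v => B v * (jointChar α μ f g u v : ℂ) * ((1 + |v| : ℝ) : ℂ) ^ 1 := by
    refine (hB.integrable_mul_of_abs_le (r := fun v => jointChar α μ f g u v * (1 + |v|)) (C := 1)
      (hcont.mul (by fun_prop)) fun v => ?_).congr (Eventually.of_forall fun v => ?_)
    · rw [abs_of_nonneg (mul_nonneg (jointChar_nonneg α μ f g u v) (by positivity))]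
      exact mul_le_mul (jointChar_le_one α μ f g u v) (le_self_pow₀ (by simp) two_ne_zero)
        (by positivity) zero_le_one
    · push_cast
      ring
  have hfibre := norm_integral_deriv_mul_charExponentDeriv_le hα h.lt_two h.memLalpha_left
    h.memLalpha_right hu (fun v => (hd v).differentiableAt.hasDerivAt) hH
    (h.integrable_deriv_mul_jointChar hB u) (K := 2 * t ^ (1 - α / 2)) fun v hv => by
      rw [norm_mul, Complex.norm_real, Real.norm_of_nonneg (jointChar_nonneg α μ f g u v)]
      exact (mul_le_of_le_one_right (norm_nonneg _) (jointChar_le_one α μ f g u v)).trans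
        (hB.norm_le_rpow (by linarith) (by linarith [h.lt_two]) hv)
  rw [h.integral_deriv_mul_D1 hB u]
  refine (norm_sub_le _ _).trans ?_
  rw [norm_mul, norm_mul, norm_neg, norm_pow, Complex.norm_real,
    Real.norm_of_nonneg (by linarith : 0 ≤ α)]
  refine (add_le_add (mul_le_mul_of_nonneg_left hfibre (by linarith)) (mul_le_mul_of_nonneg_left
    (h.norm_integral_mul_derivProductGap_le hB u) (by positivity))).trans_eq ?_
  ring

lemma integral_deriv_mul_Ufun (h : IsSpectralPair α ε M μ f g) (hA : IsCutoffTransform t A)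
    (v : ℝ) :
    ∫ u, deriv A u * (Ufun α μ f g u v : ℂ) = -∫ u, A u * (D1 α μ f g u v : ℂ) :=
  hA.integral_deriv_mul_eq_neg (C := 24 * M * (1 + |v|))
    (fun u => hasDerivAt_Ufun_left h.one_lt h.lt_two.le h.memLalpha_left h.memLalpha_right u v)
    ((continuous_D1 h.one_lt h.lt_two.le h.memLalpha_left h.memLalpha_right).comp
      (continuous_id.prodMk continuous_const))
    (fun u => abs_Ufun_le_one (zero_lt_one.trans h.one_lt) μ f g u v)
    fun u => (h.abs_D1_le u v).trans_eq (by ring)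

lemma integrable_prod_mul_D1 (h : IsSpectralPair α ε M μ f g) (hA : IsCutoffTransform t A)
    (hB : IsCutoffTransform t' B) :
    Integrable (fun z : ℝ × ℝ => A z.2 * (deriv B z.1 * (D1 α μ f g z.2 z.1 : ℂ)))
      (volume.prod volume) := by
  have := h.bound_nonneg
  have hle : ∀ x : ℝ, |(1 + |x|)| ≤ 1 * (1 + |x|) ^ 2 := fun x => by
    rw [abs_of_nonneg (by positivity), one_mul]
    exact le_self_pow₀ (by simp) two_ne_zero
  have hA1 := hA.integrable_mul_of_abs_le (r := fun x => 1 + |x|) (by fun_prop) hle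
  have hB1 := hB.integrable_deriv_mul_of_abs_le (r := fun x => 1 + |x|) (by fun_prop) hle
  have hD : Continuous fun z : ℝ × ℝ => D1 α μ f g z.2 z.1 :=
    (continuous_D1 h.one_lt h.lt_two.le h.memLalpha_left h.memLalpha_right).comp continuous_swap
  refine ((hB1.norm.mul_prod hA1.norm).const_mul (24 * M)).mono'
    (hA.integrable.1.comp_snd.mul (hB.integrable_deriv.1.comp_fst.mul
      (Complex.continuous_ofReal.comp hD).aestronglyMeasurable))
    (Eventually.of_forall fun z => ?_)
  simp only [norm_mul, Complex.norm_real, Real.norm_eq_abs]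
  rw [abs_of_nonneg (by positivity : 0 ≤ 1 + |z.1|), abs_of_nonneg (by positivity : 0 ≤ 1 + |z.2|)]
  calc _ ≤ ‖A z.2‖ * (‖deriv B z.1‖ * (24 * M * (1 + |z.2|) * (1 + |z.1|))) := by
        gcongr
        exact h.abs_D1_le z.2 z.1
    _ = _ := by ring

lemma integral_integral_deriv_mul_Ufun (h : IsSpectralPair α ε M μ f g)
    (hA : IsCutoffTransform t A) (hB : IsCutoffTransform t' B) :
    ∫ v, ∫ u, deriv A u * deriv B v * (Ufun α μ f g u v : ℂ) =
      -∫ u, A u * ∫ v, deriv B v * (D1 α μ f g u v : ℂ) := by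
  have hinner : ∀ v, ∫ u, deriv A u * deriv B v * (Ufun α μ f g u v : ℂ) =
      -∫ u, A u * (deriv B v * (D1 α μ f g u v : ℂ)) := fun v => by
    simp only [mul_right_comm _ (deriv B v), mul_left_comm (A _), integral_mul_const,
      integral_const_mul, h.integral_deriv_mul_Ufun hA v]
    ring
  simp_rw [hinner]
  rw [integral_neg, integral_integral_swap (h.integrable_prod_mul_D1 hA hB)]
  simp_rw [integral_const_mul]

end IsSpectralPair

/-- The constant in the covariance estimate for test functions. -/
noncomputable def testCovConst (α ε M : ℝ) : ℝ :=
  2 * (α * (α - 1) * affineKernelMass α * ∫ x : ℝ, min 1 (2 / |x|) * |x| ^ (α / 2 - 1)) +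
    4 * (α ^ 2 * (12 * M + 144 * M ^ 2) * expWeightMass α ε ^ 2)

lemma integral_min_one_two_div_mul_nonneg (a : ℝ) :
    0 ≤ ∫ x : ℝ, min 1 (2 / |x|) * |x| ^ a :=
  integral_nonneg fun x => mul_nonneg (le_min zero_le_one (by positivity)) (by positivity)

lemma testCovConst_nonneg {α ε M : ℝ} (hα : 1 < α) (hM : 0 ≤ M) : 0 ≤ testCovConst α ε M := by
  have := affineKernelMass_nonneg α
  have := integral_min_one_two_div_mul_nonneg (α / 2 - 1)
  have : 0 ≤ α - 1 := by linarith
  unfold testCovConst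
  positivity

lemma add_le_testCovConst_mul {α ε M a b : ℝ} (hα : 1 < α) (hM : 0 ≤ M) (ha : 0 ≤ a)
    (hb : 0 ≤ b) :
    2 * (α * (α - 1) * affineKernelMass α * ∫ x : ℝ, min 1 (2 / |x|) * |x| ^ (α / 2 - 1)) * b +
        4 * (α ^ 2 * (12 * M + 144 * M ^ 2) * expWeightMass α ε ^ 2) * a ≤
      testCovConst α ε M * (a + b) := by
  have := affineKernelMass_nonneg α
  have := integral_min_one_two_div_mul_nonneg (α / 2 - 1)
  have : 0 ≤ α - 1 := by linarith
  rw [testCovConst]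
  set X := 2 * (α * (α - 1) * affineKernelMass α * ∫ x : ℝ, min 1 (2 / |x|) * |x| ^ (α / 2 - 1))
  set Y := 4 * (α ^ 2 * (12 * M + 144 * M ^ 2) * expWeightMass α ε ^ 2)
  have hX : 0 ≤ X := by positivity
  have hY : 0 ≤ Y := by positivity
  linarith [mul_nonneg hX ha, mul_nonneg hY hb]

theorem IsSpectralPair.norm_integral_integral_deriv_mul_Ufun_le {α ε M t t' : ℝ} {S : Type*}
    [MeasurableSpace S] {μ : Measure S} [SFinite μ] {f g : S → ℝ} {A B : ℝ → ℂ}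
    (h : IsSpectralPair α ε M μ f g) (hA : IsCutoffTransform t A) (hB : IsCutoffTransform t' B) :
    ‖∫ v, ∫ u, deriv A u * deriv B v * (Ufun α μ f g u v : ℂ)‖ ≤
      testCovConst α ε M * (t ^ (1 - α / 2) * t' ^ (1 - α / 2)) *
        (dep1 α μ f g + dep2 α μ f g) := by
  have hα := h.one_lt
  have hα2 := h.lt_two
  have : 0 ≤ α - 1 := by linarith
  have hM := h.bound_nonneg
  have hd1 := dep1_nonneg α μ f g
  have hd2 := dep2_nonneg α μ f g
  have hκ := affineKernelMass_nonneg α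
  have hI := expWeightMass_nonneg α ε
  have := integral_min_one_two_div_mul_nonneg (α / 2 - 1)
  have hT : 0 ≤ t ^ (1 - α / 2) := Real.rpow_nonneg hA.pos.le _
  have hT' : 0 ≤ t' ^ (1 - α / 2) := Real.rpow_nonneg hB.pos.le _
  have hi1 := hA.integrable_norm_mul_rpow (a := α / 2 - 1) (by linarith) (by linarith)
  have hi2 := hA.integrable_norm_mul_expWeight (α := α) (by linarith) h.pos.le
  have hb1 := hA.integral_norm_mul_rpow_le (a := α / 2 - 1) (by linarith) (by linarith)
  have hb2 := hA.integral_norm_mul_expWeight_le (α := α) (by linarith) hα2 h.pos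
  rw [neg_sub] at hb1
  rw [h.integral_integral_deriv_mul_Ufun hA hB, norm_neg]
  refine (norm_integral_le_of_norm_le ((hi1.const_mul
    (2 * t' ^ (1 - α / 2) * (α * (α - 1) * affineKernelMass α * dep2 α μ f g))).add
      (hi2.const_mul (2 * t' ^ (1 - α / 2) * (α ^ 2 * (12 * M + 144 * M ^ 2) * dep1 α μ f g *
        expWeightMass α ε)))) ?_).trans ?_
  · filter_upwards [Measure.ae_ne volume 0] with u hu
    rw [norm_mul]
    refine (mul_le_mul_of_nonneg_left (h.norm_integral_deriv_mul_D1_le hB hu)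
      (norm_nonneg _)).trans_eq ?_
    rw [Pi.add_apply]
    ring
  · simp only [Pi.add_apply]
    rw [integral_add (hi1.const_mul _) (hi2.const_mul _), integral_const_mul, integral_const_mul]
    refine (add_le_add (mul_le_mul_of_nonneg_left hb1 (by positivity))
      (mul_le_mul_of_nonneg_left hb2 (by positivity))).trans ?_
    linear_combination (t ^ (1 - α / 2) * t' ^ (1 - α / 2)) *
      add_le_testCovConst_mul (ε := ε) hα hM hd1 hd2

/-! ### Fourier representation of covariances -/

section TrigIntegral

open ProbabilityTheory

/-- The Fourier transform of `F` in the convention of characteristic functions. -/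
noncomputable def trigIntegral (F : ℝ → ℂ) (x : ℝ) : ℂ :=
  ∫ u, F u * Complex.exp (Complex.I * ((u * x : ℝ) : ℂ))

variable {F G : ℝ → ℂ}

lemma integrable_mul_exp (hF : Integrable F) (x : ℝ) :
    Integrable fun u => F u * Complex.exp (Complex.I * ((u * x : ℝ) : ℂ)) :=
  hF.mul_bdd (c := 1) (by fun_prop : Continuous _).aestronglyMeasurable
    (Eventually.of_forall fun u => (Complex.norm_exp_I_mul_ofReal _).le)

lemma norm_trigIntegral_le (F : ℝ → ℂ) (x : ℝ) : ‖trigIntegral F x‖ ≤ ∫ u, ‖F u‖ := by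
  refine (norm_integral_le_integral_norm _).trans_eq ?_
  simp only [norm_mul, Complex.norm_exp_I_mul_ofReal, mul_one]

lemma continuous_trigIntegral (hF : Integrable F) : Continuous (trigIntegral F) :=
  continuous_of_dominated (fun x => (integrable_mul_exp hF x).1)
    (fun x => Eventually.of_forall fun u => by
      rw [norm_mul, Complex.norm_exp_I_mul_ofReal, mul_one]) hF.norm
    (Eventually.of_forall fun u => by fun_prop)

lemma IsCutoffTransform.trigIntegral_deriv {t : ℝ} {A : ℝ → ℂ} (hA : IsCutoffTransform t A)
    (x : ℝ) : trigIntegral (deriv A) x = -(Complex.I * x) * trigIntegral A x := by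
  have he : ∀ u : ℝ, HasDerivAt (fun u : ℝ => Complex.exp (Complex.I * ((u * x : ℝ) : ℂ)))
      (Complex.exp (Complex.I * ((u * x : ℝ) : ℂ)) * (Complex.I * x)) u := fun u => by
    refine HasDerivAt.cexp (HasDerivAt.const_mul _ ?_)
    simpa using ((hasDerivAt_id u).mul_const x).ofReal_comp
  have hderiv := integrable_mul_exp hA.integrable_deriv x
  have hprim := integrable_mul_exp hA.integrable x
  have hprim' : Integrable fun u => A u *
      (Complex.exp (Complex.I * ((u * x : ℝ) : ℂ)) * (Complex.I * x)) := by
    simpa only [mul_assoc] using hprim.mul_const (Complex.I * x)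
  have hsum := (integral_add hderiv hprim').symm.trans
    (integral_eq_zero_of_hasDerivAt_of_integrable
      (fun u => (hA.differentiable u).hasDerivAt.mul (he u)) (hderiv.add hprim') hprim)
  simp only [← mul_assoc (A _), integral_mul_const] at hsum
  rw [trigIntegral, trigIntegral, eq_neg_of_add_eq_zero_left hsum]
  ring

variable {Ω : Type*} [MeasurableSpace Ω] {P : Measure Ω} {ξ η : Ω → ℝ}

lemma integrable_trigIntegral_comp [IsFiniteMeasure P] (hF : Integrable F) (hξ : AEMeasurable ξ P) :
    Integrable (fun ω => trigIntegral F (ξ ω)) P :=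
  .of_bound ((continuous_trigIntegral hF).comp_aestronglyMeasurable hξ.aestronglyMeasurable) _
    (Eventually.of_forall fun ω => norm_trigIntegral_le F (ξ ω))

lemma integral_mul_trigIntegral [IsFiniteMeasure P] (hF : Integrable F) (hξ : AEMeasurable ξ P)
    {ψ : Ω → ℂ} (hψ : Integrable ψ P) :
    ∫ ω, ψ ω * trigIntegral F (ξ ω) ∂P =
      ∫ u, F u * ∫ ω, ψ ω * Complex.exp (Complex.I * ((u * ξ ω : ℝ) : ℂ)) ∂P := by
  have hint : Integrable (fun z : Ω × ℝ => ψ z.1 *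
      (F z.2 * Complex.exp (Complex.I * ((z.2 * ξ z.1 : ℝ) : ℂ)))) (P.prod volume) := by
    have hexp : AEStronglyMeasurable (fun z : Ω × ℝ =>
        Complex.exp (Complex.I * ((z.2 * ξ z.1 : ℝ) : ℂ))) (P.prod volume) :=
      ((Complex.continuous_exp.comp (continuous_const.mul Complex.continuous_ofReal))
        |>.comp_aestronglyMeasurable
          (measurable_snd.aestronglyMeasurable.mul hξ.aestronglyMeasurable.comp_fst))
    refine ((hψ.mul_prod hF).mul_bdd (c := 1) hexp (Eventually.of_forall fun z =>
      (Complex.norm_exp_I_mul_ofReal _).le)).congr (Eventually.of_forall fun z => mul_assoc _ _ _)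
  simp_rw [trigIntegral, ← integral_const_mul]
  rw [integral_integral_swap hint]
  simp only [mul_left_comm]

lemma integral_sub_integral_mul {X Y : Ω → ℂ} (hY : Integrable Y P)
    (hXY : Integrable (fun ω => X ω * Y ω) P) :
    ∫ ω, (X ω - ∫ ω', X ω' ∂P) * Y ω ∂P =
      (∫ ω, X ω * Y ω ∂P) - (∫ ω, X ω ∂P) * ∫ ω, Y ω ∂P := by
  simp only [sub_mul]
  rw [integral_sub hXY (hY.const_mul _), integral_const_mul]

lemma integrable_exp_I_mul [IsFiniteMeasure P] (hξ : AEMeasurable ξ P) (u : ℝ) :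
    Integrable (fun ω => Complex.exp (Complex.I * ((u * ξ ω : ℝ) : ℂ))) P :=
  .of_bound ((by fun_prop : Continuous fun x : ℝ =>
    Complex.exp (Complex.I * ((u * x : ℝ) : ℂ))).comp_aestronglyMeasurable
      hξ.aestronglyMeasurable) 1 (Eventually.of_forall fun ω =>
        (Complex.norm_exp_I_mul_ofReal _).le)

lemma integral_sub_mul_trigIntegral [IsProbabilityMeasure P] (hF : Integrable F) (hG : Integrable G)
    (hξ : AEMeasurable ξ P) (hη : AEMeasurable η P) :
    ∫ ω, (trigIntegral F (ξ ω) - ∫ ω', trigIntegral F (ξ ω') ∂P) * trigIntegral G (η ω) ∂P =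
      ∫ v, ∫ u, F u * G v *
        ((∫ ω, Complex.exp (Complex.I * ((u * ξ ω + v * η ω : ℝ) : ℂ)) ∂P) -
          (∫ ω, Complex.exp (Complex.I * ((u * ξ ω : ℝ) : ℂ)) ∂P) *
            ∫ ω, Complex.exp (Complex.I * ((v * η ω : ℝ) : ℂ)) ∂P) := by
  have hTF := integrable_trigIntegral_comp hF hξ
  refine (integral_mul_trigIntegral hG hη (hTF.sub (integrable_const _))).trans
    (integral_congr_ae (Eventually.of_forall fun v => ?_))
  have hbdd : ∀ u : ℝ, Integrable (fun ω => Complex.exp (Complex.I * ((v * η ω : ℝ) : ℂ)) *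
      Complex.exp (Complex.I * ((u * ξ ω : ℝ) : ℂ))) P := fun u =>
    (integrable_exp_I_mul hη v).mul_bdd (integrable_exp_I_mul hξ u).1
      (Eventually.of_forall fun ω => (Complex.norm_exp_I_mul_ofReal _).le)
  have hTFe : Integrable (fun ω => trigIntegral F (ξ ω) *
      Complex.exp (Complex.I * ((v * η ω : ℝ) : ℂ))) P :=
    hTF.mul_bdd (integrable_exp_I_mul hη v).1
      (Eventually.of_forall fun ω => (Complex.norm_exp_I_mul_ofReal _).le)
  have hcenter : ∫ ω, (trigIntegral F (ξ ω) - ∫ ω', trigIntegral F (ξ ω') ∂P) *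
        Complex.exp (Complex.I * ((v * η ω : ℝ) : ℂ)) ∂P =
      ∫ ω, (Complex.exp (Complex.I * ((v * η ω : ℝ) : ℂ)) -
        ∫ ω', Complex.exp (Complex.I * ((v * η ω' : ℝ) : ℂ)) ∂P) * trigIntegral F (ξ ω) ∂P := by
    rw [integral_sub_integral_mul (integrable_exp_I_mul hη v) hTFe,
      integral_sub_integral_mul hTF (by simpa only [mul_comm] using hTFe)]
    simp only [mul_comm]
  have hψ : Integrable (fun ω => Complex.exp (Complex.I * ((v * η ω : ℝ) : ℂ)) -
      ∫ ω', Complex.exp (Complex.I * ((v * η ω' : ℝ) : ℂ)) ∂P) P :=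
    (integrable_exp_I_mul hη v).sub (integrable_const _)
  simp only [Pi.sub_apply]
  rw [hcenter, integral_mul_trigIntegral hF hξ hψ, ← integral_const_mul]
  refine integral_congr_ae (Eventually.of_forall fun u => ?_)
  simp only [integral_sub_integral_mul (integrable_exp_I_mul hξ u) (hbdd u), ← Complex.exp_add,
    ← mul_add, ← Complex.ofReal_add, add_comm (v * _)]
  ring

variable {S : Type*} [MeasurableSpace S] {α ε M t t' : ℝ} {μ : Measure S} {f g : S → ℝ}
  {A B : ℝ → ℂ} {a b : ℝ → ℝ}

lemma JointSAS.integral_exp_sub_mul (hJ : JointSAS α μ f g P ξ η) (u v : ℝ) :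
    (∫ ω, Complex.exp (Complex.I * ((u * ξ ω + v * η ω : ℝ) : ℂ)) ∂P) -
        (∫ ω, Complex.exp (Complex.I * ((u * ξ ω : ℝ) : ℂ)) ∂P) *
          (∫ ω, Complex.exp (Complex.I * ((v * η ω : ℝ) : ℂ)) ∂P) =
      (Ufun α μ f g u v : ℂ) := by
  have hξ := hJ u 0
  have hη := hJ 0 v
  simp only [zero_mul, add_zero, zero_add] at hξ hη
  rw [hJ u v, hξ, hη, Ufun, ← Complex.exp_add]
  push_cast
  ring_nf

lemma IsCutoffTransform.memLp_mul_comp [IsFiniteMeasure P] (hA : IsCutoffTransform t A)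
    (ha : ∀ x, trigIntegral A x = a x) (hξ : AEMeasurable ξ P) :
    MemLp (fun ω => ξ ω * a (ξ ω)) 2 P := by
  have hreal : ∀ x, x * a x = (Complex.I * trigIntegral (deriv A) x).re := fun x => by
    rw [hA.trigIntegral_deriv, ha]
    simp
  simp only [hreal]
  refine .of_bound ((by fun_prop : Continuous fun z : ℂ => (Complex.I * z).re)
    |>.comp_aestronglyMeasurable (integrable_trigIntegral_comp hA.integrable_deriv hξ).1)
    (∫ u, ‖deriv A u‖) (Eventually.of_forall fun ω => ?_)
  refine (Complex.abs_re_le_norm _).trans ?_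
  rw [norm_mul, Complex.norm_I, one_mul]
  exact norm_trigIntegral_le _ _

lemma IsSpectralPair.abs_covariance_mul_cutoff_le [SFinite μ] [IsProbabilityMeasure P]
    (h : IsSpectralPair α ε M μ f g) (hJ : JointSAS α μ f g P ξ η) (hξ : AEMeasurable ξ P)
    (hη : AEMeasurable η P) (hA : IsCutoffTransform t A) (hB : IsCutoffTransform t' B)
    (ha : ∀ x, trigIntegral A x = a x) (hb : ∀ x, trigIntegral B x = b x) :
    |cov[fun ω => ξ ω * a (ξ ω), fun ω => η ω * b (η ω); P]| ≤
      testCovConst α ε M * (t ^ (1 - α / 2) * t' ^ (1 - α / 2)) *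
        (dep1 α μ f g + dep2 α μ f g) := by
  have hTA : ∀ x, trigIntegral (deriv A) x = -Complex.I * ((x * a x : ℝ) : ℂ) := fun x => by
    rw [hA.trigIntegral_deriv, ha]
    push_cast
    ring
  have hTB : ∀ x, trigIntegral (deriv B) x = -Complex.I * ((x * b x : ℝ) : ℂ) := fun x => by
    rw [hB.trigIntegral_deriv, hb]
    push_cast
    ring
  have hTBint := integrable_trigIntegral_comp hB.integrable_deriv hη
  have hmain := integral_sub_mul_trigIntegral hA.integrable_deriv hB.integrable_deriv hξ hη
  simp only [hJ.integral_exp_sub_mul] at hmain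
  rw [integral_sub_integral_mul hTBint (hTBint.bdd_mul
    (integrable_trigIntegral_comp hA.integrable_deriv hξ).1
    (Eventually.of_forall fun ω => norm_trigIntegral_le _ _))] at hmain
  have hcov : ((cov[fun ω => ξ ω * a (ξ ω), fun ω => η ω * b (η ω); P] : ℝ) : ℂ) =
      -∫ v, ∫ u, deriv A u * deriv B v * (Ufun α μ f g u v : ℂ) := by
    rw [covariance_eq_sub (hA.memLp_mul_comp ha hξ) (hB.memLp_mul_comp hb hη), ← hmain]
    have hprod : ∀ x y, trigIntegral (deriv A) x * trigIntegral (deriv B) y =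
        -((x * a x * (y * b y) : ℝ) : ℂ) := fun x y => by
      rw [hTA, hTB, mul_mul_mul_comm, neg_mul_neg, Complex.I_mul_I, neg_one_mul,
        ← Complex.ofReal_mul]
    simp only [hprod, integral_neg, integral_complex_ofReal]
    simp only [hTA, hTB, integral_const_mul, integral_complex_ofReal, Pi.mul_apply,
      mul_mul_mul_comm (-Complex.I), neg_mul_neg, Complex.I_mul_I]
    push_cast
    ring
  rw [← Real.norm_eq_abs, ← Complex.norm_real, hcov, norm_neg]
  exact h.norm_integral_integral_deriv_mul_Ufun_le hA hB

end TrigIntegral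

/-! ### Smoothed indicators of intervals -/

section SmoothCutoff

open ProbabilityTheory
open scoped NNReal

/-- The Fourier transform of the indicator of `(0, t]`. -/
noncomputable def segmentTransform (t u : ℝ) : ℂ :=
  ∫ y in (0 : ℝ)..t, Complex.exp (-(Complex.I * u) * y)

lemma norm_exp_neg_I_mul (u y : ℝ) : ‖Complex.exp (-(Complex.I * u) * y)‖ = 1 := by
  rw [← Complex.norm_exp_I_mul_ofReal (-(u * y))]
  push_cast
  ring_nf

lemma norm_segmentTransform_le {t : ℝ} (ht : 0 ≤ t) (u : ℝ) : ‖segmentTransform t u‖ ≤ t := by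
  simpa only [segmentTransform, one_mul, sub_zero, abs_of_nonneg ht] using
    intervalIntegral.norm_integral_le_of_norm_le_const (a := 0) (b := t)
      fun y _ => (norm_exp_neg_I_mul u y).le

lemma norm_segmentTransform_le_two_div (t : ℝ) {u : ℝ} (hu : u ≠ 0) :
    ‖segmentTransform t u‖ ≤ 2 / |u| := by
  have hIu : -(Complex.I * u) ≠ 0 :=
    neg_ne_zero.2 (mul_ne_zero Complex.I_ne_zero (Complex.ofReal_ne_zero.2 hu))
  rw [segmentTransform, integral_exp_mul_complex hIu, norm_div, norm_neg, norm_mul, Complex.norm_I,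
    one_mul, Complex.norm_real, Real.norm_eq_abs]
  gcongr
  refine (norm_sub_le _ _).trans_eq ?_
  rw [norm_exp_neg_I_mul, norm_exp_neg_I_mul, one_add_one_eq_two]

lemma exists_hasDerivAt_segmentTransform {t : ℝ} (ht : 0 ≤ t) (u : ℝ) :
    ∃ c', HasDerivAt (segmentTransform t) c' u ∧ ‖c'‖ ≤ t * t := by
  have hnorm : ∀ y ∈ uIoc 0 t, ∀ x : ℝ,
      ‖-(Complex.I * y) * Complex.exp (-(Complex.I * x) * y)‖ ≤ t := fun y hy x => by
    rw [uIoc_of_le ht] at hy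
    rw [norm_mul, norm_exp_neg_I_mul, mul_one, norm_neg, norm_mul, Complex.norm_I, one_mul,
      Complex.norm_real, Real.norm_of_nonneg hy.1.le]
    exact hy.2
  refine ⟨_, (intervalIntegral.hasDerivAt_integral_of_dominated_loc_of_deriv_le
    (F := fun u y : ℝ => Complex.exp (-(Complex.I * u) * y))
    (F' := fun u y : ℝ => -(Complex.I * y) * Complex.exp (-(Complex.I * u) * y)) univ_mem
    (Eventually.of_forall fun x => (by fun_prop : Continuous _).aestronglyMeasurable)
    ((by fun_prop : Continuous _).intervalIntegrable _ _)
    (by fun_prop : Continuous _).aestronglyMeasurable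
    (Eventually.of_forall fun y hy x _ => hnorm y hy x) intervalIntegrable_const
    (Eventually.of_forall fun y _ x _ => ?_)).2, ?_⟩
  · have hlin : HasDerivAt (fun x : ℝ => -(Complex.I * x) * y) (-(Complex.I * y)) x := by
      simpa using (((hasDerivAt_id x).ofReal_comp.const_mul Complex.I).neg.mul_const (y : ℂ))
    simpa only [mul_comm] using hlin.cexp
  · simpa only [sub_zero, abs_of_nonneg ht] using
      intervalIntegral.norm_integral_le_of_norm_le_const (a := 0) (b := t)
        fun y hy => hnorm y hy u

/-- The probability that a Gaussian variable with mean `x` and standard deviation `s` lies in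
`(0, t]`; it approximates the indicator of `(0, t]` at `x`. -/
noncomputable def smoothCutoff (s : ℝ≥0) (t x : ℝ) : ℝ :=
  (gaussianReal x (s ^ 2)).real (Ioc 0 t)

/-- The Fourier transform of `smoothCutoff s t`, normalised so that `trigIntegral` inverts it. -/
noncomputable def smoothCutoffTransform (s : ℝ≥0) (t u : ℝ) : ℂ :=
  segmentTransform t u * ((2 * π)⁻¹ * rexp (-(s ^ 2 / 2) * u ^ 2) : ℝ)

variable {s : ℝ≥0} {t : ℝ}

lemma norm_two_pi_inv_mul_exp_le (c : ℝ) : ‖(((2 * π)⁻¹ * rexp c : ℝ) : ℂ)‖ ≤ rexp c := by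
  have hpi : (2 * π)⁻¹ ≤ 1 := inv_le_one_of_one_le₀ (by linarith [pi_gt_three])
  rw [Complex.norm_of_nonneg (by positivity)]
  exact mul_le_of_le_one_left (exp_pos c).le hpi

lemma norm_smoothCutoffTransform_le (u : ℝ) :
    ‖smoothCutoffTransform s t u‖ ≤ ‖segmentTransform t u‖ * rexp (-(s ^ 2 / 2) * u ^ 2) := by
  rw [smoothCutoffTransform, norm_mul]
  exact mul_le_mul_of_nonneg_left (norm_two_pi_inv_mul_exp_le _) (norm_nonneg _)

lemma exists_hasDerivAt_smoothCutoffTransform (ht : 0 ≤ t) (u : ℝ) :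
    ∃ A', HasDerivAt (smoothCutoffTransform s t) A' u ∧
      ‖A'‖ ≤ (t * t + t * (s ^ 2 * |u|)) * rexp (-(s ^ 2 / 2) * u ^ 2) := by
  obtain ⟨c', hc', hc'_le⟩ := exists_hasDerivAt_segmentTransform ht u
  have hgauss : HasDerivAt (fun u : ℝ => (2 * π)⁻¹ * rexp (-(s ^ 2 / 2) * u ^ 2))
      (-(s ^ 2 * u) * ((2 * π)⁻¹ * rexp (-(s ^ 2 / 2) * u ^ 2))) u := by
    refine ((((hasDerivAt_pow 2 u).const_mul (-((s : ℝ) ^ 2 / 2))).exp).const_mul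
      (2 * π)⁻¹).congr_deriv ?_
    ring
  refine ⟨_, hc'.mul hgauss.ofReal_comp, (norm_add_le _ _).trans ?_⟩
  rw [add_mul, Complex.ofReal_mul (-((s : ℝ) ^ 2 * u)), ← mul_assoc (segmentTransform t u),
    norm_mul, norm_mul, norm_mul, Complex.norm_real (-((s : ℝ) ^ 2 * u)), Real.norm_eq_abs,
    abs_neg, abs_mul, abs_of_nonneg (sq_nonneg (s : ℝ))]
  have hexp := norm_two_pi_inv_mul_exp_le (-((s : ℝ) ^ 2 / 2) * u ^ 2)
  gcongr
  exact norm_segmentTransform_le ht u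

lemma integrable_mul_sq_of_norm_le_exp {F : ℝ → ℂ} (hF : AEStronglyMeasurable F) {σ c₀ c₁ : ℝ}
    (hσ : 0 < σ) (hle : ∀ u, ‖F u‖ ≤ (c₀ + c₁ * |u|) * rexp (-σ * u ^ 2)) :
    Integrable fun u => F u * ((1 + |u| : ℝ) : ℂ) ^ 2 := by
  have hint : ∀ a : ℝ, -1 < a → Integrable fun u : ℝ => |u| ^ a * expWeight 2 σ u := fun a ha =>
    integrable_abs_rpow_mul_expWeight ha zero_lt_two hσ
  refine (((hint 0 (by norm_num)).const_mul c₀).add ((hint 1 (by norm_num)).const_mul c₁)).mono'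
    (hF.mul (by fun_prop : Continuous _).aestronglyMeasurable) (Eventually.of_forall fun u => ?_)
  rw [norm_mul, norm_pow, Complex.norm_of_nonneg (by positivity)]
  refine (mul_le_mul_of_nonneg_right (hle u) (by positivity)).trans_eq ?_
  simp only [Pi.add_apply, expWeight, Real.rpow_zero, Real.rpow_one, Real.rpow_two, sq_abs]
  ring

lemma isCutoffTransform_smoothCutoffTransform (hs : 0 < s) (ht : 0 < t) :
    IsCutoffTransform t (smoothCutoffTransform s t) where
  pos := ht
  differentiable u :=
    (exists_hasDerivAt_smoothCutoffTransform ht.le u).choose_spec.1.differentiableAt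
  integrable_mul := by
    have hdiff : Differentiable ℝ (smoothCutoffTransform s t) := fun u =>
      (exists_hasDerivAt_smoothCutoffTransform ht.le u).choose_spec.1.differentiableAt
    refine integrable_mul_sq_of_norm_le_exp hdiff.continuous.aestronglyMeasurable (c₀ := t)
      (c₁ := 0) (σ := s ^ 2 / 2) (by positivity) fun u => ?_
    rw [zero_mul, add_zero]
    exact (norm_smoothCutoffTransform_le u).trans
      (mul_le_mul_of_nonneg_right (norm_segmentTransform_le ht.le u) (exp_pos _).le)
  integrable_deriv_mul := by
    refine integrable_mul_sq_of_norm_le_exp (aestronglyMeasurable_deriv _ _) (c₀ := t * t)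
      (c₁ := t * s ^ 2) (σ := s ^ 2 / 2) (by positivity) fun u => ?_
    obtain ⟨A', hA', hle⟩ := exists_hasDerivAt_smoothCutoffTransform ht.le u
    rwa [hA'.deriv, mul_assoc]
  norm_le u hu := by
    have hexp : rexp (-(s ^ 2 / 2) * u ^ 2) ≤ 1 := Real.exp_le_one_iff.2 (by
      rw [neg_mul]
      exact neg_nonpos.2 (by positivity))
    refine ((norm_smoothCutoffTransform_le u).trans
      (mul_le_of_le_one_right (norm_nonneg _) hexp)).trans (le_min ?_ ?_)
    exacts [norm_segmentTransform_le ht.le u, norm_segmentTransform_le_two_div t hu]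

lemma two_pi_mul_gaussianPDFReal (hs : 0 < s) (z : ℝ) :
    2 * π * gaussianPDFReal 0 (s ^ 2) z =
      √(2 * π * ((s : ℝ) ^ 2)⁻¹) * rexp (-((s : ℝ) ^ 2)⁻¹ * z ^ 2 / 2) := by
  have : (0 : ℝ) < s := hs
  have hexp : -(z - 0) ^ 2 / (2 * (s : ℝ) ^ 2) = -((s : ℝ) ^ 2)⁻¹ * z ^ 2 / 2 := by
    field_simp
    ring
  rw [gaussianPDFReal, NNReal.coe_pow, hexp, ← mul_assoc, Real.sqrt_mul (by positivity),
    Real.sqrt_mul (by positivity) (_⁻¹), Real.sqrt_inv, mul_inv, ← mul_assoc,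
    ← div_eq_mul_inv (2 * π), Real.div_sqrt]

lemma trigIntegral_exp_neg_sq (hs : 0 < s) (z : ℝ) :
    trigIntegral (fun u => ((rexp (-(s ^ 2 / 2) * u ^ 2) : ℝ) : ℂ)) z =
      ((2 * π * gaussianPDFReal 0 (s ^ 2) z : ℝ) : ℂ) := by
  have : (0 : ℝ) < s := hs
  have hdensity : ∀ u, rexp (-(s ^ 2 / 2) * u ^ 2) =
      √(2 * π * ((s : ℝ) ^ 2)⁻¹) * gaussianPDFReal 0 (s ^ 2)⁻¹ u := fun u => by
    rw [gaussianPDFReal, NNReal.coe_inv, NNReal.coe_pow,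
      mul_inv_cancel_left₀ (Real.sqrt_pos.2 (by positivity)).ne']
    congr 1
    field_simp
    ring
  have hchar := charFun_gaussianReal (μ := 0) (v := (s ^ 2)⁻¹) z
  rw [charFun_apply_real, integral_gaussianReal_eq_integral_smul (by positivity)] at hchar
  have hexp : ∀ u : ℝ, Complex.I * ((u * z : ℝ) : ℂ) = z * u * Complex.I := fun u => by
    push_cast
    ring
  rw [two_pi_mul_gaussianPDFReal hs, Complex.ofReal_mul, trigIntegral]
  simp only [hdensity, hexp]
  simp only [Complex.ofReal_mul (√_), mul_assoc (Complex.ofReal √_), integral_const_mul,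
    ← Complex.real_smul (x := gaussianPDFReal _ _ _), hchar]
  push_cast
  ring_nf

lemma trigIntegral_smoothCutoffTransform (hs : 0 < s) (ht : 0 ≤ t) (x : ℝ) :
    trigIntegral (smoothCutoffTransform s t) x = smoothCutoff s t x := by
  have : (0 : ℝ) < s := hs
  have hint : Integrable (fun z : ℝ × ℝ => Complex.exp (-(Complex.I * z.1) * z.2) *
      (((2 * π)⁻¹ * rexp (-(s ^ 2 / 2) * z.1 ^ 2) : ℝ) : ℂ) *
        Complex.exp (Complex.I * ((z.1 * x : ℝ) : ℂ)))
      (volume.prod (volume.restrict (Ioc 0 t))) := by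
    have hgauss : Integrable fun u : ℝ => (2 * π)⁻¹ * rexp (-(s ^ 2 / 2) * u ^ 2) :=
      (integrable_exp_neg_mul_sq (by positivity)).const_mul _
    refine ((hgauss.comp_fst _).mono' (by fun_prop : Continuous _).aestronglyMeasurable
      (Eventually.of_forall fun z => ?_))
    rw [norm_mul, norm_mul, norm_exp_neg_I_mul, Complex.norm_exp_I_mul_ofReal,
      Complex.norm_of_nonneg (by positivity), one_mul, mul_one]
  have hslice : ∀ y : ℝ, ∫ u : ℝ, Complex.exp (-(Complex.I * u) * y) *
      (((2 * π)⁻¹ * rexp (-(s ^ 2 / 2) * u ^ 2) : ℝ) : ℂ) *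
        Complex.exp (Complex.I * ((u * x : ℝ) : ℂ)) = gaussianPDFReal x (s ^ 2) y := fun y => by
    have hgauss := trigIntegral_exp_neg_sq hs (x - y)
    have hpdf : gaussianPDFReal 0 (s ^ 2) (x - y) = gaussianPDFReal x (s ^ 2) y := by
      rw [gaussianPDFReal, gaussianPDFReal, sub_zero, ← neg_sub, neg_sq]
    rw [trigIntegral, hpdf, Complex.ofReal_mul (2 * π)] at hgauss
    rw [← inv_mul_cancel_left₀ (Complex.ofReal_ne_zero.2 two_pi_pos.ne')
      (gaussianPDFReal x (s ^ 2) y : ℂ), ← hgauss, ← integral_const_mul]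
    refine integral_congr_ae (Eventually.of_forall fun u => ?_)
    simp only [Complex.ofReal_mul ((2 * π)⁻¹), Complex.ofReal_inv]
    rw [mul_comm (Complex.exp _), mul_assoc, mul_assoc, ← Complex.exp_add]
    push_cast
    ring_nf
  simp only [trigIntegral, smoothCutoffTransform, segmentTransform,
    intervalIntegral.integral_of_le ht, ← integral_mul_const]
  rw [integral_integral_swap hint]
  simp only [hslice]
  rw [smoothCutoff, measureReal_def, gaussianReal_apply_eq_integral _ (by positivity),
    ENNReal.toReal_ofReal (setIntegral_nonneg measurableSet_Ioc fun y _ =>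
      gaussianPDFReal_nonneg _ _ _), integral_complex_ofReal]

lemma smoothCutoff_eq_integral (x : ℝ) :
    smoothCutoff s t x =
      ∫ w, (Ioc 0 t).indicator (fun _ => (1 : ℝ)) (x + s * w) ∂gaussianReal 0 1 := by
  have hmap : (gaussianReal 0 1).map (fun w => x + s * w) = gaussianReal x (s ^ 2) := by
    have hcomp : (fun w : ℝ => x + s * w) = (x + ·) ∘ ((s : ℝ) * ·) := rfl
    rw [hcomp, ← Measure.map_map (by fun_prop) (by fun_prop), gaussianReal_map_const_mul,
      gaussianReal_map_const_add, mul_zero, zero_add, mul_one]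
    rfl
  rw [smoothCutoff, ← hmap, ← integral_indicator_one measurableSet_Ioc,
    integral_map (by fun_prop) (by measurability)]
  rfl

lemma measurable_smoothCutoff (s : ℝ≥0) (t : ℝ) : Measurable (smoothCutoff s t) := by
  have hmeas : Measurable fun z : ℝ × ℝ =>
      (Ioc 0 t).indicator (fun _ => (1 : ℝ)) (z.1 + s * z.2) :=
    (measurable_const.indicator measurableSet_Ioc).comp (by fun_prop)
  simp only [funext smoothCutoff_eq_integral]
  exact hmeas.stronglyMeasurable.integral_prod_right.measurable

lemma abs_mul_smoothCutoff_le (ht : 0 ≤ t) (x : ℝ) :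
    |x * smoothCutoff s t x| ≤ t + s * ∫ w, |w| ∂gaussianReal 0 1 := by
  have habs : Integrable (fun w : ℝ => |w|) (gaussianReal 0 1) :=
    ((memLp_id_gaussianReal 1).integrable le_rfl).abs
  rw [smoothCutoff_eq_integral, ← integral_const_mul, ← Real.norm_eq_abs]
  refine (norm_integral_le_of_norm_le (g := fun w => t + s * |w|)
    ((integrable_const t).add (habs.const_mul _)) (Eventually.of_forall fun w => ?_)).trans_eq ?_
  · by_cases hw : x + s * w ∈ Ioc 0 t
    · rw [indicator_of_mem hw, mul_one, Real.norm_eq_abs, abs_le]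
      have := mul_le_mul_of_nonneg_left (neg_abs_le w) s.coe_nonneg
      have := mul_le_mul_of_nonneg_left (le_abs_self w) s.coe_nonneg
      constructor <;> linarith [hw.1, hw.2]
    · rw [indicator_of_notMem hw, mul_zero, norm_zero]
      positivity
  · rw [integral_add (integrable_const t) (habs.const_mul _), integral_const_mul]
    simp

lemma eventually_add_sq_mul_mem_Ioc_iff {x : ℝ} (hx : x ≠ 0) (w : ℝ) :
    ∀ᶠ δ : ℝ≥0 in 𝓝[>] 0, x + (δ ^ 2 : ℝ≥0) * w ∈ Ioc 0 (t + δ) ↔ x ∈ Ioc 0 t := by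
  have hlim : ∀ F : ℝ≥0 → ℝ, Continuous F → Tendsto F (𝓝[>] 0) (𝓝 (F 0)) := fun F hF =>
    hF.continuousAt.tendsto.mono_left nhdsWithin_le_nhds
  have hleft : ∀ᶠ δ : ℝ≥0 in 𝓝[>] 0, 0 < x + (δ ^ 2 : ℝ≥0) * w ↔ 0 < x := by
    have hsum := hlim (fun δ => x + (δ ^ 2 : ℝ≥0) * w) (by fun_prop)
    simp only [ne_eq, OfNat.ofNat_ne_zero, not_false_eq_true, zero_pow, NNReal.coe_zero, zero_mul,
      add_zero] at hsum
    rcases hx.lt_or_gt with hneg | hpos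
    · filter_upwards [hsum.eventually_lt_const hneg] with δ hδ
      exact iff_of_false hδ.not_gt hneg.not_gt
    · filter_upwards [hsum.eventually_const_lt hpos] with δ hδ
      exact iff_of_true hδ hpos
  have hright : ∀ᶠ δ : ℝ≥0 in 𝓝[>] 0, x + (δ ^ 2 : ℝ≥0) * w ≤ t + δ ↔ x ≤ t := by
    rcases le_or_gt x t with hxt | hxt
    -- The widening `δ` of the interval beats the perturbation `δ ^ 2 * w`.
    · have hmul := hlim (fun δ => δ * w) (by fun_prop)
      filter_upwards [hmul.eventually_lt_const (u := 1) (by simp)] with δ hδ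
      refine iff_of_true (add_le_add hxt ?_) hxt
      push_cast
      nlinarith [δ.coe_nonneg]
    · have hdiff := hlim (fun δ => x + (δ ^ 2 : ℝ≥0) * w - (t + δ)) (by fun_prop)
      filter_upwards [hdiff.eventually_const_lt (u := 0) (by simpa using hxt)] with δ hδ
      exact iff_of_false (by linarith) hxt.not_ge
  filter_upwards [hleft, hright] with δ hl hr
  exact and_congr hl hr

lemma tendsto_mul_smoothCutoff (t x : ℝ) :
    Tendsto (fun δ : ℝ≥0 => x * smoothCutoff (δ ^ 2) (t + δ) x) (𝓝[>] 0)
      (𝓝 ((Ioc 0 t).indicator id x)) := by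
  rcases eq_or_ne x 0 with rfl | hx
  · simp
  have hid : (Ioc 0 t).indicator id x = x * (Ioc 0 t).indicator (fun _ => 1) x := by
    rw [← indicator_const_mul, mul_one]
    rfl
  rw [hid]
  refine Tendsto.const_mul x ?_
  have hlim := tendsto_integral_filter_of_dominated_convergence (μ := gaussianReal 0 1)
    (F := fun (δ : ℝ≥0) w => (Ioc 0 (t + δ)).indicator (fun _ => (1 : ℝ)) (x + (δ ^ 2 : ℝ≥0) * w))
    (l := 𝓝[>] 0) (f := fun _ => (Ioc 0 t).indicator (fun _ => 1) x) (fun _ => 1)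
    (Eventually.of_forall fun δ => ((measurable_const.indicator measurableSet_Ioc).comp
      (by fun_prop)).aestronglyMeasurable)
    (Eventually.of_forall fun δ => Eventually.of_forall fun w =>
      (norm_indicator_le_norm_self _ _).trans norm_one.le)
    (integrable_const 1)
    (Eventually.of_forall fun w => tendsto_const_nhds.congr' ?_)
  · simpa only [← smoothCutoff_eq_integral, integral_const, probReal_univ, one_smul]
      using hlim
  · filter_upwards [eventually_add_sq_mul_mem_Ioc_iff (t := t) hx w] with δ hδ
    simp only [indicator, hδ]

end SmoothCutoff

/-! ### Covariances of truncated variables -/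

section Truncation

open ProbabilityTheory
open scoped NNReal

variable {Ω : Type*} [MeasurableSpace Ω] {P : Measure Ω} [IsProbabilityMeasure P]

lemma tendsto_covariance_of_dominated {ι : Type*} {l : Filter ι} [l.NeBot] [l.IsCountablyGenerated]
    {X Y : ι → Ω → ℝ} {X' Y' : Ω → ℝ} {c d : ℝ} (hX : ∀ i, AEStronglyMeasurable (X i) P)
    (hY : ∀ i, AEStronglyMeasurable (Y i) P) (hXc : ∀ᶠ i in l, ∀ ω, ‖X i ω‖ ≤ c)
    (hYc : ∀ᶠ i in l, ∀ ω, ‖Y i ω‖ ≤ d) (hXX' : ∀ ω, Tendsto (X · ω) l (𝓝 (X' ω)))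
    (hYY' : ∀ ω, Tendsto (Y · ω) l (𝓝 (Y' ω))) :
    Tendsto (fun i => cov[X i, Y i; P]) l (𝓝 cov[X', Y'; P]) := by
  have hX' : MemLp X' 2 P := .of_bound
    (aestronglyMeasurable_of_tendsto_ae l hX (Eventually.of_forall hXX')) c
    (Eventually.of_forall fun ω => le_of_tendsto (hXX' ω).norm (hXc.mono fun i hi => hi ω))
  have hY' : MemLp Y' 2 P := .of_bound
    (aestronglyMeasurable_of_tendsto_ae l hY (Eventually.of_forall hYY')) d
    (Eventually.of_forall fun ω => le_of_tendsto (hYY' ω).norm (hYc.mono fun i hi => hi ω))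
  have hlim : ∀ {Z : ι → Ω → ℝ} {Z' : Ω → ℝ} {k : ℝ}, (∀ i, AEStronglyMeasurable (Z i) P) →
      (∀ᶠ i in l, ∀ ω, ‖Z i ω‖ ≤ k) → (∀ ω, Tendsto (Z · ω) l (𝓝 (Z' ω))) →
      Tendsto (fun i => ∫ ω, Z i ω ∂P) l (𝓝 (∫ ω, Z' ω ∂P)) := fun hZ hk hZZ' =>
    tendsto_integral_filter_of_dominated_convergence _ (Eventually.of_forall hZ)
      (hk.mono fun i hi => Eventually.of_forall hi) (integrable_const _)
      (Eventually.of_forall hZZ')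
  rw [covariance_eq_sub hX' hY']
  refine ((hlim (Z := fun i => X i * Y i) (k := c * d) (fun i => (hX i).mul (hY i)) ?_
    fun ω => (hXX' ω).mul (hYY' ω)).sub
      ((hlim hX hXc hXX').mul (hlim hY hYc hYY'))).congr' ?_
  · filter_upwards [hXc, hYc] with i hx hy ω
    exact (norm_mul_le _ _).trans
      (mul_le_mul (hx ω) (hy ω) (norm_nonneg _) ((norm_nonneg _).trans (hx ω)))
  · filter_upwards [hXc, hYc] with i hx hy
    exact (covariance_eq_sub (.of_bound (hX i) c (Eventually.of_forall hx))
      (.of_bound (hY i) d (Eventually.of_forall hy))).symm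

lemma abs_covariance_sub_sub_le {X X' Y Y' : Ω → ℝ} {B : ℝ} (hX : MemLp X 2 P) (hX' : MemLp X' 2 P)
    (hY : MemLp Y 2 P) (hY' : MemLp Y' 2 P) (hXY : |cov[X, Y; P]| ≤ B) (hXY' : |cov[X, Y'; P]| ≤ B)
    (hX'Y : |cov[X', Y; P]| ≤ B) (hX'Y' : |cov[X', Y'; P]| ≤ B) :
    |cov[fun ω => X ω - X' ω, fun ω => Y ω - Y' ω; P]| ≤ 4 * B := by
  rw [covariance_fun_sub_fun_sub hX hX' hY hY']
  rw [abs_le] at *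
  constructor <;> linarith

variable {S : Type*} [MeasurableSpace S] {α ε M t t' : ℝ} {μ : Measure S} {f g : S → ℝ}
  {ξ η : Ω → ℝ}

lemma IsSpectralPair.abs_covariance_indicator_Ioc_zero_le [SFinite μ]
    (h : IsSpectralPair α ε M μ f g) (hJ : JointSAS α μ f g P ξ η) (hξ : Measurable ξ)
    (hη : Measurable η) (ht : 0 < t) (ht' : 0 < t') :
    |cov[fun ω => (Ioc 0 t).indicator id (ξ ω), fun ω => (Ioc 0 t').indicator id (η ω); P]| ≤
      testCovConst α ε M * (t ^ (1 - α / 2) * t' ^ (1 - α / 2)) *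
        (dep1 α μ f g + dep2 α μ f g) := by
  have hbdd : ∀ r : ℝ, 0 < r → ∀ᶠ δ : ℝ≥0 in 𝓝[>] 0, ∀ x,
      ‖x * smoothCutoff (δ ^ 2) (r + δ) x‖ ≤ r + 1 + ∫ w, |w| ∂gaussianReal 0 1 := fun r hr => by
    filter_upwards [(eventually_lt_nhds zero_lt_one).filter_mono nhdsWithin_le_nhds] with δ hδ x
    have hδ' : (δ : ℝ) ≤ 1 := hδ.le
    have hG : 0 ≤ ∫ w, |w| ∂gaussianReal 0 1 := integral_nonneg fun w => abs_nonneg w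
    refine (abs_mul_smoothCutoff_le (by positivity) x).trans (add_le_add (by gcongr) ?_)
    exact mul_le_of_le_one_left hG (pow_le_one₀ δ.coe_nonneg hδ')
  have hmeas : ∀ (r : ℝ) (δ : ℝ≥0), Measurable fun x => x * smoothCutoff (δ ^ 2) (r + δ) x :=
    fun r δ => measurable_id.mul (measurable_smoothCutoff _ _)
  have hrpow : ∀ r : ℝ, 0 < r →
      Tendsto (fun δ : ℝ≥0 => (r + δ) ^ (1 - α / 2)) (𝓝[>] 0) (𝓝 (r ^ (1 - α / 2))) := by
    intro r hr
    have hadd : Tendsto (fun δ : ℝ≥0 => r + δ) (𝓝[>] 0) (𝓝 (r + (0 : ℝ≥0))) :=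
      (by fun_prop : Continuous fun δ : ℝ≥0 => r + (δ : ℝ)).continuousAt.tendsto.mono_left
        nhdsWithin_le_nhds
    rw [NNReal.coe_zero, add_zero] at hadd
    exact hadd.rpow_const (Or.inl hr.ne')
  refine le_of_tendsto_of_tendsto (tendsto_covariance_of_dominated (l := 𝓝[>] (0 : ℝ≥0))
    (fun δ => ((hmeas t δ).comp hξ).aestronglyMeasurable)
    (fun δ => ((hmeas t' δ).comp hη).aestronglyMeasurable)
    ((hbdd t ht).mono fun δ hδ ω => hδ _) ((hbdd t' ht').mono fun δ hδ ω => hδ _)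
    (fun ω => tendsto_mul_smoothCutoff t (ξ ω)) fun ω => tendsto_mul_smoothCutoff t' (η ω)).abs
    ((((hrpow t ht).mul (hrpow t' ht')).const_mul _).mul_const _) ?_
  filter_upwards [self_mem_nhdsWithin] with δ hδ
  exact h.abs_covariance_mul_cutoff_le hJ hξ.aemeasurable hη.aemeasurable
    (isCutoffTransform_smoothCutoffTransform (pow_pos hδ 2) (by positivity))
    (isCutoffTransform_smoothCutoffTransform (pow_pos hδ 2) (by positivity))
    (trigIntegral_smoothCutoffTransform (pow_pos hδ 2) (by positivity))
    (trigIntegral_smoothCutoffTransform (pow_pos hδ 2) (by positivity))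

lemma indicator_Ioc_id_eq_sub {b r : ℝ} (hb : 0 ≤ b) (hbr : b ≤ r) (x : ℝ) :
    (Ioc b r).indicator id x = (Ioc 0 r).indicator id x - (Ioc 0 b).indicator id x := by
  have hdiff : Ioc b r = Ioc 0 r \ Ioc 0 b := by
    ext y
    grind
  rw [hdiff, indicator_sdiff (Ioc_subset_Ioc_right hbr), Pi.sub_apply]

lemma memLp_indicator_id_comp {E : Set ℝ} (hE : MeasurableSet E) {c : ℝ} (hc : ∀ x ∈ E, |x| ≤ c)
    (hξ : Measurable ξ) : MemLp (fun ω => E.indicator id (ξ ω)) 2 P := by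
  refine .of_bound ((measurable_id.indicator hE).comp hξ).aestronglyMeasurable (max c 0)
    (Eventually.of_forall fun ω => ?_)
  by_cases hω : ξ ω ∈ E
  · rw [indicator_of_mem hω]
    exact (hc _ hω).trans (le_max_left _ _)
  · rw [indicator_of_notMem hω, norm_zero]
    exact le_max_right _ _

lemma IsSpectralPair.abs_covariance_indicator_Ioc_le [SFinite μ] {b b' r r' : ℝ}
    (h : IsSpectralPair α ε M μ f g) (hJ : JointSAS α μ f g P ξ η) (hξ : Measurable ξ)
    (hη : Measurable η) (hb : 0 < b) (hb' : 0 < b') (hbr : b ≤ r) (hbr' : b' ≤ r') :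
    |cov[fun ω => (Ioc b r).indicator id (ξ ω), fun ω => (Ioc b' r').indicator id (η ω); P]| ≤
      4 * testCovConst α ε M * (r ^ (1 - α / 2) * r' ^ (1 - α / 2)) *
        (dep1 α μ f g + dep2 α μ f g) := by
  have hp : 0 ≤ 1 - α / 2 := by linarith [h.lt_two]
  have hD : 0 ≤ dep1 α μ f g + dep2 α μ f g :=
    add_nonneg (dep1_nonneg α μ f g) (dep2_nonneg α μ f g)
  have hcorner : ∀ {t t' : ℝ}, 0 < t → 0 < t' → t ≤ r → t' ≤ r' →
      |cov[fun ω => (Ioc 0 t).indicator id (ξ ω), fun ω => (Ioc 0 t').indicator id (η ω); P]| ≤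
        testCovConst α ε M * (r ^ (1 - α / 2) * r' ^ (1 - α / 2)) *
          (dep1 α μ f g + dep2 α μ f g) := fun ht ht' htr htr' => by
    refine (h.abs_covariance_indicator_Ioc_zero_le hJ hξ hη ht ht').trans
      (mul_le_mul_of_nonneg_right (mul_le_mul_of_nonneg_left ?_
        (testCovConst_nonneg h.one_lt h.bound_nonneg)) hD)
    have := ht.trans_le htr
    gcongr
  have hr := hb.trans_le hbr
  have hr' := hb'.trans_le hbr'
  have hLp : ∀ {ζ : Ω → ℝ} (t : ℝ), Measurable ζ →
      MemLp (fun ω => (Ioc 0 t).indicator id (ζ ω)) 2 P := fun t hζ =>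
    memLp_indicator_id_comp measurableSet_Ioc (c := t)
      (fun x hx => (abs_of_pos hx.1).trans_le hx.2) hζ
  simp only [indicator_Ioc_id_eq_sub hb.le hbr, indicator_Ioc_id_eq_sub hb'.le hbr']
  refine (abs_covariance_sub_sub_le (hLp r hξ) (hLp b hξ) (hLp r' hη) (hLp b' hη)
    (hcorner hr hr' le_rfl le_rfl) (hcorner hr hb' le_rfl hbr') (hcorner hb hr' hbr le_rfl)
    (hcorner hb hb' hbr hbr')).trans_eq (by ring)

lemma exists_seq_tendsto_indicator_Ioc {E : Set ℝ} {b t : ℝ} (hbt : b ≤ t) (hE : E ⊆ Ioc b t)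
    (hE' : ∀ x ∈ E, Ioc b x ⊆ E) :
    ∃ r : ℕ → ℝ, (∀ n, r n ∈ Icc b t) ∧
      ∀ x, Tendsto (fun n => (Ioc b (r n)).indicator id x) atTop (𝓝 (E.indicator id x)) := by
  rcases E.eq_empty_or_nonempty with rfl | hne
  · exact ⟨fun _ => b, fun _ => left_mem_Icc.2 hbt, fun x => by simp⟩
  have hbdd : BddAbove E := ⟨t, fun x hx => (hE hx).2⟩
  by_cases hmax : sSup E ∈ E
  · have hEq : E = Ioc b (sSup E) :=
      Subset.antisymm (fun x hx => ⟨(hE hx).1, le_csSup hbdd hx⟩) (hE' _ hmax)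
    refine ⟨fun _ => sSup E, fun _ => ⟨(hE hmax).1.le, (hE hmax).2⟩, fun x => ?_⟩
    simp only [← hEq]
    exact tendsto_const_nhds
  · obtain ⟨r, -, hr, hrE⟩ := exists_seq_tendsto_sSup hne hbdd
    refine ⟨r, fun n => ⟨(hE (hrE n)).1.le, (hE (hrE n)).2⟩, fun x => tendsto_const_nhds.congr' ?_⟩
    by_cases hx : x ∈ E
    · have hlt : x < sSup E := (le_csSup hbdd hx).lt_of_ne (ne_of_mem_of_not_mem hx hmax)
      filter_upwards [hr.eventually_const_lt hlt] with n hn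
      rw [indicator_of_mem hx, indicator_of_mem (show x ∈ Ioc b (r n) from ⟨(hE hx).1, hn.le⟩)]
    · refine Eventually.of_forall fun n => ?_
      simp only [indicator_of_notMem hx, indicator_of_notMem fun hxn => hx (hE' _ (hrE n) hxn)]

lemma IsSpectralPair.abs_covariance_indicator_le [SFinite μ] {b : ℝ} {E E' : Set ℝ}
    (h : IsSpectralPair α ε M μ f g) (hJ : JointSAS α μ f g P ξ η) (hξ : Measurable ξ)
    (hη : Measurable η) (hb : 0 < b) (hbt : b ≤ t) (hbt' : b ≤ t') (hE : E ⊆ Ioc b t)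
    (hEseg : ∀ x ∈ E, Ioc b x ⊆ E) (hE' : E' ⊆ Ioc b t') (hEseg' : ∀ x ∈ E', Ioc b x ⊆ E') :
    |cov[fun ω => E.indicator id (ξ ω), fun ω => E'.indicator id (η ω); P]| ≤
      4 * testCovConst α ε M * (t ^ (1 - α / 2) * t' ^ (1 - α / 2)) *
        (dep1 α μ f g + dep2 α μ f g) := by
  have hp : 0 ≤ 1 - α / 2 := by linarith [h.lt_two]
  have hD : 0 ≤ dep1 α μ f g + dep2 α μ f g :=
    add_nonneg (dep1_nonneg α μ f g) (dep2_nonneg α μ f g)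
  obtain ⟨r, hr, hrE⟩ := exists_seq_tendsto_indicator_Ioc hbt hE hEseg
  obtain ⟨r', hr', hrE'⟩ := exists_seq_tendsto_indicator_Ioc hbt' hE' hEseg'
  have hbdd : ∀ {u v : ℝ}, b ≤ u → u ≤ v → ∀ x, ‖(Ioc b u).indicator id x‖ ≤ v := by
    intro u v hbu huv x
    by_cases hx : x ∈ Ioc b u
    · rw [indicator_of_mem hx, id, Real.norm_of_nonneg (hb.trans hx.1).le]
      exact hx.2.trans huv
    · rw [indicator_of_notMem hx, norm_zero]
      linarith
  refine le_of_tendsto (tendsto_covariance_of_dominated (l := atTop)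
    (fun n => ((measurable_id.indicator measurableSet_Ioc).comp hξ).aestronglyMeasurable)
    (fun n => ((measurable_id.indicator measurableSet_Ioc).comp hη).aestronglyMeasurable)
    (Eventually.of_forall fun n ω => hbdd (hr n).1 (hr n).2 _)
    (Eventually.of_forall fun n ω => hbdd (hr' n).1 (hr' n).2 _)
    (fun ω => hrE (ξ ω)) fun ω => hrE' (η ω)).abs (Eventually.of_forall fun n => ?_)
  refine (h.abs_covariance_indicator_Ioc_le hJ hξ hη hb hb (hr n).1 (hr' n).1).trans
    (mul_le_mul_of_nonneg_right (mul_le_mul_of_nonneg_left ?_ (mul_nonneg zero_le_four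
      (testCovConst_nonneg h.one_lt h.bound_nonneg))) hD)
  have hr0 := hb.le.trans (hr n).1
  have hr0' := hb.le.trans (hr' n).1
  have ht0 := hb.le.trans hbt
  exact mul_le_mul (Real.rpow_le_rpow hr0 (hr n).2 hp) (Real.rpow_le_rpow hr0' (hr' n).2 hp)
    (by positivity) (by positivity)

end Truncation

/-! ### Moments of stable variables -/

section Moments

open ProbabilityTheory

variable {ν : Measure ℝ} {α M : ℝ}

lemma measureReal_lt_abs_le_of_charFun [IsProbabilityMeasure ν] (hα : 0 ≤ α) (hM : 0 ≤ M)
    (hν : ∀ u, ‖1 - charFun ν u‖ ≤ M * |u| ^ α) {r : ℝ} (hr : 0 < r) :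
    ν.real {x | r < |x|} ≤ 2 * M * 2 ^ α * r ^ (-α) := by
  have hint : ‖∫ u in -2 * r⁻¹..2 * r⁻¹, 1 - charFun ν u‖ ≤
      M * (2 * r⁻¹) ^ α * |2 * r⁻¹ - -2 * r⁻¹| := by
    refine intervalIntegral.norm_integral_le_of_norm_le_const fun u hu => (hν u).trans ?_
    have hu' : |u| ≤ 2 * r⁻¹ := by
      rw [uIoc_of_le (by linarith [inv_pos.2 hr])] at hu
      exact abs_le.2 ⟨by linarith [hu.1], hu.2⟩
    gcongr
  calc ν.real {x | r < |x|} ≤ 2⁻¹ * r * ‖∫ u in -2 * r⁻¹..2 * r⁻¹, 1 - charFun ν u‖ :=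
        measureReal_abs_gt_le_integral_charFun hr
    _ ≤ 2⁻¹ * r * (M * (2 * r⁻¹) ^ α * |2 * r⁻¹ - -2 * r⁻¹|) := by gcongr
    _ = 2 * M * 2 ^ α * r ^ (-α) := by
        rw [neg_mul, sub_neg_eq_add, abs_of_pos (by positivity), Real.mul_rpow zero_le_two
          (by positivity), Real.inv_rpow hr.le, Real.rpow_neg hr.le]
        field_simp
        ring

lemma integrable_abs_rpow_of_tail [IsProbabilityMeasure ν] {C q : ℝ} (hq : 0 < q) (hqα : q < α)
    (hν : ∀ r, 0 < r → ν.real {x | r < |x|} ≤ C * r ^ (-α)) :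
    Integrable (fun x => |x| ^ q) ν := by
  refine ⟨(by fun_prop : Measurable _).aestronglyMeasurable, ?_⟩
  rw [hasFiniteIntegral_iff_ofReal (Eventually.of_forall fun x => by positivity),
    lintegral_rpow_eq_lintegral_meas_lt_mul ν (Eventually.of_forall fun x => abs_nonneg x)
      (by fun_prop) hq]
  refine ENNReal.mul_lt_top ENNReal.ofReal_lt_top ?_
  have hnear : IntegrableOn (fun r : ℝ => r ^ (q - 1)) (Ioc 0 1) :=
    (intervalIntegrable_iff_integrableOn_Ioc_of_le zero_le_one).1
      (intervalIntegral.intervalIntegrable_rpow' (by linarith))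
  have hfar : IntegrableOn (fun r : ℝ => C * r ^ (q - 1 - α)) (Ioi 1) :=
    (integrableOn_Ioi_rpow_of_lt (by linarith) one_pos).const_mul C
  rw [← Ioc_union_Ioi_eq_Ioi (zero_le_one' ℝ)]
  refine (lintegral_union_le _ _ _).trans_lt (ENNReal.add_lt_top.2
    ⟨(setLIntegral_mono_ae' measurableSet_Ioc (Eventually.of_forall fun r _ => ?_)).trans_lt
      hnear.lintegral_lt_top,
    (setLIntegral_mono_ae' measurableSet_Ioi (Eventually.of_forall fun r hr => ?_)).trans_lt
      hfar.lintegral_lt_top⟩)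
  · exact mul_le_of_le_one_left' prob_le_one
  · have hr0 : 0 < r := one_pos.trans hr
    have hsplit : C * r ^ (q - 1 - α) = C * r ^ (-α) * r ^ (q - 1) := by
      rw [mul_assoc, ← rpow_add hr0, neg_add_eq_sub]
    rw [← ofReal_measureReal, ← ENNReal.ofReal_mul measureReal_nonneg, hsplit]
    exact ENNReal.ofReal_le_ofReal
      (mul_le_mul_of_nonneg_right (hν r hr0) (rpow_nonneg hr0.le _))

variable {Ω S : Type*} [MeasurableSpace Ω] [MeasurableSpace S] {P : Measure Ω}
  {μ : Measure S} {f g : S → ℝ} {ξ η : Ω → ℝ}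

lemma JointSAS.swap (hJ : JointSAS α μ f g P ξ η) : JointSAS α μ g f P η ξ := fun u v => by
  simpa only [add_comm] using hJ v u

lemma JointSAS.neg_left (hJ : JointSAS α μ f g P ξ η) : JointSAS α μ (-f) g P (-ξ) η :=
  fun u v => by
    simpa only [Pi.neg_apply, mul_neg, neg_mul] using hJ (-u) v

lemma JointSAS.charFun_map_left (hJ : JointSAS α μ f g P ξ η) (hα : 0 < α) (hξ : Measurable ξ)
    (u : ℝ) : charFun (P.map ξ) u = rexp (-(|u| ^ α * nrm α μ f ^ α)) := by
  have hscale : nrm α μ (fun s => u * f s) ^ α = |u| ^ α * nrm α μ f ^ α := by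
    simp only [nrm_rpow hα, abs_mul, mul_rpow (abs_nonneg _) (abs_nonneg _), integral_const_mul]
  have hJu := hJ u 0
  simp only [zero_mul, add_zero, hscale] at hJu
  rw [charFun_apply_real, integral_map hξ.aemeasurable (by fun_prop), Complex.ofReal_exp,
    Complex.ofReal_neg, ← hJu]
  refine integral_congr_ae (Eventually.of_forall fun ω => ?_)
  push_cast
  ring_nf

lemma JointSAS.norm_one_sub_charFun_le (hJ : JointSAS α μ f g P ξ η) (hα : 0 < α)
    (hξ : Measurable ξ) (u : ℝ) :
    ‖1 - charFun (P.map ξ) u‖ ≤ nrm α μ f ^ α * |u| ^ α := by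
  have hexp : 0 ≤ |u| ^ α * nrm α μ f ^ α := by
    rw [nrm_rpow hα]; positivity
  rw [mul_comm, hJ.charFun_map_left hα hξ, ← Complex.ofReal_one, ← Complex.ofReal_sub,
    Complex.norm_real, norm_of_nonneg (sub_nonneg.2 (exp_le_one_iff.2 (neg_nonpos.2 hexp)))]
  linarith [add_one_le_exp (-(|u| ^ α * nrm α μ f ^ α))]

lemma JointSAS.integrable_abs_rpow [IsProbabilityMeasure P] (hJ : JointSAS α μ f g P ξ η)
    {q : ℝ} (hq : 0 < q) (hqα : q < α) (hξ : Measurable ξ) :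
    Integrable (fun ω => |ξ ω| ^ q) P := by
  have hα := hq.trans hqα
  have : IsProbabilityMeasure (P.map ξ) := Measure.isProbabilityMeasure_map hξ.aemeasurable
  exact (integrable_abs_rpow_of_tail hq hqα fun r hr => measureReal_lt_abs_le_of_charFun hα.le
    (rpow_nonneg (rpow_nonneg (integral_nonneg fun _ => by positivity) _) _)
    (hJ.norm_one_sub_charFun_le hα hξ) hr).comp_measurable hξ

end Moments

/-! ### Layer-cake decomposition of covariances -/

section LayerCake

open ProbabilityTheory

variable {Ω Λ : Type*} [MeasurableSpace Ω] [MeasurableSpace Λ] {P : Measure Ω} {ν : Measure Λ}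
  {X : Λ → Ω → ℝ} {Z : Ω → ℝ} {w : Λ → ℝ}

lemma covariance_eq_integral_mul_sub {X : Ω → ℝ} (hZ : Integrable Z P) [IsProbabilityMeasure P]
    (hXZ : Integrable (fun ω => X ω * (Z ω - P[Z])) P) :
    cov[X, Z; P] = ∫ ω, X ω * (Z ω - P[Z]) ∂P := by
  have hcentred : ∫ ω, (Z ω - P[Z]) ∂P = 0 := by
    rw [integral_sub hZ (integrable_const _)]; simp
  simp only [covariance, sub_mul]
  refine (integral_sub hXZ ((hZ.sub (integrable_const _)).const_mul _)).trans ?_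
  simp only [Pi.sub_apply, integral_const_mul, hcentred, mul_zero, sub_zero]

lemma abs_covariance_integral_le [IsProbabilityMeasure P] [SFinite ν]
    (hX : AEStronglyMeasurable (Function.uncurry X) (ν.prod P))
    (hXint : ∀ᵐ ω ∂P, Integrable (X · ω) ν) (hXabs : MemLp (fun ω => ∫ l, |X l ω| ∂ν) 2 P)
    (hZ : MemLp Z 2 P) (hw : Integrable w ν) (hle : ∀ᵐ l ∂ν, |cov[X l, Z; P]| ≤ w l) :
    |cov[fun ω => ∫ l, X l ω ∂ν, Z; P]| ≤ ∫ l, w l ∂ν := by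
  have hZ0 : MemLp (fun ω => Z ω - P[Z]) 2 P := hZ.sub (memLp_const _)
  have hprod : Integrable (fun p : Λ × Ω => X p.1 p.2 * (Z p.2 - P[Z])) (ν.prod P) := by
    have hmeas : AEStronglyMeasurable (fun p : Λ × Ω => X p.1 p.2 * (Z p.2 - P[Z])) (ν.prod P) :=
      hX.mul hZ0.1.comp_snd
    refine (integrable_prod_iff' hmeas).2 ⟨?_, ?_⟩
    · filter_upwards [hXint] with ω hω using hω.mul_const _
    · simp only [norm_mul, integral_mul_const]
      exact hXabs.integrable_mul hZ0.norm
  have hZint := hZ.integrable one_le_two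
  have hslice : ∀ᵐ l ∂ν, cov[X l, Z; P] = ∫ ω, X l ω * (Z ω - P[Z]) ∂P := by
    filter_upwards [hprod.prod_right_ae] with l hl using covariance_eq_integral_mul_sub hZint hl
  have hmean : Integrable (fun ω => (∫ l, X l ω ∂ν) * (Z ω - P[Z])) P := by
    simpa only [integral_mul_const] using hprod.integral_prod_right
  calc |cov[fun ω => ∫ l, X l ω ∂ν, Z; P]|
      = |∫ ω, ∫ l, X l ω * (Z ω - P[Z]) ∂ν ∂P| := by
        simp only [covariance_eq_integral_mul_sub hZint hmean, integral_mul_const]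
    _ = |∫ l, ∫ ω, X l ω * (Z ω - P[Z]) ∂P ∂ν| := by rw [← integral_integral_swap hprod]
    _ = |∫ l, cov[X l, Z; P] ∂ν| := by rw [integral_congr_ae hslice]
    _ ≤ ∫ l, w l ∂ν := norm_integral_le_of_norm_le (f := fun l => cov[X l, Z; P]) hw hle

end LayerCake

/-! ### Tail profiles -/

/-- `h` is a nonnegative function carried by `(b, ∞)`, nonincreasing there and at most
`c * x ^ (β - 1)`. It plays the role of `x ↦ K x / x` on one half-line, for `K` satisfying
(K1) and (K2). -/
structure IsTailProfile (b c β : ℝ) (h : ℝ → ℝ) : Prop where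
  nonneg : ∀ x, 0 ≤ h x
  eq_zero : ∀ x ≤ b, h x = 0
  antitoneOn : AntitoneOn h (Ioi b)
  le_rpow : ∀ x, b < x → h x ≤ c * x ^ (β - 1)

section TailProfile

variable {b c β : ℝ} {h K : ℝ → ℝ}

lemma le_div_rpow_inv_iff {l x : ℝ} (hx : 0 < x) (hl : 0 < l) (hc : 0 ≤ c) (hβ : β < 1) :
    x ≤ (c / l) ^ (1 - β)⁻¹ ↔ l ≤ c * x ^ (β - 1) := by
  rw [le_rpow_inv_iff_of_pos hx.le (div_nonneg hc hl.le) (sub_pos.2 hβ), le_div_iff₀ hl, mul_comm,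
    ← le_div_iff₀ (rpow_pos_of_pos hx _), div_eq_mul_inv, ← rpow_neg hx.le, neg_sub]

lemma nonneg_of_antitoneOn_of_abs_le_rpow {e : ℝ} (he : e < 0) (hanti : AntitoneOn h (Ioi b))
    (hgrowth : ∀ x, b < x → |h x| ≤ c * x ^ e) {x : ℝ} (hx : b < x) : 0 ≤ h x := by
  have hbound : Tendsto (fun y : ℝ => c * y ^ e) atTop (𝓝 0) := by
    simpa only [neg_neg, mul_zero] using (tendsto_rpow_neg_atTop (neg_pos.2 he)).const_mul c
  have hzero : Tendsto h atTop (𝓝 0) :=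
    squeeze_zero_norm' ((eventually_gt_atTop b).mono hgrowth) hbound
  exact le_of_tendsto hzero ((eventually_ge_atTop x).mono fun y hy =>
    hanti hx (hx.trans_le hy) hy)

lemma isTailProfile_indicator_div (hb : 0 ≤ b) (hβ : β < 1)
    (hgrowth : ∀ x, b < x → |K x| ≤ c * x ^ β) (hanti : AntitoneOn (fun x => K x / x) (Ioi b)) :
    IsTailProfile b c β ((Ioi b).indicator fun x => K x / x) := by
  have hquot : ∀ x, b < x → |K x / x| ≤ c * x ^ (β - 1) := fun x hx => by
    have hx0 := hb.trans_lt hx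
    rw [abs_div, abs_of_pos hx0, rpow_sub_one hx0.ne', ← mul_div_assoc]
    exact div_le_div_of_nonneg_right (hgrowth x hx) hx0.le
  refine ⟨fun x => indicator_nonneg (fun y hy => ?_) x,
    fun x hx => indicator_of_notMem (notMem_Ioi.2 hx) _, hanti.congr fun x hx => ?_,
    fun x hx => ?_⟩
  · exact nonneg_of_antitoneOn_of_abs_le_rpow (sub_neg.2 hβ) hanti hquot hy
  · exact (indicator_of_mem hx _).symm
  · rw [indicator_of_mem (mem_Ioi.2 hx)]
    exact (le_abs_self _).trans (hquot x hx)

namespace IsTailProfile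

lemma lt_of_pos (hh : IsTailProfile b c β h) {x : ℝ} (hx : 0 < h x) : b < x :=
  not_le.1 fun hxb => hx.ne' (hh.eq_zero x hxb)

lemma const_nonneg (hh : IsTailProfile b c β h) (hb : 0 ≤ b) : 0 ≤ c := by
  have hb1 : 0 < (b + 1) ^ (β - 1) := rpow_pos_of_pos (by linarith) _
  exact nonneg_of_mul_nonneg_left ((hh.nonneg _).trans (hh.le_rpow _ (lt_add_one b))) hb1

lemma measurable (hh : IsTailProfile b c β h) : Measurable h := by
  refine measurable_of_Ioi fun a => ?_
  rcases lt_or_ge a 0 with ha | ha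
  · convert MeasurableSet.univ
    exact eq_univ_of_forall fun x => ha.trans_le (hh.nonneg x)
  · have : OrdConnected (h ⁻¹' Ioi a) := ⟨fun x hx y hy z hz => by
      have hbx := hh.lt_of_pos (ha.trans_lt hx)
      have hbz := hbx.trans_le hz.1
      exact lt_of_lt_of_le hy (hh.antitoneOn hbz (hbz.trans_le hz.2) hz.2)⟩
    exact this.measurableSet

lemma le_rpow_threshold (hh : IsTailProfile b c β h) (hb : 0 < b) (hβ : β ≤ 1) (x : ℝ) :
    h x ≤ c * b ^ (β - 1) := by
  have hc := hh.const_nonneg hb.le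
  rcases le_or_gt x b with hx | hx
  · rw [hh.eq_zero x hx]; positivity
  · exact (hh.le_rpow x hx).trans (mul_le_mul_of_nonneg_left
      (rpow_le_rpow_of_nonpos hb hx.le (by linarith)) hc)

lemma superlevel_subset_Ioc (hh : IsTailProfile b c β h) (hb : 0 < b) (hβ : β < 1) {l : ℝ}
    (hl : 0 < l) : {x | l < h x} ⊆ Ioc b ((c / l) ^ (1 - β)⁻¹) := fun x hx => by
  have hbx := hh.lt_of_pos (hl.trans hx)
  exact ⟨hbx, (le_div_rpow_inv_iff (hb.trans hbx) hl (hh.const_nonneg hb.le) hβ).2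
    (hx.le.trans (hh.le_rpow x hbx))⟩

lemma Ioc_subset_superlevel (hh : IsTailProfile b c β h) {l x : ℝ} (hl : 0 ≤ l) (hx : l < h x) :
    Ioc b x ⊆ {y | l < h y} := fun _ hy =>
  lt_of_lt_of_le hx (hh.antitoneOn hy.1 (hh.lt_of_pos (hl.trans_lt hx)) hy.2)

end IsTailProfile

end TailProfile

section TailProfileCovariance

open ProbabilityTheory

variable {Ω : Type*} [MeasurableSpace Ω] {P : Measure Ω} {ξ η Z : Ω → ℝ} {h k : ℝ → ℝ}
  {α β b c : ℝ}

lemma setIntegral_Ioc_ite_lt {y r : ℝ} (hy : 0 ≤ y) (hyr : y ≤ r) (a : ℝ) :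
    ∫ l in Ioc 0 r, (if l < y then a else 0) = a * y := by
  have hset : Iio y ∩ Ioc 0 r = Ioo 0 y := by
    ext l
    simp only [mem_inter_iff, mem_Iio, mem_Ioc, mem_Ioo]
    exact ⟨fun hl => ⟨hl.2.1, hl.1⟩, fun hl => ⟨hl.2, hl.1, hl.2.le.trans hyr⟩⟩
  change ∫ l in Ioc 0 r, (Iio y).indicator (fun _ => a) l = a * y
  rw [integral_indicator measurableSet_Iio, Measure.restrict_restrict measurableSet_Iio, hset,
    setIntegral_const, Real.volume_real_Ioo_of_le hy, sub_zero, smul_eq_mul, mul_comm]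

namespace IsTailProfile

lemma sq_mul_le (hh : IsTailProfile b c β h) (hb : 0 < b) {q : ℝ} (hq : 2 * β ≤ q) (x : ℝ) :
    (x * h x) ^ 2 ≤ c ^ 2 * b ^ (2 * β - q) * |x| ^ q := by
  rcases le_or_gt x b with hx | hx
  · rw [hh.eq_zero x hx, mul_zero, zero_pow two_ne_zero]
    positivity
  have hx0 := hb.trans hx
  have hxh : x * h x ≤ c * x ^ β := by
    calc x * h x ≤ x * (c * x ^ (β - 1)) := mul_le_mul_of_nonneg_left (hh.le_rpow x hx) hx0.le
      _ = c * x ^ β := by rw [rpow_sub_one hx0.ne']; field_simp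
  calc (x * h x) ^ 2 ≤ (c * x ^ β) ^ 2 := pow_le_pow_left₀ (mul_nonneg hx0.le (hh.nonneg x)) hxh 2
    _ = c ^ 2 * (x ^ (2 * β - q) * x ^ q) := by
        rw [← rpow_add hx0, sub_add_cancel, mul_pow, mul_comm 2 β, rpow_mul hx0.le, rpow_two]
    _ ≤ c ^ 2 * (b ^ (2 * β - q) * x ^ q) := by
        refine mul_le_mul_of_nonneg_left (mul_le_mul_of_nonneg_right ?_ (by positivity))
          (sq_nonneg c)
        exact rpow_le_rpow_of_nonpos hb hx.le (by linarith)
    _ = c ^ 2 * b ^ (2 * β - q) * |x| ^ q := by rw [abs_of_pos hx0, mul_assoc]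

lemma memLp_mul_comp (hh : IsTailProfile b c β h) (hb : 0 < b) {q : ℝ} (hq : 2 * β ≤ q)
    (hξ : Measurable ξ) (hint : Integrable (fun ω => |ξ ω| ^ q) P) :
    MemLp (fun ω => ξ ω * h (ξ ω)) 2 P := by
  have hmeas : Measurable fun ω => ξ ω * h (ξ ω) := hξ.mul (hh.measurable.comp hξ)
  refine (memLp_two_iff_integrable_sq hmeas.aestronglyMeasurable).2
    ((hint.const_mul (c ^ 2 * b ^ (2 * β - q))).mono' (hmeas.pow_const 2).aestronglyMeasurable
      (Eventually.of_forall fun ω => ?_))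
  rw [norm_of_nonneg (sq_nonneg _)]
  exact hh.sq_mul_le hb hq (ξ ω)

lemma memLp_indicator_superlevel [IsProbabilityMeasure P] (hh : IsTailProfile b c β h) (hb : 0 < b)
    (hβ : β < 1) {l : ℝ} (hl : 0 < l) (hξ : Measurable ξ) :
    MemLp (fun ω => {x | l < h x}.indicator id (ξ ω)) 2 P :=
  memLp_indicator_id_comp (measurableSet_lt measurable_const hh.measurable)
    (fun x hx => by
      have hx' := hh.superlevel_subset_Ioc hb hβ hl hx
      exact (abs_of_pos (hb.trans hx'.1)).trans_le hx'.2) hξ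

lemma abs_covariance_mul_comp_le [IsProbabilityMeasure P] (hh : IsTailProfile b c β h) (hb : 0 < b)
    (hβ : β ≤ 1) (hξ : Measurable ξ) (hξh : MemLp (fun ω => ξ ω * h (ξ ω)) 2 P) (hZ : MemLp Z 2 P)
    {w : ℝ → ℝ} (hw : IntegrableOn w (Ioc 0 (c * b ^ (β - 1))))
    (hle : ∀ l ∈ Ioc 0 (c * b ^ (β - 1)),
      |cov[fun ω => {x | l < h x}.indicator id (ξ ω), Z; P]| ≤ w l) :
    |cov[fun ω => ξ ω * h (ξ ω), Z; P]| ≤ ∫ l in Ioc 0 (c * b ^ (β - 1)), w l := by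
  have hlayer : ∀ a x, ∫ l in Ioc 0 (c * b ^ (β - 1)), (if l < h x then a else 0) = a * h x :=
    fun a x => setIntegral_Ioc_ite_lt (hh.nonneg x) (hh.le_rpow_threshold hb hβ x) a
  have habs : ∀ l ω, |if l < h (ξ ω) then ξ ω else 0| = if l < h (ξ ω) then |ξ ω| else 0 :=
    fun l ω => by split_ifs <;> simp
  have hmeas : Measurable fun p : ℝ × Ω => if p.1 < h (ξ p.2) then ξ p.2 else 0 :=
    Measurable.ite (measurableSet_lt measurable_fst (hh.measurable.comp (hξ.comp measurable_snd)))
      (hξ.comp measurable_snd) measurable_const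
  have hcov := abs_covariance_integral_le (P := P) (Z := Z)
    (X := fun l ω => if l < h (ξ ω) then ξ ω else 0) hmeas.aestronglyMeasurable
    (Eventually.of_forall fun ω => ?_) ?_ hZ hw ((ae_restrict_mem measurableSet_Ioc).mono hle)
  · simpa only [hlayer] using hcov
  · exact .of_bound (hmeas.comp measurable_prodMk_right).aestronglyMeasurable |ξ ω|
      (Eventually.of_forall fun l => by simp only [norm_eq_abs, habs]; split_ifs <;> simp)
  · simp only [habs, hlayer]
    simpa only [norm_mul, norm_eq_abs, abs_of_nonneg (hh.nonneg _)] using hξh.norm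

end IsTailProfile

lemma div_rpow_rpow_eq_mul {l : ℝ} (hc : 0 ≤ c) (hl : 0 ≤ l) (p q : ℝ) :
    ((c / l) ^ p) ^ q = c ^ (p * q) * l ^ (-(p * q)) := by
  rw [← rpow_mul (div_nonneg hc hl), div_rpow hc hl, rpow_neg hl, div_eq_mul_inv]

lemma integrableOn_div_rpow_rpow (hc : 0 ≤ c) {p q : ℝ} (hpq : p * q < 1) (r : ℝ) :
    IntegrableOn (fun l => ((c / l) ^ p) ^ q) (Ioc 0 r) := by
  have hint : IntegrableOn (fun l : ℝ => c ^ (p * q) * l ^ (-(p * q))) (Ioc 0 r) := by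
    rcases le_total 0 r with hr | hr
    · exact ((intervalIntegrable_iff_integrableOn_Ioc_of_le hr).1
        (intervalIntegral.intervalIntegrable_rpow' (by linarith))).const_mul _
    · rw [Ioc_eq_empty (not_lt.2 hr)]
      exact integrableOn_empty
  exact hint.congr_fun (fun l hl => (div_rpow_rpow_eq_mul hc hl.1.le p q).symm) measurableSet_Ioc

lemma setIntegral_div_rpow_rpow (hc : 0 ≤ c) {p q r : ℝ} (hpq : p * q < 1) (hr : 0 ≤ r) :
    ∫ l in Ioc 0 r, ((c / l) ^ p) ^ q = c ^ (p * q) * (r ^ (1 - p * q) / (1 - p * q)) := by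
  rw [setIntegral_congr_fun measurableSet_Ioc fun l hl => div_rpow_rpow_eq_mul hc hl.1.le p q,
    integral_const_mul, ← intervalIntegral.integral_of_le hr,
    integral_rpow (Or.inl (by linarith)), neg_add_eq_sub,
    zero_rpow (by linarith : 1 - p * q ≠ 0), sub_zero]

lemma setIntegral_level_rpow (hb : 0 < b) (hc : 0 ≤ c) (hβ1 : β < 1) (hβ : β < α / 2) :
    ∫ l in Ioc 0 (c * b ^ (β - 1)), ((c / l) ^ (1 - β)⁻¹) ^ (1 - α / 2) =
      c * (1 - β) / (α / 2 - β) * b ^ (β - α / 2) := by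
  have hβ0 : 1 - β ≠ 0 := by linarith
  have hrest : 1 - (1 - β)⁻¹ * (1 - α / 2) = (α / 2 - β) / (1 - β) := by
    field_simp
    ring
  have hpos : 0 < (α / 2 - β) / (1 - β) := div_pos (by linarith) (by linarith)
  have hcpow : c ^ ((1 - β)⁻¹ * (1 - α / 2)) * c ^ ((α / 2 - β) / (1 - β)) = c := by
    rw [← rpow_add' hc (by linarith), ← hrest, add_sub_cancel, rpow_one]
  have hbpow : (b ^ (β - 1)) ^ ((α / 2 - β) / (1 - β)) = b ^ (β - α / 2) := by
    rw [← rpow_mul hb.le]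
    congr 1
    field_simp
    ring
  rw [setIntegral_div_rpow_rpow hc (by linarith) (by positivity), hrest,
    mul_rpow hc (by positivity), hbpow, ← mul_div_assoc, ← mul_assoc, hcpow]
  field_simp

variable {S : Type*} [MeasurableSpace S] {ε M : ℝ} {μ : Measure S} {f g : S → ℝ}

lemma IsSpectralPair.abs_covariance_mul_tailProfile_le [SFinite μ] [IsProbabilityMeasure P]
    (hfg : IsSpectralPair α ε M μ f g) (hJ : JointSAS α μ f g P ξ η) (hξ : Measurable ξ)
    (hη : Measurable η) (hb : 0 < b) (hβ : β < α / 2) (hh : IsTailProfile b c β h)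
    (hk : IsTailProfile b c β k) (hξh : MemLp (fun ω => ξ ω * h (ξ ω)) 2 P)
    (hηk : MemLp (fun ω => η ω * k (η ω)) 2 P) :
    |cov[fun ω => ξ ω * h (ξ ω), fun ω => η ω * k (η ω); P]| ≤
      4 * testCovConst α ε M * (c * (1 - β) / (α / 2 - β)) ^ 2 * b ^ (2 * β - α) *
        (dep1 α μ f g + dep2 α μ f g) := by
  have hβ1 : β < 1 := by linarith [hfg.lt_two]
  have hc := hh.const_nonneg hb.le
  set T := 4 * testCovConst α ε M
  set D := dep1 α μ f g + dep2 α μ f g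
  set r := c * b ^ (β - 1)
  set w : ℝ → ℝ := fun l => ((c / l) ^ (1 - β)⁻¹) ^ (1 - α / 2)
  have hw : IntegrableOn w (Ioc 0 r) := integrableOn_div_rpow_rpow hc
    (by rw [inv_mul_lt_one₀ (by linarith)]; linarith) r
  have hlevel : ∀ l ∈ Ioc 0 r, ∀ m ∈ Ioc 0 r,
      |cov[fun ω => {x | m < k x}.indicator id (η ω),
        fun ω => {x | l < h x}.indicator id (ξ ω); P]| ≤ T * (w l * w m) * D := fun l hl m hm => by
    rw [covariance_comm]
    exact hfg.abs_covariance_indicator_le hJ hξ hη hb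
      ((le_div_rpow_inv_iff hb hl.1 hc hβ1).2 hl.2) ((le_div_rpow_inv_iff hb hm.1 hc hβ1).2 hm.2)
      (hh.superlevel_subset_Ioc hb hβ1 hl.1) (fun x => hh.Ioc_subset_superlevel hl.1.le)
      (hk.superlevel_subset_Ioc hb hβ1 hm.1) (fun x => hk.Ioc_subset_superlevel hm.1.le)
  have hslice : ∀ l ∈ Ioc 0 r, |cov[fun ω => {x | l < h x}.indicator id (ξ ω),
      fun ω => η ω * k (η ω); P]| ≤ T * (w l * ∫ m in Ioc 0 r, w m) * D := fun l hl => by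
    rw [covariance_comm, ← integral_const_mul, ← integral_const_mul, ← integral_mul_const]
    exact hk.abs_covariance_mul_comp_le hb hβ1.le hη hηk
      (hh.memLp_indicator_superlevel hb hβ1 hl.1 hξ)
      (((hw.const_mul (w l)).const_mul T).mul_const D) (hlevel l hl)
  refine (hh.abs_covariance_mul_comp_le hb hβ1.le hξ hξh hηk
    (((hw.mul_const _).const_mul T).mul_const D) hslice).trans_eq ?_
  rw [integral_mul_const, integral_const_mul, integral_mul_const,
    setIntegral_level_rpow hb hc hβ1 hβ, show 2 * β - α = β - α / 2 + (β - α / 2) by ring,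
    rpow_add hb]
  ring

end TailProfileCovariance

/-! ### Two-sided tails -/

section Tails

open ProbabilityTheory

/-- `K` satisfies the growth condition (K1), with constant `c` and exponent `β`, and the
monotonicity condition (K2), both with threshold `b`. -/
structure IsTailFunction (b c β : ℝ) (K : ℝ → ℝ) : Prop where
  abs_le : ∀ x, b < |x| → |K x| ≤ c * |x| ^ β
  antitoneOn : AntitoneOn (fun x => K x / x) (Ioi b)
  monotoneOn : MonotoneOn (fun x => K x / x) (Iio (-b))

namespace IsTailFunction

variable {b c β : ℝ} {K : ℝ → ℝ}

lemma isTailProfile (hK : IsTailFunction b c β K) (hb : 0 ≤ b) (hβ : β < 1) :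
    IsTailProfile b c β ((Ioi b).indicator fun x => K x / x) :=
  isTailProfile_indicator_div hb hβ
    (fun x hx => by
      simpa only [abs_of_pos (hb.trans_lt hx)] using hK.abs_le x (hx.trans_le (le_abs_self x)))
    hK.antitoneOn

lemma reflect (hK : IsTailFunction b c β K) : IsTailFunction b c β fun x => -K (-x) where
  abs_le x hx := by simpa only [abs_neg] using hK.abs_le (-x) (by rwa [abs_neg])
  antitoneOn x hx y hy hxy := by
    simpa only [neg_div, div_neg] using hK.monotoneOn (mem_Iio.2 (neg_lt_neg hy))
      (mem_Iio.2 (neg_lt_neg hx)) (neg_le_neg hxy)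
  monotoneOn x hx y hy hxy := by
    simpa only [neg_div, div_neg] using hK.antitoneOn (mem_Ioi.2 (lt_neg_of_lt_neg hy))
      (mem_Ioi.2 (lt_neg_of_lt_neg hx)) (neg_le_neg hxy)

lemma exists_tailProfile_decomposition (hK : IsTailFunction b c β K) (hb : 0 ≤ b) (hβ : β < 1) :
    ∃ h k, IsTailProfile b c β h ∧ IsTailProfile b c β k ∧
      ∀ x, (if b < |x| then K x else 0) = x * h x - -x * k (-x) := by
  refine ⟨_, _, hK.isTailProfile hb hβ, hK.reflect.isTailProfile hb hβ, fun x => ?_⟩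
  simp only [indicator_apply, mem_Ioi, neg_neg]
  rcases lt_or_ge b x with hx | hx
  · rw [if_pos (hx.trans_le (le_abs_self x)), if_pos hx, if_neg (by linarith),
      mul_div_cancel₀ _ (hb.trans_lt hx).ne', mul_zero, sub_zero]
  rcases lt_or_ge b (-x) with hx' | hx'
  · rw [if_pos (hx'.trans_le (neg_le_abs x)), if_neg hx.not_gt, if_pos hx',
      mul_div_cancel₀ _ (hb.trans_lt hx').ne', mul_zero, zero_sub, neg_neg]
  · rw [if_neg (abs_le'.2 ⟨hx, hx'⟩).not_gt, if_neg hx.not_gt, if_neg hx'.not_gt, mul_zero,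
      mul_zero, sub_zero]

end IsTailFunction

variable {S Ω : Type*} [MeasurableSpace S] [MeasurableSpace Ω] {α ε M b c β : ℝ} {μ : Measure S}
  {f g : S → ℝ} {P : Measure Ω} {ξ η : Ω → ℝ} {K L : ℝ → ℝ}

lemma dep1_neg_left (α : ℝ) (μ : Measure S) (f g : S → ℝ) :
    dep1 α μ (-f) g = dep1 α μ f g := by
  simp only [dep1, dep1s, Pi.neg_apply, abs_neg]

lemma dep1_neg_right (α : ℝ) (μ : Measure S) (f g : S → ℝ) :
    dep1 α μ f (-g) = dep1 α μ f g := by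
  simp only [dep1, dep1s, Pi.neg_apply, abs_neg]

lemma dep2_neg_left (α : ℝ) (μ : Measure S) (f g : S → ℝ) :
    dep2 α μ (-f) g = dep2 α μ f g := by
  simp only [dep2, Pi.neg_apply, neg_mul, abs_neg]

lemma dep2_neg_right (α : ℝ) (μ : Measure S) (f g : S → ℝ) :
    dep2 α μ f (-g) = dep2 α μ f g := by
  simp only [dep2, Pi.neg_apply, mul_neg, abs_neg]

lemma JointSAS.memLp_tailProfile [IsProbabilityMeasure P] {h : ℝ → ℝ}
    (hJ : JointSAS α μ f g P ξ η) (hα : 0 < α) (hβ : β < α / 2) (hξ : Measurable ξ) (hb : 0 < b)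
    (hh : IsTailProfile b c β h) : MemLp (fun ω => ξ ω * h (ξ ω)) 2 P := by
  obtain ⟨q, hq, hqα⟩ := exists_between (max_lt hα (by linarith : 2 * β < α))
  exact hh.memLp_mul_comp hb ((le_max_right _ _).trans hq.le) hξ
    (hJ.integrable_abs_rpow ((le_max_left _ _).trans_lt hq) hqα hξ)

lemma JointSAS.memLp_tail [IsProbabilityMeasure P] (hJ : JointSAS α μ f g P ξ η) (hα : 0 < α)
    (hβ : β < α / 2) (hβ1 : β < 1) (hξ : Measurable ξ) (hb : 0 < b) (hK : IsTailFunction b c β K) :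
    MemLp (fun ω => if b < |ξ ω| then K (ξ ω) else 0) 2 P := by
  obtain ⟨h, k, hh, hk, hsplit⟩ := hK.exists_tailProfile_decomposition hb.le hβ1
  simp only [hsplit]
  exact (hJ.memLp_tailProfile hα hβ hξ hb hh).sub (hJ.neg_left.memLp_tailProfile hα hβ hξ.neg hb hk)

lemma IsSpectralPair.neg_left (h : IsSpectralPair α ε M μ f g) :
    IsSpectralPair α ε M μ (-f) g where
  one_lt := h.one_lt
  lt_two := h.lt_two
  pos := h.pos
  memLalpha_left := ⟨h.memLalpha_left.1.neg, by simpa using h.memLalpha_left.2⟩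
  memLalpha_right := h.memLalpha_right
  integral_left_le := by simpa using h.integral_left_le
  integral_right_le := h.integral_right_le
  le_charExponent u v := by
    simpa [charExponent] using h.le_charExponent (-u) v

lemma IsSpectralPair.abs_covariance_tail_le [SFinite μ] [IsProbabilityMeasure P]
    (hfg : IsSpectralPair α ε M μ f g) (hJ : JointSAS α μ f g P ξ η) (hξ : Measurable ξ)
    (hη : Measurable η) (hb : 0 < b) (hβ : β < α / 2) (hK : IsTailFunction b c β K)
    (hL : IsTailFunction b c β L) :
    |cov[fun ω => if b < |ξ ω| then K (ξ ω) else 0,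
        fun ω => if b < |η ω| then L (η ω) else 0; P]| ≤
      16 * testCovConst α ε M * (c * (1 - β) / (α / 2 - β)) ^ 2 * b ^ (2 * β - α) *
        (dep1 α μ f g + dep2 α μ f g) := by
  have hα : 0 < α := by linarith [hfg.one_lt]
  have hβ1 : β < 1 := by linarith [hfg.lt_two]
  obtain ⟨h, h', hh, hh', hKsplit⟩ := hK.exists_tailProfile_decomposition hb.le hβ1
  obtain ⟨k, k', hk, hk', hLsplit⟩ := hL.exists_tailProfile_decomposition hb.le hβ1
  have hJξ := hJ.neg_left
  have hJη := hJ.swap.neg_left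
  have hX := hJ.memLp_tailProfile hα hβ hξ hb hh
  have hX' := hJξ.memLp_tailProfile hα hβ hξ.neg hb hh'
  have hY := hJ.swap.memLp_tailProfile hα hβ hη hb hk
  have hY' := hJη.memLp_tailProfile hα hβ hη.neg hb hk'
  have hfg' := hfg.swap.neg_left.swap
  have h₁ := hfg.abs_covariance_mul_tailProfile_le hJ hξ hη hb hβ hh hk hX hY
  have h₂ := hfg'.abs_covariance_mul_tailProfile_le hJη.swap hξ hη.neg hb hβ hh hk' hX hY'
  have h₃ := hfg.neg_left.abs_covariance_mul_tailProfile_le hJξ hξ.neg hη hb hβ hh' hk hX' hY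
  have h₄ := hfg'.neg_left.abs_covariance_mul_tailProfile_le hJη.swap.neg_left hξ.neg hη.neg hb hβ
    hh' hk' hX' hY'
  simp only [dep1_neg_left, dep1_neg_right, dep2_neg_left, dep2_neg_right] at h₂ h₃ h₄
  simp only [hKsplit, hLsplit]
  exact (abs_covariance_sub_sub_le hX hX' hY hY' h₁ h₂ h₃ h₄).trans_eq (by ring)

end Tails

theorem stmt3_general (α β ε₂ nf ng cK : ℝ) (hα1 : 1 < α) (hα2 : α < 2) (hβ : β < α / 2)
    (hε₂ : 0 < ε₂) (hnf : 0 < nf) (hng : 0 < ng) :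
    ∃ C > (0 : ℝ), ∀ (S : Type*) [MeasurableSpace S] (μ : Measure S) [SFinite μ]
      (f g : S → ℝ), MemLalpha α μ f → MemLalpha α μ g →
      nrm α μ f = nf → nrm α μ g = ng → A2 α ε₂ μ f g →
      ∀ (Ω : Type*) [MeasurableSpace Ω] (P : Measure Ω) [IsProbabilityMeasure P]
        (ξ η : Ω → ℝ), Measurable ξ → Measurable η → JointSAS α μ f g P ξ η →
        ∀ b : ℝ, 0 < b →
        ∀ K L : ℝ → ℝ, IsTailFunction b cK β K → IsTailFunction b cK β L →
          Integrable (fun ω => (if b < |ξ ω| then K (ξ ω) else 0) ^ 2) P ∧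
          Integrable (fun ω => (if b < |η ω| then L (η ω) else 0) ^ 2) P ∧
          |(∫ ω, (if b < |ξ ω| then K (ξ ω) else 0) *
                (if b < |η ω| then L (η ω) else 0) ∂P) -
              (∫ ω, (if b < |ξ ω| then K (ξ ω) else 0) ∂P) *
                (∫ ω, (if b < |η ω| then L (η ω) else 0) ∂P)|
            ≤ C * b ^ (2 * β - α) * (dep1 α μ f g + dep2 α μ f g) := by
  have hα : 0 < α := one_pos.trans hα1
  set C := 16 * testCovConst α (ε₂ * min (nf ^ α) (ng ^ α)) (max (nf ^ α) (ng ^ α)) *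
    (cK * (1 - β) / (α / 2 - β)) ^ 2
  have hC : 0 ≤ C := mul_nonneg (mul_nonneg (by norm_num)
    (testCovConst_nonneg hα1 (le_max_of_le_left (rpow_nonneg hnf.le _)))) (sq_nonneg _)
  refine ⟨C + 1, by linarith, fun S _ μ _ f g hf hg hfn hgn hA2 Ω _ P _ ξ η hξ hη hJ b hb K L
    hK hL => ?_⟩
  subst hfn hgn
  have hKξ := hJ.memLp_tail hα hβ (by linarith) hξ hb hK
  have hLη := hJ.swap.memLp_tail hα hβ (by linarith) hη hb hL
  have hcov := (hA2.isSpectralPair hα1 hα2 hε₂ hf hg hnf hng).abs_covariance_tail_le hJ hξ hη hb hβ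
    hK hL
  rw [ProbabilityTheory.covariance_eq_sub hKξ hLη] at hcov
  refine ⟨hKξ.integrable_sq, hLη.integrable_sq, hcov.trans ?_⟩
  exact mul_le_mul_of_nonneg_right (mul_le_mul_of_nonneg_right (by linarith) (by positivity))
    (add_nonneg (dep1_nonneg α μ f g) (dep2_nonneg α μ f g))

/-- Paper's Theorem 2.2. -/
theorem stmt3 (α β ε₁ ε₂ nf ng cK : ℝ) (hα1 : 1 < α) (hα2 : α < 2)
    (hβ0 : 0 < β) (hβ : β < α / 2) (hε₁ : 0 < ε₁) (hε₂ : 0 < ε₂)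
    (hnf : 0 < nf) (hng : 0 < ng) :
    ∃ C > (0:ℝ), ∀ (S : Type) [MeasurableSpace S] (μ : Measure S) [SigmaFinite μ]
      (f g : S → ℝ), MemLalpha α μ f → MemLalpha α μ g →
      nrm α μ f = nf → nrm α μ g = ng → A1 α ε₁ μ f g → A2 α ε₂ μ f g →
      ∀ (Ω : Type) [MeasurableSpace Ω] (P : Measure Ω) [IsProbabilityMeasure P]
        (ξ η : Ω → ℝ), Measurable ξ → Measurable η → JointSAS α μ f g P ξ η →
        ∀ b : ℝ, 1 ≤ b →
        ∀ K L : ℝ → ℝ,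
          (∀ x : ℝ, b < |x| → |K x| ≤ cK * |x| ^ β) →
          (∀ x : ℝ, b < |x| → |L x| ≤ cK * |x| ^ β) →
          AntitoneOn (fun x => K x / x) (Set.Ioi b) →
          MonotoneOn (fun x => K x / x) (Set.Iio (-b)) →
          AntitoneOn (fun x => L x / x) (Set.Ioi b) →
          MonotoneOn (fun x => L x / x) (Set.Iio (-b)) →
          Integrable (fun ω => (if b < |ξ ω| then K (ξ ω) else 0) ^ 2) P ∧
          Integrable (fun ω => (if b < |η ω| then L (η ω) else 0) ^ 2) P ∧
          |(∫ ω, (if b < |ξ ω| then K (ξ ω) else 0) *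
                (if b < |η ω| then L (η ω) else 0) ∂P) -
              (∫ ω, (if b < |ξ ω| then K (ξ ω) else 0) ∂P) *
                (∫ ω, (if b < |η ω| then L (η ω) else 0) ∂P)|
            ≤ C * b ^ (2 * β - α) * (dep1 α μ f g + dep2 α μ f g) := by
  obtain ⟨C, hC, hbound⟩ := stmt3_general α β ε₂ nf ng cK hα1 hα2 hβ hε₂ hnf hng
  exact ⟨C, hC, fun S _ μ _ f g hf hg hfn hgn _ hA2 Ω _ P _ ξ η hξ hη hJ b hb K L hK hL hK₁ hK₂
    hL₁ hL₂ => hbound S μ f g hf hg hfn hgn hA2 Ω P ξ η hξ hη hJ b (by linarith) K L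
      ⟨hK, hK₁, hK₂⟩ ⟨hL, hL₁, hL₂⟩⟩
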